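/- Under assumptions (A1) and (A2), suppose for each (x,μ) that π(·;x,μ) is an invariant probability measure of L_{x,μ} having finite moments of every order, uniformly bounded in (x,μ). Let h : ℝ^d×ℝ^d×P₂(ℝ^d) → ℝ be continuously differentiable in x, with h and ∇_x h, as well as ∇_x f and ∇_x a, jointly continuous, growing at most polynomially in y uniformly in (x,μ), and satisfying |g(x,y,μ) − g(x',y',μ)| ≤ K(1 ∧ |y−y'|^θ + |x−x'|)(1+|y|^m+|y'|^m) for g ∈ {h, ∇_x h, ∇_x f, ∇_x a}. Suppose for each (x,μ) there is v(x,·,μ) ∈ C²(ℝ^d) with v, ∇_y v, ∇²_y v growing at most polynomially in y uniformly in (x,μ), such that L_{x,μ}v(x,y,μ) = h(x,y,μ) − h̄(x,μ) for all y, where h̄(x,μ) = ∫ h(x,y,μ) π(dy;x,μ). Then for every μ the map x ↦ h̄(x,μ) is differentiable and, for j = 1,…,d, ∂_{x_j} h̄(x,μ) = ∫ [ ∂_{x_j}h(x,y,μ) − ∂_{x_j}f(x,y,μ)·∇_y v(x,y,μ) − ∂_{x_j}a(x,y,μ):∇²_y v(x,y,μ) ] π(dy;x,μ). -/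

import Mathlib

open MeasureTheory

noncomputable section

/-- First partial derivative of `φ : ℝ^d → ℝ` in the `i`-th coordinate direction. -/
def pd1 {d : ℕ} (φ : (Fin d → ℝ) → ℝ) (y : Fin d → ℝ) (i : Fin d) : ℝ :=
  fderiv ℝ φ y (Pi.single i 1)

/-- Second partial derivative of `φ : ℝ^d → ℝ` in the coordinate directions `i, j`. -/
def pd2 {d : ℕ} (φ : (Fin d → ℝ) → ℝ) (y : Fin d → ℝ) (i j : Fin d) : ℝ :=
  fderiv ℝ (fun z => fderiv ℝ φ z (Pi.single j 1)) y (Pi.single i 1)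

/-- The frozen generator `L φ (y) = f(y)·∇φ(y) + a(y):∇²φ(y)`. -/
def genL {d : ℕ} (f : (Fin d → ℝ) → Fin d → ℝ) (a : (Fin d → ℝ) → Fin d → Fin d → ℝ)
    (φ : (Fin d → ℝ) → ℝ) (y : Fin d → ℝ) : ℝ :=
  (∑ i, f y i * pd1 φ y i) + ∑ i, ∑ j, a y i j * pd2 φ y i j

/-- `C_b²` functions: twice continuously differentiable, bounded together with the
first and second derivatives. -/
def CbTwo {d : ℕ} (φ : (Fin d → ℝ) → ℝ) : Prop :=
  ContDiff ℝ 2 φ ∧ ∃ K : ℝ, ∀ y, |φ y| ≤ K ∧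
    ‖iteratedFDeriv ℝ 1 φ y‖ ≤ K ∧ ‖iteratedFDeriv ℝ 2 φ y‖ ≤ K

/-- An invariant probability measure of the frozen generator:
`∫ L φ dπ = 0` for every `φ ∈ C_b²`. -/
def IsInvariantMeasure {d : ℕ} (f : (Fin d → ℝ) → Fin d → ℝ)
    (a : (Fin d → ℝ) → Fin d → Fin d → ℝ) (π : Measure (Fin d → ℝ)) : Prop :=
  IsProbabilityMeasure π ∧
    ∀ φ : (Fin d → ℝ) → ℝ, CbTwo φ → ∫ y, genL f a φ y ∂π = 0

/-- `P₂(ℝ^d)`: Borel probability measures on `ℝ^d` with finite second moment.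
Its elements enter only as parameters. -/
def ProbMeas2 (d : ℕ) : Type :=
  {μ : Measure (Fin d → ℝ) // IsProbabilityMeasure μ ∧ Integrable (fun y => ‖y‖ ^ 2) μ}

/-- Assumption (A1): uniform ellipticity and boundedness of the symmetric diffusion
matrix `a`, two bounded `y`-derivatives, and uniform Hölder continuity in `y` of `a`
and these derivatives.  The parameter `p` ranges over the frozen data `(x, μ)`. -/
def AssumptionA1 {d : ℕ} {I : Type*} (a : I → (Fin d → ℝ) → Fin d → Fin d → ℝ) : Prop :=
  (∀ p y i j, a p y i j = a p y j i) ∧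
  (∃ lm lp : ℝ, 0 < lm ∧ lm ≤ lp ∧ ∀ p y (ξ : Fin d → ℝ),
      lm * ∑ i, ξ i ^ 2 ≤ 2 * ∑ i, ∑ j, ξ i * a p y i j * ξ j ∧
      2 * ∑ i, ∑ j, ξ i * a p y i j * ξ j ≤ lp * ∑ i, ξ i ^ 2) ∧
  (∃ K : ℝ, ∀ p y i j, |a p y i j| ≤ K) ∧
  (∀ p i j, ContDiff ℝ 2 (fun y => a p y i j)) ∧
  (∃ K : ℝ, ∀ p y i j,
      ‖iteratedFDeriv ℝ 1 (fun z => a p z i j) y‖ ≤ K ∧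
      ‖iteratedFDeriv ℝ 2 (fun z => a p z i j) y‖ ≤ K) ∧
  (∃ K θ : ℝ, 0 < θ ∧ θ ≤ 1 ∧ ∀ p y y' i j,
      |a p y i j - a p y' i j| ≤ K * ‖y - y'‖ ^ θ ∧
      ‖iteratedFDeriv ℝ 1 (fun z => a p z i j) y -
        iteratedFDeriv ℝ 1 (fun z => a p z i j) y'‖ ≤ K * ‖y - y'‖ ^ θ ∧
      ‖iteratedFDeriv ℝ 2 (fun z => a p z i j) y -
        iteratedFDeriv ℝ 2 (fun z => a p z i j) y'‖ ≤ K * ‖y - y'‖ ^ θ)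

/-- Assumption (A2): dissipativity and linear growth of the drift `f`, two bounded
`y`-derivatives, and uniform Hölder continuity in `y` of `f` and these derivatives.
The parameter `p` ranges over the frozen data `(x, μ)`. -/
def AssumptionA2 {d : ℕ} {I : Type*} (f : I → (Fin d → ℝ) → Fin d → ℝ) : Prop :=
  (∃ β C : ℝ, 0 < β ∧ 0 < C ∧ ∀ p y,
      (∑ i, f p y i * y i) ≤ -β * (∑ i, y i ^ 2) + C) ∧
  (∃ C : ℝ, ∀ p y, ‖f p y‖ ≤ C * (1 + ‖y‖)) ∧
  (∀ p i, ContDiff ℝ 2 (fun y => f p y i)) ∧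
  (∃ K : ℝ, ∀ p y i,
      ‖iteratedFDeriv ℝ 1 (fun z => f p z i) y‖ ≤ K ∧
      ‖iteratedFDeriv ℝ 2 (fun z => f p z i) y‖ ≤ K) ∧
  (∃ K θ : ℝ, 0 < θ ∧ θ ≤ 1 ∧ ∀ p y y' i,
      |f p y i - f p y' i| ≤ K * ‖y - y'‖ ^ θ ∧
      ‖iteratedFDeriv ℝ 1 (fun z => f p z i) y -
        iteratedFDeriv ℝ 1 (fun z => f p z i) y'‖ ≤ K * ‖y - y'‖ ^ θ ∧
      ‖iteratedFDeriv ℝ 2 (fun z => f p z i) y -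
        iteratedFDeriv ℝ 2 (fun z => f p z i) y'‖ ≤ K * ‖y - y'‖ ^ θ)

/-- Polynomial growth in `y`, uniformly in the parameters `(x, μ)`. -/
def PolyY {d : ℕ} {M : Type*} (g : (Fin d → ℝ) → (Fin d → ℝ) → M → ℝ) : Prop :=
  ∃ K : ℝ, ∃ m : ℕ, ∀ x y μ, |g x y μ| ≤ K * (1 + ‖y‖ ^ m)

/-- The mixed local Hölder / Lipschitz condition
`|g(x,y,μ) − g(x',y',μ)| ≤ K (1 ∧ |y−y'|^θ + |x−x'|)(1+|y|^m+|y'|^m)`. -/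
def MixedHolder {d : ℕ} {M : Type*} (g : (Fin d → ℝ) → (Fin d → ℝ) → M → ℝ) : Prop :=
  ∃ K θ : ℝ, ∃ m : ℕ, 0 < θ ∧ θ ≤ 1 ∧ ∀ x x' y y' μ,
    |g x y μ - g x' y' μ| ≤
      K * (min 1 (‖y - y'‖ ^ θ) + ‖x - x'‖) * (1 + ‖y‖ ^ m + ‖y'‖ ^ m)

/-! Subtracting `L_x v(x₀, ·)`, which is centred under `π x`, from `h x` leaves its average
unchanged and makes it constant in `y` at `x = x₀`. Differentiating at `x₀` then only requires the
continuity of `x ↦ ∫ ψ ∂π x` for continuous `ψ` of polynomial growth. This follows once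
`L_{x₀} u = c - ψ` is solved up to a small weighted error by a bounded `C²` function `u`, since
`∫ L_{x₀} u ∂π x` is `O(|x - x₀|)`.

No regularity theory is needed for such `u`: mollifying a discretised resolvent (a weak Euler
scheme) solves the discounted equation approximately, and a maximum principle along a reflection
coupling bounds the oscillation of the solution as the discount vanishes. -/

section C11

variable {E F : Type*} [NormedAddCommGroup E] [NormedSpace ℝ E] [NormedAddCommGroup F]
  [NormedSpace ℝ F]

/-- Quantitative `C^{1,1}` regularity: `g` is differentiable, and its derivative is bounded and
Lipschitz with the same constant `M`. Unlike `C²` bounds, this class is preserved by the Euler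
scheme of a diffusion whose coefficients are merely in it. -/
structure C11Bound (M : ℝ) (g : E → F) : Prop where
  differentiable : Differentiable ℝ g
  norm_fderiv_le : ∀ x, ‖fderiv ℝ g x‖ ≤ M
  norm_fderiv_sub_le : ∀ x y, ‖fderiv ℝ g x - fderiv ℝ g y‖ ≤ M * ‖x - y‖

namespace C11Bound

variable {M N : ℝ} {g g' : E → F}

theorem nonneg (hg : C11Bound M g) : 0 ≤ M :=
  (norm_nonneg _).trans (hg.norm_fderiv_le 0)

theorem norm_sub_le (hg : C11Bound M g) (x y : E) : ‖g x - g y‖ ≤ M * ‖x - y‖ :=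
  convex_univ.norm_image_sub_le_of_norm_fderiv_le (fun z _ => hg.differentiable z)
    (fun z _ => hg.norm_fderiv_le z) (Set.mem_univ y) (Set.mem_univ x)

theorem contDiff (hg : C11Bound M g) : ContDiff ℝ 1 g :=
  contDiff_one_iff_fderiv.2 ⟨hg.differentiable,
    (LipschitzWith.of_dist_le_mul (K := ⟨M, hg.nonneg⟩) fun x y => by
      rw [dist_eq_norm, dist_eq_norm]
      exact hg.norm_fderiv_sub_le x y).continuous⟩

theorem norm_fderiv_fderiv_le (hg : C11Bound M g) (x : E) : ‖fderiv ℝ (fderiv ℝ g) x‖ ≤ M :=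
  norm_fderiv_le_of_lip' ℝ hg.nonneg (Filter.Eventually.of_forall fun y =>
    hg.norm_fderiv_sub_le y x)

theorem mono (hg : C11Bound M g) (hMN : M ≤ N) : C11Bound N g where
  differentiable := hg.differentiable
  norm_fderiv_le x := (hg.norm_fderiv_le x).trans hMN
  norm_fderiv_sub_le x y := (hg.norm_fderiv_sub_le x y).trans (by gcongr)

protected theorem const (c : F) : C11Bound 0 (fun _ : E => c) where
  differentiable := differentiable_const c
  norm_fderiv_le x := by simp
  norm_fderiv_sub_le x y := by simp

theorem add (hg : C11Bound M g) (hg' : C11Bound N g') : C11Bound (M + N) (g + g') where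
  differentiable := hg.differentiable.add hg'.differentiable
  norm_fderiv_le x := by
    rw [fderiv_add (hg.differentiable x) (hg'.differentiable x)]
    exact norm_add_le_of_le (hg.norm_fderiv_le x) (hg'.norm_fderiv_le x)
  norm_fderiv_sub_le x y := by
    rw [fderiv_add (hg.differentiable x) (hg'.differentiable x),
      fderiv_add (hg.differentiable y) (hg'.differentiable y), add_sub_add_comm, add_mul]
    exact norm_add_le_of_le (hg.norm_fderiv_sub_le x y) (hg'.norm_fderiv_sub_le x y)

theorem const_smul (hg : C11Bound M g) (c : ℝ) : C11Bound (|c| * M) (c • g) where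
  differentiable := hg.differentiable.const_smul c
  norm_fderiv_le x := by
    rw [fderiv_const_smul (hg.differentiable x), norm_smul, Real.norm_eq_abs]
    gcongr
    exact hg.norm_fderiv_le x
  norm_fderiv_sub_le x y := by
    rw [fderiv_const_smul (hg.differentiable x), fderiv_const_smul (hg.differentiable y),
      ← smul_sub, norm_smul, Real.norm_eq_abs, mul_assoc]
    gcongr
    exact hg.norm_fderiv_sub_le x y

theorem sum {ι : Type*} (s : Finset ι) {M : ι → ℝ} {g : ι → E → F}
    (hg : ∀ i ∈ s, C11Bound (M i) (g i)) : C11Bound (∑ i ∈ s, M i) (∑ i ∈ s, g i) := by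
  classical
  induction s using Finset.induction_on with
  | empty => exact C11Bound.const 0
  | insert i s hi ih =>
    rw [Finset.sum_insert hi, Finset.sum_insert hi]
    exact (hg i (s.mem_insert_self i)).add (ih fun j hj => hg j (Finset.mem_insert_of_mem hj))

end C11Bound

end C11

section EulerStep

variable {E : Type*} [NormedAddCommGroup E] [InnerProductSpace ℝ E]

theorem mean_mul_le_of_mean_sq_le {a b c d P R : ℝ} (hP : 0 ≤ P) (hR : 0 ≤ R)
    (hab : a ^ 2 + b ^ 2 ≤ 2 * P ^ 2) (hcd : c ^ 2 + d ^ 2 ≤ 2 * R ^ 2) :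
    (a * c + b * d) / 2 ≤ P * R := by
  have cauchy_schwarz : (a * c + b * d) ^ 2 ≤ (a ^ 2 + b ^ 2) * (c ^ 2 + d ^ 2) := by
    nlinarith [sq_nonneg (a * d - b * c)]
  have : (a * c + b * d) ^ 2 ≤ (2 * (P * R)) ^ 2 := by
    calc _ ≤ (a ^ 2 + b ^ 2) * (c ^ 2 + d ^ 2) := cauchy_schwarz
      _ ≤ (2 * P ^ 2) * (2 * R ^ 2) := by gcongr
      _ = _ := by ring
  linarith [abs_le_of_sq_le_sq' this (by positivity)]

theorem norm_add_sq_add_norm_sub_sq_le {m s : E} {R : ℝ} (h : ‖m‖ ^ 2 + ‖s‖ ^ 2 ≤ R ^ 2) :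
    ‖m + s‖ ^ 2 + ‖m - s‖ ^ 2 ≤ 2 * R ^ 2 := by
  linarith [parallelogram_law_with_norm ℝ m s, sq ‖m + s‖, sq ‖m - s‖, sq ‖m‖, sq ‖s‖]

theorem norm_add_smul_sq_add_le {v β σ : E} {L τ : ℝ} (hL : 0 ≤ L) (hβ : ‖β‖ ≤ L * ‖v‖)
    (hσ : ‖σ‖ ≤ L * ‖v‖) :
    ‖v + τ ^ 2 • β‖ ^ 2 + ‖τ • σ‖ ^ 2 ≤ ((1 + (L + L ^ 2) * τ ^ 2) * ‖v‖) ^ 2 := by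
  have h1 : ‖v + τ ^ 2 • β‖ ≤ (1 + τ ^ 2 * L) * ‖v‖ := by
    calc ‖v + τ ^ 2 • β‖ ≤ ‖v‖ + τ ^ 2 * ‖β‖ := by
          rw [← norm_smul_of_nonneg (sq_nonneg τ)]
          exact norm_add_le v _
      _ ≤ ‖v‖ + τ ^ 2 * (L * ‖v‖) := by gcongr
      _ = _ := by ring
  have h2 : ‖τ • σ‖ ^ 2 ≤ τ ^ 2 * (L * ‖v‖) ^ 2 := by
    rw [norm_smul, mul_pow, Real.norm_eq_abs, sq_abs]
    gcongr
  calc _ ≤ ((1 + τ ^ 2 * L) * ‖v‖) ^ 2 + τ ^ 2 * (L * ‖v‖) ^ 2 := by gcongr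
    _ = ((1 + τ ^ 2 * L) ^ 2 + τ ^ 2 * L ^ 2) * ‖v‖ ^ 2 := by ring
    _ ≤ (1 + (L + L ^ 2) * τ ^ 2) ^ 2 * ‖v‖ ^ 2 := by
      gcongr
      nlinarith [show 0 ≤ L ^ 3 * τ ^ 4 by positivity, show 0 ≤ L ^ 4 * τ ^ 4 by positivity,
        show 0 ≤ L ^ 2 * τ ^ 2 by positivity]
    _ = _ := by ring

/-- One weak Euler step of size `τ²` for the operator `u ↦ Du b + ½ D²u(q, q)`: the mean of `u`
over the two points `x + τ² b x ± τ q x`. -/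
def symmStep (τ : ℝ) (b q : E → E) (u : E → ℝ) (x : E) : ℝ :=
  (u (x + τ ^ 2 • b x + τ • q x) + u (x + τ ^ 2 • b x - τ • q x)) / 2

variable {τ L M B : ℝ} {b q : E → E} {u : E → ℝ}

theorem hasFDerivAt_symmStep (hb : Differentiable ℝ b) (hq : Differentiable ℝ q)
    (hu : Differentiable ℝ u) (x : E) :
    HasFDerivAt (symmStep τ b q u)
      ((1 / 2 : ℝ) •
        ((fderiv ℝ u (x + τ ^ 2 • b x + τ • q x)).comp
            (.id ℝ E + τ ^ 2 • fderiv ℝ b x + τ • fderiv ℝ q x) +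
          (fderiv ℝ u (x + τ ^ 2 • b x - τ • q x)).comp
            (.id ℝ E + τ ^ 2 • fderiv ℝ b x - τ • fderiv ℝ q x))) x := by
  have hm := (hasFDerivAt_id x).add ((hb x).hasFDerivAt.const_smul (τ ^ 2))
  have hs := (hq x).hasFDerivAt.const_smul τ
  have h := (((hu _).hasFDerivAt.comp x (hm.add hs)).add
    ((hu _).hasFDerivAt.comp x (hm.sub hs))).const_smul (1 / 2 : ℝ)
  refine h.congr_of_eventuallyEq (.of_forall fun y => ?_)
  simp only [symmStep, Pi.add_apply, Pi.smul_apply, Function.comp_apply, smul_eq_mul, id,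
    Pi.sub_apply]
  ring

theorem fderiv_symmStep_apply (hb : Differentiable ℝ b) (hq : Differentiable ℝ q)
    (hu : Differentiable ℝ u) (x v : E) :
    fderiv ℝ (symmStep τ b q u) x v =
      (fderiv ℝ u (x + τ ^ 2 • b x + τ • q x)
          (v + τ ^ 2 • fderiv ℝ b x v + τ • fderiv ℝ q x v) +
        fderiv ℝ u (x + τ ^ 2 • b x - τ • q x)
          (v + τ ^ 2 • fderiv ℝ b x v - τ • fderiv ℝ q x v)) / 2 := by
  rw [(hasFDerivAt_symmStep hb hq hu x).fderiv]
  simp only [smul_apply, add_apply, ContinuousLinearMap.comp_apply, sub_apply,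
    ContinuousLinearMap.id_apply, smul_eq_mul, div_eq_inv_mul, mul_one]

theorem norm_fderiv_symmStep_le (hb : C11Bound L b) (hq : C11Bound L q) (hu : C11Bound M u)
    (x : E) : ‖fderiv ℝ (symmStep τ b q u) x‖ ≤ (1 + (L + L ^ 2) * τ ^ 2) * M := by
  have hL := hb.nonneg
  have hM := hu.nonneg
  refine ContinuousLinearMap.opNorm_le_bound _ (by positivity) fun v => ?_
  rw [fderiv_symmStep_apply hb.differentiable hq.differentiable hu.differentiable]
  set m := v + τ ^ 2 • fderiv ℝ b x v
  set s := τ • fderiv ℝ q x v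
  have hsq := norm_add_sq_add_norm_sub_sq_le (norm_add_smul_sq_add_le (τ := τ) hL
    ((fderiv ℝ b x).le_of_opNorm_le (hb.norm_fderiv_le x) v)
    ((fderiv ℝ q x).le_of_opNorm_le (hq.norm_fderiv_le x) v))
  have hmean : (‖m + s‖ * 1 + ‖m - s‖ * 1) / 2 ≤ (1 + (L + L ^ 2) * τ ^ 2) * ‖v‖ * 1 :=
    mean_mul_le_of_mean_sq_le (by positivity) zero_le_one hsq (by norm_num)
  have hplus := (fderiv ℝ u (x + τ ^ 2 • b x + τ • q x)).le_of_opNorm_le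
    (hu.norm_fderiv_le _) (m + s)
  have hminus := (fderiv ℝ u (x + τ ^ 2 • b x - τ • q x)).le_of_opNorm_le
    (hu.norm_fderiv_le _) (m - s)
  rw [Real.norm_eq_abs] at *
  rw [abs_div, abs_two]
  calc _ ≤ (M * ‖m + s‖ + M * ‖m - s‖) / 2 := by
        gcongr
        exact (abs_add_le _ _).trans (add_le_add hplus hminus)
    _ = M * ((‖m + s‖ * 1 + ‖m - s‖ * 1) / 2) := by ring
    _ ≤ M * ((1 + (L + L ^ 2) * τ ^ 2) * ‖v‖ * 1) := by gcongr
    _ = _ := by ring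

theorem C11Bound.abs_mean_fderiv_sub_le (hu : C11Bound M u) {m s m' s' v w : E} {P R : ℝ}
    (hP : 0 ≤ P) (hR : 0 ≤ R) (hms : ‖m - m'‖ ^ 2 + ‖s - s'‖ ^ 2 ≤ P ^ 2)
    (hvw : ‖v‖ ^ 2 + ‖w‖ ^ 2 ≤ R ^ 2) :
    |((fderiv ℝ u (m + s) - fderiv ℝ u (m' + s')) (v + w) +
        (fderiv ℝ u (m - s) - fderiv ℝ u (m' - s')) (v - w)) / 2| ≤ M * (P * R) := by
  have hM := hu.nonneg
  have hplus : |(fderiv ℝ u (m + s) - fderiv ℝ u (m' + s')) (v + w)| ≤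
      M * ‖m - m' + (s - s')‖ * ‖v + w‖ :=
    ContinuousLinearMap.le_of_opNorm_le _
      ((hu.norm_fderiv_sub_le _ _).trans_eq (by rw [add_sub_add_comm])) _
  have hminus : |(fderiv ℝ u (m - s) - fderiv ℝ u (m' - s')) (v - w)| ≤
      M * ‖m - m' - (s - s')‖ * ‖v - w‖ :=
    ContinuousLinearMap.le_of_opNorm_le _
      ((hu.norm_fderiv_sub_le _ _).trans_eq (by rw [sub_sub_sub_comm])) _
  rw [abs_div, abs_two]
  calc _ ≤ (M * ‖m - m' + (s - s')‖ * ‖v + w‖ + M * ‖m - m' - (s - s')‖ * ‖v - w‖) / 2 := by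
        gcongr
        exact (abs_add_le _ _).trans (add_le_add hplus hminus)
    _ = M * ((‖m - m' + (s - s')‖ * ‖v + w‖ + ‖m - m' - (s - s')‖ * ‖v - w‖) / 2) := by ring
    _ ≤ M * (P * R) := by
      gcongr
      exact mean_mul_le_of_mean_sq_le hP hR (norm_add_sq_add_norm_sub_sq_le hms)
        (norm_add_sq_add_norm_sub_sq_le hvw)

theorem C11Bound.abs_fderiv_add_fderiv_sub_le (hu : C11Bound M u) (hb : C11Bound L b)
    (P P' x y v : E) :
    |(fderiv ℝ u P + fderiv ℝ u P') ((fderiv ℝ b x - fderiv ℝ b y) v)| ≤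
      (M + M) * (L * ‖x - y‖ * ‖v‖) :=
  ContinuousLinearMap.le_of_opNorm_le_of_le _
    (norm_add_le_of_le (hu.norm_fderiv_le P) (hu.norm_fderiv_le P'))
    (ContinuousLinearMap.le_of_opNorm_le _ (hb.norm_fderiv_sub_le x y) v)

theorem C11Bound.abs_fderiv_sub_fderiv_sub_le (hu : C11Bound M u) (hq : C11Bound L q)
    {P P' : E} {c : ℝ} (hP : ‖P - P'‖ ≤ c) (x y v : E) :
    |(fderiv ℝ u P - fderiv ℝ u P') ((fderiv ℝ q x - fderiv ℝ q y) v)| ≤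
      M * c * (L * ‖x - y‖ * ‖v‖) :=
  ContinuousLinearMap.le_of_opNorm_le_of_le _
    ((hu.norm_fderiv_sub_le P P').trans (mul_le_mul_of_nonneg_left hP hu.nonneg))
    (ContinuousLinearMap.le_of_opNorm_le _ (hq.norm_fderiv_sub_le x y) v)

theorem abs_add_mul_add_mul_le {r s A₁ A₂ A₃ c₁ c₂ c₃ : ℝ} (h₁ : |A₁| ≤ c₁) (h₂ : |A₂| ≤ c₂)
    (h₃ : |A₃| ≤ c₃) : |A₁ + r * A₂ + s * A₃| ≤ c₁ + |r| * c₂ + |s| * c₃ := by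
  refine (abs_add_three _ _ _).trans (add_le_add_three h₁ ?_ ?_) <;> rw [abs_mul] <;> gcongr

/- The part of the increment that is of first order in `τ`, namely `± τ (Dq x - Dq y) v`, is odd:
it is paired with the difference of `Du` at the two points, which is again of order `τ`. -/
theorem norm_fderiv_symmStep_sub_le (hb : C11Bound L b) (hq : C11Bound L q)
    (hqB : ∀ x, ‖q x‖ ≤ B) (hu : C11Bound M u) (x y : E) :
    ‖fderiv ℝ (symmStep τ b q u) x - fderiv ℝ (symmStep τ b q u) y‖ ≤
      ((1 + (L + L ^ 2) * τ ^ 2) ^ 2 + (L + B * L) * τ ^ 2) * M * ‖x - y‖ := by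
  have hL := hb.nonneg
  have hM := hu.nonneg
  have hB : 0 ≤ B := (norm_nonneg _).trans (hqB 0)
  have hdb := hb.differentiable
  have hdq := hq.differentiable
  refine ContinuousLinearMap.opNorm_le_bound _ (by positivity) fun v => ?_
  rw [sub_apply, fderiv_symmStep_apply hdb hdq hu.differentiable,
    fderiv_symmStep_apply hdb hdq hu.differentiable]
  set P : E := y + τ ^ 2 • b y + τ • q y
  set P' : E := y + τ ^ 2 • b y - τ • q y
  have hmain := hu.abs_mean_fderiv_sub_le (m := x + τ ^ 2 • b x) (m' := y + τ ^ 2 • b y)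
    (s := τ • q x) (s' := τ • q y) (v := v + τ ^ 2 • fderiv ℝ b x v) (w := τ • fderiv ℝ q x v)
    (P := (1 + (L + L ^ 2) * τ ^ 2) * ‖x - y‖) (R := (1 + (L + L ^ 2) * τ ^ 2) * ‖v‖)
    (by positivity) (by positivity)
    (by
      rw [add_sub_add_comm, ← smul_sub, ← smul_sub]
      exact norm_add_smul_sq_add_le hL (hb.norm_sub_le x y) (hq.norm_sub_le x y))
    (norm_add_smul_sq_add_le hL ((fderiv ℝ b x).le_of_opNorm_le (hb.norm_fderiv_le x) v)
      ((fderiv ℝ q x).le_of_opNorm_le (hq.norm_fderiv_le x) v))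
  have heven := hu.abs_fderiv_add_fderiv_sub_le hb P P' x y v
  have hPP' : ‖P - P'‖ ≤ 2 * |τ| * B := by
    have : P - P' = (2 * τ) • q y := by module
    rw [this, norm_smul, Real.norm_eq_abs, abs_mul, abs_two]
    gcongr
    exact hqB y
  have hodd := hu.abs_fderiv_sub_fderiv_sub_le hq hPP' x y v
  refine (congrArg abs ?_).trans_le
    ((abs_add_mul_add_mul_le (r := τ ^ 2 / 2) (s := τ / 2) hmain heven hodd).trans_eq ?_)
  · simp only [sub_apply, add_apply, map_add, map_sub, map_smul, smul_eq_mul, P, P']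
    ring
  · rw [abs_div, abs_div, abs_two, abs_sq, ← sq_abs τ]
    ring

/-- The rate at which the Euler scheme with coefficients of `C^{1,1}` size `L` and diffusion part
bounded by `B` may increase `C^{1,1}` bounds. -/
def eulerRate (L B : ℝ) : ℝ :=
  2 * (L + L ^ 2) + (L + L ^ 2) ^ 2 + (L + B * L)

protected theorem C11Bound.symmStep (hu : C11Bound M u) (hb : C11Bound L b) (hq : C11Bound L q)
    (hqB : ∀ x, ‖q x‖ ≤ B) (hτ : τ ^ 2 ≤ 1) :
    C11Bound ((1 + eulerRate L B * τ ^ 2) * M) (symmStep τ b q u) := by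
  have hL := hb.nonneg
  have hM := hu.nonneg
  have hB : 0 ≤ B := (norm_nonneg _).trans (hqB 0)
  have hrate : (1 + (L + L ^ 2) * τ ^ 2) ^ 2 + (L + B * L) * τ ^ 2 ≤ 1 + eulerRate L B * τ ^ 2 := by
    have : (L + L ^ 2) ^ 2 * τ ^ 2 * τ ^ 2 ≤ (L + L ^ 2) ^ 2 * τ ^ 2 * 1 := by gcongr
    unfold eulerRate
    linarith
  refine ⟨fun x => (hasFDerivAt_symmStep hb.differentiable hq.differentiable
    hu.differentiable x).differentiableAt, fun x => ?_, fun x y => ?_⟩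
  · refine (norm_fderiv_symmStep_le hb hq hu x).trans ?_
    gcongr ?_ * M
    refine le_trans ?_ hrate
    nlinarith [show 0 ≤ (L + L ^ 2) * τ ^ 2 by positivity,
      show 0 ≤ ((L + L ^ 2) * τ ^ 2) ^ 2 by positivity, show 0 ≤ (L + B * L) * τ ^ 2 by positivity]
  · refine (norm_fderiv_symmStep_sub_le hb hq hqB hu x y).trans ?_
    gcongr

end EulerStep

section DiscreteResolvent

variable {V : Type*} [AddCommGroup V] [Module ℝ V] {lam σ : ℝ}

/-- The truncated resolvent `∑_{m < k} σ θ^{m+1} Q^m`, `θ = (1 + λσ)⁻¹`, of the operator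
`(Q - 1) / σ`, where `Q` is one step of size `σ` of a discrete-time semigroup. -/
def discreteResolvent (Q : Module.End ℝ V) (lam σ : ℝ) (k : ℕ) (φ : V) : V :=
  ∑ m ∈ Finset.range k, (σ * (1 + lam * σ)⁻¹ ^ (m + 1)) • (Q ^ m) φ

theorem discreteResolvent_equation (Q : Module.End ℝ V) (hσ : σ ≠ 0) (hlam : 1 + lam * σ ≠ 0)
    (k : ℕ) (φ : V) :
    σ⁻¹ • (Q (discreteResolvent Q lam σ k φ) - discreteResolvent Q lam σ k φ) -
        lam • discreteResolvent Q lam σ k φ + φ = (1 + lam * σ)⁻¹ ^ k • (Q ^ k) φ := by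
  induction k with
  | zero => simp [discreteResolvent]
  | succ k ih =>
    set w := discreteResolvent Q lam σ k φ
    have hw : discreteResolvent Q lam σ (k + 1) φ =
        w + (σ * (1 + lam * σ)⁻¹ ^ (k + 1)) • (Q ^ k) φ := Finset.sum_range_succ _ k
    have hθ : (1 + lam * σ)⁻¹ ^ k = (1 + lam * σ) * (1 + lam * σ)⁻¹ ^ (k + 1) := by
      rw [pow_succ', mul_inv_cancel_left₀ hlam]
    rw [hw, map_add, map_smul, ← Module.End.mul_apply, ← pow_succ']
    rw [hθ] at ih
    set t := (1 + lam * σ)⁻¹ ^ (k + 1)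
    calc _ = σ⁻¹ • (Q w - w) - lam • w + φ + (σ⁻¹ * σ * t) • ((Q ^ (k + 1)) φ - (Q ^ k) φ) -
          (lam * σ * t) • (Q ^ k) φ := by module
      _ = t • (Q ^ (k + 1)) φ := by
        rw [ih, inv_mul_cancel₀ hσ]
        module

theorem sum_discreteResolvent_weights_le (hlam : 0 < lam) (hσ : 0 < σ) (k : ℕ) :
    ∑ m ∈ Finset.range k, σ * (1 + lam * σ)⁻¹ ^ (m + 1) ≤ 1 / lam := by
  have h := discreteResolvent_equation (1 : Module.End ℝ ℝ) (lam := lam) hσ.ne'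
    (by positivity) k 1
  have hθ : 0 ≤ (1 + lam * σ)⁻¹ ^ k := by positivity
  simp only [sub_self, mul_zero, Module.End.one_apply, one_pow, smul_eq_mul, mul_one,
    discreteResolvent] at h
  rw [le_div_iff₀ hlam]
  linarith

theorem discreteResolvent_truncation_le {ε N : ℝ} (hlam : 0 < lam) (hσ : 0 ≤ σ) (hε : 0 < ε)
    {k : ℕ} (hk : N / (lam * ε) ≤ k * σ) : (1 + lam * σ)⁻¹ ^ k * N ≤ ε := by
  have hbernoulli : 1 + k * (lam * σ) ≤ (1 + lam * σ) ^ k :=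
    one_add_mul_le_pow (by nlinarith [mul_nonneg hlam.le hσ]) k
  rw [inv_pow, inv_mul_le_iff₀ (by positivity)]
  rw [div_le_iff₀ (by positivity)] at hk
  calc N ≤ (1 + k * (lam * σ)) * ε := by linarith
    _ ≤ _ := by gcongr

end DiscreteResolvent

section EulerScheme

variable {E ι : Type*} [NormedAddCommGroup E] [InnerProductSpace ℝ E] [Fintype ι]

open scoped BigOperators

/-- One weak Euler step of size `τ²` for the operator with drift `b` and the mean over `k` of
`½ D²u(q k, q k)` as diffusion part. -/
def eulerStep (τ : ℝ) (b : E → E) (q : ι → E → E) : Module.End ℝ (E → ℝ) where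
  toFun u x := 𝔼 k, symmStep τ b (q k) u x
  map_add' u v := by
    ext x
    simp only [symmStep, Pi.add_apply, ← Finset.expect_add_distrib]
    exact Finset.expect_congr rfl fun k _ => by ring
  map_smul' c u := by
    ext x
    simp only [symmStep, Pi.smul_apply, smul_eq_mul, RingHom.id_apply, Finset.mul_expect]
    exact Finset.expect_congr rfl fun k _ => by ring

variable {τ L M B N : ℝ} {b : E → E} {q : ι → E → E} {u : E → ℝ}

theorem eulerStep_apply (u : E → ℝ) (x : E) :
    eulerStep τ b q u x = 𝔼 k, symmStep τ b (q k) u x := rfl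

theorem abs_symmStep_le {q : E → E} (hu : ∀ x, |u x| ≤ N) (x : E) : |symmStep τ b q u x| ≤ N := by
  rw [symmStep, abs_div, abs_two, div_le_iff₀ two_pos, mul_two]
  exact (abs_add_le _ _).trans (add_le_add (hu _) (hu _))

variable [Nonempty ι]

theorem abs_eulerStep_le (hu : ∀ x, |u x| ≤ N) (x : E) : |eulerStep τ b q u x| ≤ N :=
  (Finset.abs_expect_le _ _).trans
    (Finset.expect_le Finset.univ_nonempty fun _ _ => abs_symmStep_le hu x)

protected theorem C11Bound.eulerStep (hu : C11Bound M u) (hb : C11Bound L b)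
    (hq : ∀ k, C11Bound L (q k)) (hqB : ∀ k x, ‖q k x‖ ≤ B) (hτ : τ ^ 2 ≤ 1) :
    C11Bound ((1 + eulerRate L B * τ ^ 2) * M) (eulerStep τ b q u) := by
  have h := (C11Bound.sum Finset.univ fun k _ =>
    hu.symmStep hb (hq k) (hqB k) hτ).const_smul ((Fintype.card ι : ℝ)⁻¹)
  have hcard : (Fintype.card ι : ℝ) ≠ 0 := Nat.cast_ne_zero.2 Fintype.card_ne_zero
  convert h using 1
  · rw [Finset.sum_const, Finset.card_univ, nsmul_eq_mul, abs_of_nonneg (by positivity),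
      inv_mul_cancel_left₀ hcard]
  · ext x
    rw [eulerStep_apply, Finset.expect_eq_sum_div_card, div_eq_inv_mul]
    simp

theorem abs_eulerStep_pow_le (hu : ∀ x, |u x| ≤ N) (m : ℕ) (x : E) :
    |(eulerStep τ b q ^ m) u x| ≤ N := by
  induction m generalizing x with
  | zero => exact hu x
  | succ m ih =>
    rw [pow_succ', Module.End.mul_apply]
    exact abs_eulerStep_le ih x

protected theorem C11Bound.eulerStep_pow (hu : C11Bound M u) (hb : C11Bound L b)
    (hq : ∀ k, C11Bound L (q k)) (hqB : ∀ k x, ‖q k x‖ ≤ B) (hτ : τ ^ 2 ≤ 1) (m : ℕ) :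
    C11Bound ((1 + eulerRate L B * τ ^ 2) ^ m * M) ((eulerStep τ b q ^ m) u) := by
  induction m with
  | zero => simpa using hu
  | succ m ih =>
    rw [pow_succ' (1 + _), pow_succ' (eulerStep τ b q), Module.End.mul_apply, mul_assoc]
    exact ih.eulerStep hb hq hqB hτ

theorem eulerRate_nonneg (hL : 0 ≤ L) (hB : 0 ≤ B) : 0 ≤ eulerRate L B := by
  unfold eulerRate
  positivity

theorem abs_discreteResolvent_eulerStep_le {lam : ℝ} (hlam : 0 < lam) (hτ : 0 < τ)
    (hu : ∀ x, |u x| ≤ N) (k : ℕ) (x : E) :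
    |discreteResolvent (eulerStep τ b q) lam (τ ^ 2) k u x| ≤ N / lam := by
  have hN : 0 ≤ N := (abs_nonneg _).trans (hu x)
  rw [discreteResolvent, Finset.sum_apply]
  calc _ ≤ ∑ m ∈ Finset.range k, τ ^ 2 * (1 + lam * τ ^ 2)⁻¹ ^ (m + 1) * N := by
        refine (Finset.abs_sum_le_sum_abs _ _).trans (Finset.sum_le_sum fun m _ => ?_)
        rw [Pi.smul_apply, smul_eq_mul, abs_mul, abs_of_nonneg (by positivity)]
        gcongr
        exact abs_eulerStep_pow_le hu m x
    _ ≤ 1 / lam * N := by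
        rw [← Finset.sum_mul]
        gcongr
        exact sum_discreteResolvent_weights_le hlam (by positivity) k
    _ = N / lam := one_div_mul_eq_div lam N

protected theorem C11Bound.discreteResolvent_eulerStep {lam S : ℝ} (hu : C11Bound M u)
    (hb : C11Bound L b) (hq : ∀ k, C11Bound L (q k)) (hqB : ∀ k x, ‖q k x‖ ≤ B) (hτ : τ ^ 2 ≤ 1)
    (hlam : 0 ≤ lam) {k : ℕ} (hk : k * τ ^ 2 ≤ S) :
    C11Bound (S * (Real.exp (eulerRate L B * S) * M))
      (discreteResolvent (eulerStep τ b q) lam (τ ^ 2) k u) := by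
  have hM := hu.nonneg
  have hK : 0 ≤ eulerRate L B := eulerRate_nonneg hb.nonneg
    ((norm_nonneg _).trans (hqB (Classical.arbitrary ι) 0))
  have hterm (m : ℕ) (hm : m ∈ Finset.range k) :
      C11Bound (τ ^ 2 * (Real.exp (eulerRate L B * S) * M))
        ((τ ^ 2 * (1 + lam * τ ^ 2)⁻¹ ^ (m + 1)) • (eulerStep τ b q ^ m) u) := by
    refine ((hu.eulerStep_pow hb hq hqB hτ m).const_smul _).mono ?_
    have hθ : (1 + lam * τ ^ 2)⁻¹ ^ (m + 1) ≤ 1 :=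
      pow_le_one₀ (by positivity) (inv_le_one_of_one_le₀ (by nlinarith [sq_nonneg τ]))
    have hgrowth : (1 + eulerRate L B * τ ^ 2) ^ m ≤ Real.exp (eulerRate L B * S) := by
      calc _ ≤ Real.exp (eulerRate L B * τ ^ 2) ^ m := by
            gcongr
            linarith [Real.add_one_le_exp (eulerRate L B * τ ^ 2)]
        _ = Real.exp (eulerRate L B * (m * τ ^ 2)) := by rw [← Real.exp_nat_mul]; ring_nf
        _ ≤ Real.exp (eulerRate L B * S) := by
            gcongr
            refine le_trans ?_ hk
            gcongr
            exact (Finset.mem_range.1 hm).le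
    rw [abs_of_nonneg (by positivity)]
    gcongr
    exact mul_le_of_le_one_right (sq_nonneg τ) hθ
  refine (C11Bound.sum _ hterm).mono ?_
  rw [Finset.sum_const, Finset.card_range, nsmul_eq_mul, ← mul_assoc]
  gcongr

/- The truncation time `k τ²` is kept close to a fixed `T`, so that neither the `C^{1,1}` bound nor
the truncation error depends on the step size. -/
theorem exists_eulerStep_resolvent {lam ε : ℝ} (hb : C11Bound L b) (hq : ∀ k, C11Bound L (q k))
    (hqB : ∀ k x, ‖q k x‖ ≤ B) (hu : C11Bound M u) (huN : ∀ x, |u x| ≤ N) (hlam : 0 < lam)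
    (hε : 0 < ε) :
    ∃ M', ∀ τ : ℝ, 0 < τ → τ ≤ 1 → ∃ w : E → ℝ, C11Bound M' w ∧ (∀ x, |w x| ≤ N / lam) ∧
      ∀ x, |(eulerStep τ b q w x - w x) / τ ^ 2 - lam * w x + u x| ≤ ε := by
  set T := N / (lam * ε)
  have hN : 0 ≤ N := (abs_nonneg _).trans (huN 0)
  refine ⟨(T + 1) * (Real.exp (eulerRate L B * (T + 1)) * M), fun τ hτ0 hτ1 => ?_⟩
  have hτ2 : τ ^ 2 ≤ 1 := pow_le_one₀ hτ0.le hτ1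
  have hτ2' : 0 < τ ^ 2 := by positivity
  set k := ⌈T / τ ^ 2⌉₊
  have hkT : T ≤ k * τ ^ 2 := (div_le_iff₀ hτ2').1 (Nat.le_ceil _)
  have hkT' : k * τ ^ 2 ≤ T + 1 := by
    have := (Nat.ceil_lt_add_one (show 0 ≤ T / τ ^ 2 by positivity)).le
    rw [← sub_le_iff_le_add, le_div_iff₀ hτ2'] at this
    linarith
  refine ⟨discreteResolvent (eulerStep τ b q) lam (τ ^ 2) k u,
    hu.discreteResolvent_eulerStep hb hq hqB hτ2 hlam.le hkT',
    abs_discreteResolvent_eulerStep_le hlam hτ0 huN k, fun x => ?_⟩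
  have heq := congrFun (discreteResolvent_equation (lam := lam) (eulerStep τ b q) hτ2'.ne'
    (by positivity) k u) x
  simp only [Pi.add_apply, Pi.sub_apply, Pi.smul_apply, smul_eq_mul] at heq
  rw [div_eq_inv_mul, heq, abs_mul, abs_of_nonneg (by positivity)]
  refine le_trans ?_ (discreteResolvent_truncation_le hlam hτ2'.le hε hkT)
  gcongr
  exact abs_eulerStep_pow_le huN k x

end EulerScheme

section Mollification

variable {E F : Type*} [NormedAddCommGroup E] [InnerProductSpace ℝ E] [FiniteDimensional ℝ E]
  [MeasurableSpace E] [BorelSpace E] [NormedAddCommGroup F] [NormedSpace ℝ F]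

/-- The convolution of `g` with a normalised smooth bump function centred at the origin. -/
def mollify (η : ContDiffBump (0 : E)) (g : E → F) (x : E) : F :=
  ∫ t, η.normed volume t • g (x - t)

variable (η : ContDiffBump (0 : E)) {M : ℝ}

theorem integrable_bump_smul {g : E → F} (hg : Continuous g) :
    Integrable fun t => η.normed volume t • g t :=
  ((η.contDiff_normed (n := 0)).continuous.smul hg).integrable_of_hasCompactSupport
    η.hasCompactSupport_normed.smul_right

theorem norm_integral_bump_smul_le {g : E → F} {c : ℝ} (hg : ∀ t, ‖t‖ ≤ η.rOut → ‖g t‖ ≤ c) :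
    ‖∫ t, η.normed volume t • g t‖ ≤ c := by
  calc _ ≤ ∫ t, η.normed volume t * c := by
        refine norm_integral_le_of_norm_le (η.integrable_normed.mul_const c)
          (.of_forall fun t => ?_)
        rw [norm_smul, Real.norm_of_nonneg (η.nonneg_normed t)]
        by_cases ht : ‖t‖ ≤ η.rOut
        · exact mul_le_mul_of_nonneg_left (hg t ht) (η.nonneg_normed t)
        · have : η.normed volume t = 0 := by
            rw [← Function.notMem_support, η.support_normed_eq, mem_ball_zero_iff]
            exact fun h => ht h.le
          simp only [this, zero_mul, le_refl]
    _ = c := by rw [integral_mul_const, η.integral_normed, one_mul]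

theorem norm_mollify_le {g : E → F} {c : ℝ} (hg : ∀ x, ‖g x‖ ≤ c) (x : E) : ‖mollify η g x‖ ≤ c :=
  norm_integral_bump_smul_le η fun t _ => hg (x - t)

theorem mollify_sub {f g : E → F} (hf : Continuous f) (hg : Continuous g) (x y : E) :
    mollify η f x - mollify η g y = ∫ t, η.normed volume t • (f (x - t) - g (y - t)) := by
  simp only [mollify, smul_sub]
  exact (integral_sub (integrable_bump_smul η (hf.comp (continuous_const.sub continuous_id)))
    (integrable_bump_smul η (hg.comp (continuous_const.sub continuous_id)))).symm

theorem mollify_const [CompleteSpace F] (c : F) (x : E) : mollify η (fun _ => c) x = c := by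
  rw [mollify, integral_smul_const, η.integral_normed, one_smul]

theorem C11Bound.norm_mollify_sub_le [CompleteSpace F] {g : E → F} (hg : C11Bound M g) (x : E) :
    ‖mollify η g x - g x‖ ≤ M * η.rOut := by
  have hM := hg.nonneg
  have hconst : mollify η g x - g x = mollify η g x - mollify η (fun _ => g x) x := by
    rw [mollify_const]
  rw [hconst, mollify_sub η hg.contDiff.continuous continuous_const]
  refine norm_integral_bump_smul_le η fun t ht => (hg.norm_sub_le _ _).trans ?_
  rw [sub_sub_cancel_left, norm_neg]
  gcongr

theorem hasFDerivAt_mollify {g : E → F} (hg : ContDiff ℝ 1 g) (hM : ∀ x, ‖fderiv ℝ g x‖ ≤ M)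
    (x : E) : HasFDerivAt (mollify η g) (mollify η (fderiv ℝ g) x) x := by
  have hcont (z : E) : Integrable fun t => η.normed volume t • g (z - t) :=
    integrable_bump_smul η (hg.continuous.comp (continuous_const.sub continuous_id))
  have hcont' : Integrable fun t => η.normed volume t • fderiv ℝ g (x - t) :=
    integrable_bump_smul η
      ((hg.continuous_fderiv one_ne_zero).comp (continuous_const.sub continuous_id))
  refine hasFDerivAt_integral_of_dominated_of_fderiv_le (𝕜 := ℝ) (s := Set.univ)
    (bound := fun t => η.normed volume t * M)
    (F' := fun z t => η.normed volume t • fderiv ℝ g (z - t)) Filter.univ_mem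
    (.of_forall fun z => (hcont z).aestronglyMeasurable) (hcont x) hcont'.aestronglyMeasurable
    (.of_forall fun t z _ => ?_) (η.integrable_normed.mul_const M) (.of_forall fun t z _ => ?_)
  · rw [norm_smul, Real.norm_of_nonneg (η.nonneg_normed t)]
    exact mul_le_mul_of_nonneg_left (hM _) (η.nonneg_normed t)
  · exact ((hasFDerivAt_comp_sub t).2 (hg.differentiable one_ne_zero _).hasFDerivAt).const_smul _

theorem C11Bound.fderiv_mollify {g : E → F} (hg : C11Bound M g) :
    fderiv ℝ (mollify η g) = mollify η (fderiv ℝ g) :=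
  funext fun x => (hasFDerivAt_mollify η hg.contDiff hg.norm_fderiv_le x).fderiv

protected theorem C11Bound.mollify {g : E → F} (hg : C11Bound M g) : C11Bound M (mollify η g) where
  differentiable x := (hasFDerivAt_mollify η hg.contDiff hg.norm_fderiv_le x).differentiableAt
  norm_fderiv_le x := by
    rw [hg.fderiv_mollify]
    exact norm_mollify_le η hg.norm_fderiv_le x
  norm_fderiv_sub_le x y := by
    have hcont := hg.contDiff.continuous_fderiv one_ne_zero
    rw [hg.fderiv_mollify, mollify_sub η hcont hcont]
    refine norm_integral_bump_smul_le η fun t _ => ?_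
    simpa only [sub_sub_sub_cancel_right] using hg.norm_fderiv_sub_le (x - t) (y - t)

theorem mollify_eq_convolution (g : E → F) :
    mollify η g = convolution (η.normed volume) g (ContinuousLinearMap.lsmul ℝ ℝ) volume := rfl

theorem contDiff_mollify [CompleteSpace F] {g : E → F} (hg : Continuous g) (n : ℕ) :
    ContDiff ℝ n (mollify η g) := by
  rw [mollify_eq_convolution]
  exact η.hasCompactSupport_normed.contDiff_convolution_left _ η.contDiff_normed
    hg.locallyIntegrable

theorem norm_fderiv_mollify_sub_le [CompleteSpace F] {g : E → F} (hg : Continuous g)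
    (hlip : ∀ x y, ‖g x - g y‖ ≤ M * ‖x - y‖) (x y : E) :
    ‖fderiv ℝ (mollify η g) x - fderiv ℝ (mollify η g) y‖ ≤
      (∫ t, ‖fderiv ℝ (η.normed (volume : Measure E)) t‖) * (M * ‖x - y‖) := by
  have hη : ContDiff ℝ 1 (η.normed (volume : Measure E)) := η.contDiff_normed
  have hcomp := η.hasCompactSupport_normed (μ := (volume : Measure E))
  have hη' : Continuous (fderiv ℝ (η.normed (volume : Measure E))) :=
    hη.continuous_fderiv one_ne_zero
  have hderiv (z : E) := (hcomp.hasFDerivAt_convolution_left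
    (ContinuousLinearMap.lsmul ℝ ℝ : ℝ →L[ℝ] F →L[ℝ] F) hη (hg.locallyIntegrable (μ := volume))
      z).fderiv
  have hexists (z : E) := (hcomp.fderiv ℝ).convolutionExists_left
    ((ContinuousLinearMap.lsmul ℝ ℝ : ℝ →L[ℝ] F →L[ℝ] F).precompL E) hη'
      (hg.locallyIntegrable (μ := volume)) z
  rw [mollify_eq_convolution, hderiv, hderiv, convolution_def, convolution_def,
    ← integral_sub (hexists x) (hexists y), ← integral_mul_const]
  have hint : Integrable fun t => ‖fderiv ℝ (η.normed (volume : Measure E)) t‖ * (M * ‖x - y‖) :=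
    (hη'.integrable_of_hasCompactSupport (hcomp.fderiv ℝ)).norm.mul_const _
  refine norm_integral_le_of_norm_le hint (.of_forall fun t => ?_)
  have hM : 0 ≤ M * ‖x - y‖ := (norm_nonneg _).trans (hlip x y)
  refine ContinuousLinearMap.opNorm_le_bound _ (by positivity) fun v => ?_
  have hlipt := hlip (x - t) (y - t)
  rw [sub_sub_sub_cancel_right] at hlipt
  rw [sub_apply, ContinuousLinearMap.precompL_apply, ContinuousLinearMap.precompL_apply,
    ContinuousLinearMap.lsmul_apply, ContinuousLinearMap.lsmul_apply, ← smul_sub, norm_smul,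
    mul_right_comm]
  gcongr
  exact ContinuousLinearMap.le_opNorm _ _

end Mollification

section Commutator

open scoped BigOperators

variable {E ι : Type*} [NormedAddCommGroup E] [InnerProductSpace ℝ E] {M L B τ δ : ℝ}
  {u : E → ℝ} {b : E → E}

theorem C11Bound.abs_symmetric_sum_sub_le (hu : C11Bound M u) (z : E) {R : ℝ} {v v' : E}
    (hv : ‖v‖ ≤ R) (hv' : ‖v'‖ ≤ R) :
    |(u (z + v) + u (z - v)) - (u (z + v') + u (z - v'))| ≤ M * (2 * R) * ‖v - v'‖ := by
  have hM := hu.nonneg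
  have hderiv (y : E) : HasFDerivAt (fun y => u (z + y) + u (z - y))
      (fderiv ℝ u (z + y) - fderiv ℝ u (z - y)) y := by
    have hplus := (hasFDerivAt_comp_add_left z).2 (hu.differentiable (z + y)).hasFDerivAt
    have hminus := (hu.differentiable (z - y)).hasFDerivAt.comp y ((hasFDerivAt_id y).const_sub z)
    refine (hplus.add hminus).congr_fderiv ?_
    ext; simp [sub_eq_add_neg]
  have hbound (y : E) (hy : y ∈ Metric.closedBall 0 R) :
      ‖fderiv ℝ u (z + y) - fderiv ℝ u (z - y)‖ ≤ M * (2 * R) := by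
    refine (hu.norm_fderiv_sub_le _ _).trans ?_
    rw [show z + y - (z - y) = (2 : ℝ) • y by module, norm_smul, Real.norm_two]
    gcongr
    exact mem_closedBall_zero_iff.1 hy
  exact (convex_closedBall 0 R).norm_image_sub_le_of_norm_hasFDerivWithin_le
    (fun y _ => (hderiv y).hasFDerivWithinAt) hbound (mem_closedBall_zero_iff.2 hv')
    (mem_closedBall_zero_iff.2 hv)

theorem C11Bound.abs_symmetric_mean_sub_le (hu : C11Bound M u) (y : E) {R : ℝ} {w w' v v' : E}
    (hv : ‖v‖ ≤ R) (hv' : ‖v'‖ ≤ R) :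
    |(u (y + w + v) + u (y + w - v)) / 2 - (u (y + w' + v') + u (y + w' - v')) / 2| ≤
      M * (‖w - w'‖ + R * ‖v - v'‖) := by
  have hplus := hu.norm_sub_le (y + w + v) (y + w' + v)
  have hminus := hu.norm_sub_le (y + w - v) (y + w' - v)
  have hodd := hu.abs_symmetric_sum_sub_le (y + w') hv hv'
  rw [add_sub_add_right_eq_sub, add_sub_add_left_eq_sub, Real.norm_eq_abs, abs_le] at hplus
  rw [sub_sub_sub_cancel_right, add_sub_add_left_eq_sub, Real.norm_eq_abs, abs_le] at hminus
  rw [abs_le] at hodd ⊢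
  constructor <;> linarith

variable [FiniteDimensional ℝ E] [MeasurableSpace E] [BorelSpace E] (η : ContDiffBump (0 : E))

theorem C11Bound.abs_mollify_symmStep_sub_le {q : E → E} (hu : C11Bound M u) (hb : C11Bound L b)
    (hq : C11Bound L q) (hqB : ∀ x, ‖q x‖ ≤ B) (hτ : 0 ≤ τ) (x : E) :
    |mollify η (symmStep τ b q u) x - symmStep τ b q (mollify η u) x| ≤
      M * (L * (1 + B)) * η.rOut * τ ^ 2 := by
  have hM := hu.nonneg
  have hL := hb.nonneg
  have hB : 0 ≤ B := (norm_nonneg _).trans (hqB 0)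
  have hcont := hu.contDiff.continuous
  have hbc := hb.contDiff.continuous
  have hqc := hq.contDiff.continuous
  have hshift (z : E) : Integrable fun t => η.normed volume t • u (z - t) :=
    integrable_bump_smul η (by fun_prop)
  have hstep : Integrable fun t => η.normed volume t • symmStep τ b q u (x - t) :=
    integrable_bump_smul η (by unfold symmStep; fun_prop)
  have heq : mollify η (symmStep τ b q u) x - symmStep τ b q (mollify η u) x =
      ∫ t, η.normed volume t • (symmStep τ b q u (x - t) -
        (u (x - t + τ ^ 2 • b x + τ • q x) + u (x - t + τ ^ 2 • b x - τ • q x)) / 2) := by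
    rw [symmStep]
    unfold mollify
    rw [← integral_add (hshift _) (hshift _), ← integral_div]
    refine (integral_sub hstep (((hshift _).add (hshift _)).div_const 2)).symm.trans
      (integral_congr_ae (.of_forall fun t => ?_))
    simp only [smul_eq_mul, Pi.add_apply,
      show x - t + τ ^ 2 • b x + τ • q x = x + τ ^ 2 • b x + τ • q x - t by abel,
      show x - t + τ ^ 2 • b x - τ • q x = x + τ ^ 2 • b x - τ • q x - t by abel]
    ring
  rw [heq, ← Real.norm_eq_abs]
  refine norm_integral_bump_smul_le η fun t ht => ?_
  have hxt : ‖x - t - x‖ ≤ η.rOut := by rwa [sub_sub_cancel_left, norm_neg]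
  have hqτ (y : E) : ‖τ • q y‖ ≤ τ * B := by
    rw [norm_smul, Real.norm_of_nonneg hτ]
    gcongr
    exact hqB y
  refine (hu.abs_symmetric_mean_sub_le (x - t) (hqτ _) (hqτ x)).trans ?_
  rw [← smul_sub, ← smul_sub, norm_smul, norm_smul, Real.norm_of_nonneg hτ,
    Real.norm_of_nonneg (sq_nonneg τ)]
  calc _ ≤ M * (τ ^ 2 * (L * η.rOut) + τ * B * (τ * (L * η.rOut))) := by
        gcongr
        · exact (hb.norm_sub_le _ _).trans (by gcongr)
        · exact (hq.norm_sub_le _ _).trans (by gcongr)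
    _ = _ := by ring

variable [Fintype ι] [Nonempty ι] {q : ι → E → E}

theorem C11Bound.abs_mollify_eulerStep_sub_le (hu : C11Bound M u) (hb : C11Bound L b)
    (hq : ∀ k, C11Bound L (q k)) (hqB : ∀ k x, ‖q k x‖ ≤ B) (hτ : 0 ≤ τ) (x : E) :
    |mollify η (eulerStep τ b q u) x - eulerStep τ b q (mollify η u) x| ≤
      M * (L * (1 + B)) * η.rOut * τ ^ 2 := by
  have hcont := hu.contDiff.continuous
  have hbc := hb.contDiff.continuous
  have hmean : mollify η (eulerStep τ b q u) x =
      𝔼 k, mollify η (symmStep τ b (q k) u) x := by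
    have hint (k : ι) : Integrable fun t =>
        η.normed volume t • symmStep τ b (q k) u (x - t) :=
      integrable_bump_smul η (by have := (hq k).contDiff.continuous; unfold symmStep; fun_prop)
    simp only [Finset.expect_eq_sum_div_card, mollify, eulerStep_apply]
    rw [← integral_finsetSum _ fun k _ => hint k, ← integral_div]
    simp only [smul_eq_mul, ← Finset.mul_sum, mul_div_assoc]
  rw [hmean, eulerStep_apply, ← Finset.expect_sub_distrib]
  exact (Finset.abs_expect_le _ _).trans (Finset.expect_le Finset.univ_nonempty fun k _ =>
    hu.abs_mollify_symmStep_sub_le η hb (hq k) (hqB k) hτ x)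

end Commutator

section Consistency

open scoped BigOperators

variable {E ι : Type*} [NormedAddCommGroup E] [InnerProductSpace ℝ E] {u : E → ℝ} {M C : ℝ}

theorem norm_taylor_one_le {E F : Type*} [NormedAddCommGroup E] [NormedSpace ℝ E]
    [NormedAddCommGroup F] [NormedSpace ℝ F] {g : E → F} (hg : Differentiable ℝ g)
    (hC : ∀ x y, ‖fderiv ℝ g x - fderiv ℝ g y‖ ≤ C * ‖x - y‖) (hC0 : 0 ≤ C) (x h : E) :
    ‖g (x + h) - g x - fderiv ℝ g x h‖ ≤ C * ‖h‖ ^ 2 := by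
  have hbound (y : E) (hy : y ∈ Metric.closedBall x ‖h‖) :
      ‖fderiv ℝ g y - fderiv ℝ g x‖ ≤ C * ‖h‖ :=
    (hC y x).trans (by gcongr; exact mem_closedBall_iff_norm.1 hy)
  have := (convex_closedBall x ‖h‖).norm_image_sub_le_of_norm_fderiv_le' (fun y _ => hg y) hbound
    (Metric.mem_closedBall_self (norm_nonneg h)) (y := x + h) (by simp)
  rw [add_sub_cancel_left] at this
  exact this.trans_eq (by ring)

theorem abs_taylor_two_le (hu : ContDiff ℝ 2 u) (hC0 : 0 ≤ C)
    (hC : ∀ x y, ‖fderiv ℝ (fderiv ℝ u) x - fderiv ℝ (fderiv ℝ u) y‖ ≤ C * ‖x - y‖) (x h : E) :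
    |u (x + h) - u x - fderiv ℝ u x h - fderiv ℝ (fderiv ℝ u) x h h / 2| ≤ C * ‖h‖ ^ 3 := by
  have hdu : Differentiable ℝ (fderiv ℝ u) :=
    (hu.fderiv_right (m := 1) le_rfl).differentiable one_ne_zero
  have hline (t : ℝ) : HasDerivAt (fun t : ℝ => x + t • h) h t := by
    simpa using ((hasDerivAt_id t).smul_const h).const_add x
  have hderiv (t : ℝ) : HasDerivAt
      (fun t : ℝ => u (x + t • h) - t * fderiv ℝ u x h - t ^ 2 * (fderiv ℝ (fderiv ℝ u) x h h / 2))
      ((fderiv ℝ u (x + t • h) - fderiv ℝ u x - fderiv ℝ (fderiv ℝ u) x (t • h)) h) t := by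
    have hu' := ((hu.differentiable two_ne_zero) (x + t • h)).hasFDerivAt.comp_hasDerivAt t
      (hline t)
    refine ((hu'.sub ((hasDerivAt_id t).mul_const _)).sub
      ((hasDerivAt_pow 2 t).mul_const _)).congr_deriv ?_
    simp
    ring
  have hbound (t : ℝ) (ht : t ∈ Set.Icc (0 : ℝ) 1) :
      ‖(fderiv ℝ u (x + t • h) - fderiv ℝ u x - fderiv ℝ (fderiv ℝ u) x (t • h)) h‖ ≤
        C * ‖h‖ ^ 3 := by
    have hth : ‖t • h‖ ≤ ‖h‖ := by
      rw [norm_smul, Real.norm_of_nonneg ht.1]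
      exact mul_le_of_le_one_left (norm_nonneg h) ht.2
    calc _ ≤ C * ‖t • h‖ ^ 2 * ‖h‖ :=
          ContinuousLinearMap.le_of_opNorm_le _ (norm_taylor_one_le hdu hC hC0 x _) h
      _ ≤ C * ‖h‖ ^ 2 * ‖h‖ := by gcongr
      _ = _ := by ring
  have := (convex_Icc (0 : ℝ) 1).norm_image_sub_le_of_norm_hasDerivWithin_le
    (fun t _ => (hderiv t).hasDerivWithinAt) hbound (Set.left_mem_Icc.2 zero_le_one)
    (Set.right_mem_Icc.2 zero_le_one)
  simp only [one_smul, one_mul, one_pow, zero_smul, add_zero, zero_mul, sub_zero, norm_one,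
    mul_one, ne_eq, OfNat.ofNat_ne_zero, not_false_eq_true, zero_pow, Real.norm_eq_abs] at this
  refine le_trans (le_of_eq ?_) this
  congr 1
  ring

theorem abs_symmetric_taylor_le (hu : ContDiff ℝ 2 u) (hC0 : 0 ≤ C)
    (hC : ∀ x y, ‖fderiv ℝ (fderiv ℝ u) x - fderiv ℝ (fderiv ℝ u) y‖ ≤ C * ‖x - y‖) (x v w : E) :
    |(u (x + w + v) + u (x + w - v)) / 2 - u x - fderiv ℝ u x w -
      (fderiv ℝ (fderiv ℝ u) x w w + fderiv ℝ (fderiv ℝ u) x v v) / 2| ≤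
        C * (‖w‖ + ‖v‖) ^ 3 := by
  have hplus := abs_taylor_two_le hu hC0 hC x (w + v)
  have hminus := abs_taylor_two_le hu hC0 hC x (w - v)
  have hplus' : C * ‖w + v‖ ^ 3 ≤ C * (‖w‖ + ‖v‖) ^ 3 := by
    gcongr
    exact norm_add_le w v
  have hminus' : C * ‖w - v‖ ^ 3 ≤ C * (‖w‖ + ‖v‖) ^ 3 := by
    gcongr
    exact norm_sub_le w v
  simp only [map_add, map_sub, add_apply, sub_apply, ← add_assoc, ← add_sub_assoc, abs_le]
    at hplus hminus ⊢
  constructor <;> linarith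

variable {A τ : ℝ} {b : E → E}

theorem abs_symmStep_sub_taylor_le {q : E → E} {R : ℝ} (hu : ContDiff ℝ 2 u) (hC0 : 0 ≤ C)
    (hC : ∀ x y, ‖fderiv ℝ (fderiv ℝ u) x - fderiv ℝ (fderiv ℝ u) y‖ ≤ C * ‖x - y‖)
    (hτ : 0 ≤ τ) (hτ1 : τ ≤ 1) {x : E} (hb : ‖b x‖ ≤ R) (hq : ‖q x‖ ≤ R) :
    |symmStep τ b q u x - u x - fderiv ℝ u x (τ ^ 2 • b x) -
      (fderiv ℝ (fderiv ℝ u) x (τ ^ 2 • b x) (τ ^ 2 • b x) +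
        fderiv ℝ (fderiv ℝ u) x (τ • q x) (τ • q x)) / 2| ≤ C * (2 * τ * R) ^ 3 := by
  have hR : 0 ≤ R := (norm_nonneg _).trans hb
  have hw : ‖τ ^ 2 • b x‖ ≤ τ ^ 2 * R := by
    rw [norm_smul, Real.norm_of_nonneg (by positivity)]
    gcongr
  have hv : ‖τ • q x‖ ≤ τ * R := by
    rw [norm_smul, Real.norm_of_nonneg hτ]
    gcongr
  have hwv : ‖τ ^ 2 • b x‖ + ‖τ • q x‖ ≤ 2 * τ * R := by
    have : τ ^ 2 * R ≤ τ * R := by gcongr; nlinarith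
    linarith
  exact (abs_symmetric_taylor_le hu hC0 hC x (τ • q x) (τ ^ 2 • b x)).trans (by gcongr)

theorem abs_symmStep_sub_le {q : E → E} (hu : ContDiff ℝ 2 u) (hC0 : 0 ≤ C)
    (hC : ∀ x y, ‖fderiv ℝ (fderiv ℝ u) x - fderiv ℝ (fderiv ℝ u) y‖ ≤ C * ‖x - y‖)
    (hM : ∀ x, ‖fderiv ℝ (fderiv ℝ u) x‖ ≤ M) (hτ : 0 < τ) (hτ1 : τ ≤ 1) {x : E}
    (hb : ‖b x‖ ≤ A * (1 + ‖x‖)) (hq : ‖q x‖ ≤ A * (1 + ‖x‖)) :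
    |(symmStep τ b q u x - u x) / τ ^ 2 -
      (fderiv ℝ u x (b x) + fderiv ℝ (fderiv ℝ u) x (q x) (q x) / 2)| ≤
        (8 * C * A ^ 3 + M * A ^ 2) * τ * (1 + ‖x‖) ^ 3 := by
  set R := A * (1 + ‖x‖)
  have : 0 ≤ R := (norm_nonneg _).trans hb
  have hM0 : 0 ≤ M := (norm_nonneg (fderiv ℝ (fderiv ℝ u) x)).trans (hM x)
  have htaylor := abs_symmStep_sub_taylor_le hu hC0 hC hτ.le hτ1 hb hq
  have hdrift : |fderiv ℝ (fderiv ℝ u) x (b x) (b x)| ≤ M * R * R :=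
    ContinuousLinearMap.le_of_opNorm_le_of_le _
      (ContinuousLinearMap.le_of_opNorm_le_of_le _ (hM x) hb) hb
  have hRcube : R ^ 3 = A ^ 3 * (1 + ‖x‖) ^ 3 := mul_pow _ _ _
  have hRsq : R ^ 2 ≤ A ^ 2 * (1 + ‖x‖) ^ 3 := by
    rw [mul_pow]
    gcongr
    · linarith [norm_nonneg x]
    · norm_num
  refine le_of_mul_le_mul_left ?_ (sq_pos_of_pos hτ)
  rw [← abs_of_pos (sq_pos_of_pos hτ), ← abs_mul, abs_of_pos (sq_pos_of_pos hτ)]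
  set D := fderiv ℝ u x
  set D₂ := fderiv ℝ (fderiv ℝ u) x
  calc _ = |(symmStep τ b q u x - u x - D (τ ^ 2 • b x) - (D₂ (τ ^ 2 • b x) (τ ^ 2 • b x) +
          D₂ (τ • q x) (τ • q x)) / 2) + τ ^ 4 / 2 * D₂ (b x) (b x)| := by
        congr 1
        simp only [map_smul, smul_apply, smul_eq_mul]
        field_simp
        ring
    _ ≤ C * (2 * τ * R) ^ 3 + τ ^ 4 / 2 * (M * R * R) := by
        refine (abs_add_le _ _).trans (add_le_add htaylor ?_)
        rw [abs_mul, abs_of_nonneg (by positivity : 0 ≤ τ ^ 4 / 2)]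
        gcongr
    _ = τ ^ 3 * (8 * C * R ^ 3 + τ / 2 * (M * R ^ 2)) := by ring
    _ ≤ τ ^ 3 * (8 * C * (A ^ 3 * (1 + ‖x‖) ^ 3) + 1 * (M * (A ^ 2 * (1 + ‖x‖) ^ 3))) := by
        rw [hRcube]
        gcongr
        linarith
    _ = _ := by ring

end Consistency

section Lyapunov

variable {E : Type*} [NormedAddCommGroup E]

/-- The Lyapunov function `(1 + |x|²)²` of the diffusion, which also serves as the weight in the
estimates of the approximate resolvent. -/
def lyapunov (x : E) : ℝ := (1 + ‖x‖ ^ 2) ^ 2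

theorem one_le_lyapunov (x : E) : 1 ≤ lyapunov x := one_le_pow₀ (by simp)

theorem one_add_norm_pow_three_le (x : E) : (1 + ‖x‖) ^ 3 ≤ 4 * lyapunov x := by
  calc (1 + ‖x‖) ^ 3 = (1 + ‖x‖) ^ 2 * (1 + ‖x‖) := by ring
    _ ≤ (2 * (1 + ‖x‖ ^ 2)) * (2 * (1 + ‖x‖ ^ 2)) := by
        gcongr <;> nlinarith [sq_nonneg (‖x‖ - 1)]
    _ = _ := by rw [lyapunov]; ring

theorem norm_le_lyapunov (x : E) : ‖x‖ ≤ lyapunov x := by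
  rw [lyapunov]
  nlinarith [sq_nonneg (‖x‖ - 1), sq_nonneg (‖x‖ ^ 2)]

end Lyapunov

theorem exists_pos_le_one_mul_le {K δ : ℝ} (hK : 0 ≤ K) (hδ : 0 < δ) :
    ∃ τ, 0 < τ ∧ τ ≤ 1 ∧ K * τ ≤ δ := by
  refine ⟨min 1 (δ / (K + 1)), by positivity, min_le_left _ _, ?_⟩
  calc K * min 1 (δ / (K + 1)) ≤ (K + 1) * (δ / (K + 1)) := by
        gcongr
        exacts [le_add_of_nonneg_right zero_le_one, min_le_right _ _]
    _ = δ := by field_simp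

theorem exists_contDiffBump_mul_rOut_le {E : Type*} [NormedAddCommGroup E]
    [NormedSpace ℝ E] {K δ : ℝ} (hK : 0 ≤ K) (hδ : 0 < δ) :
    ∃ η : ContDiffBump (0 : E), K * η.rOut ≤ δ := by
  obtain ⟨r, hr, -, hKr⟩ := exists_pos_le_one_mul_le hK hδ
  exact ⟨⟨r / 2, r, half_pos hr, half_lt_self hr⟩, hKr⟩

section ApproximateResolvent

open scoped BigOperators

variable {E ι : Type*} [NormedAddCommGroup E] [InnerProductSpace ℝ E] [Fintype ι]
  {u φ : E → ℝ} {b : E → E} {p q : ι → E → E} {A B C L M M' N τ ε lam : ℝ}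

/-- The generator `u ↦ Du b + ∑ₖ D²u(pₖ, pₖ)` of the diffusion with drift `b` and noise fields
`√2 pₖ`; in coordinates its diffusion matrix is `∑ₖ pₖ pₖᵀ`. -/
def diffusionGen (b : E → E) (p : ι → E → E) (u : E → ℝ) (x : E) : ℝ :=
  fderiv ℝ u x (b x) + ∑ k, fderiv ℝ (fderiv ℝ u) x (p k x) (p k x)

theorem abs_eulerStep_sub_diffusionGen_le [Nonempty ι] (hu : ContDiff ℝ 2 u) (hC0 : 0 ≤ C)
    (hC : ∀ x y, ‖fderiv ℝ (fderiv ℝ u) x - fderiv ℝ (fderiv ℝ u) y‖ ≤ C * ‖x - y‖)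
    (hM : ∀ x, ‖fderiv ℝ (fderiv ℝ u) x‖ ≤ M) (hτ : 0 < τ) (hτ1 : τ ≤ 1) {x : E}
    (hb : ‖b x‖ ≤ A * (1 + ‖x‖))
    (hp : ∀ k, ‖√(2 * Fintype.card ι) • p k x‖ ≤ A * (1 + ‖x‖)) :
    |(eulerStep τ b (fun k => √(2 * Fintype.card ι) • p k) u x - u x) / τ ^ 2 -
      diffusionGen b p u x| ≤ (8 * C * A ^ 3 + M * A ^ 2) * τ * (1 + ‖x‖) ^ 3 := by
  have hcard : (Fintype.card ι : ℝ) ≠ 0 := Nat.cast_ne_zero.2 Fintype.card_ne_zero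
  have hmean : (eulerStep τ b (fun k => √(2 * Fintype.card ι) • p k) u x - u x) / τ ^ 2 -
      diffusionGen b p u x = 𝔼 k, ((symmStep τ b (√(2 * Fintype.card ι) • p k) u x - u x) / τ ^ 2 -
        (fderiv ℝ u x (b x) + fderiv ℝ (fderiv ℝ u) x ((√(2 * Fintype.card ι) • p k) x)
          ((√(2 * Fintype.card ι) • p k) x) / 2)) := by
    have hsq : √(2 * Fintype.card ι) * √(2 * Fintype.card ι) = 2 * (Fintype.card ι : ℝ) :=
      Real.mul_self_sqrt (by positivity)
    simp only [eulerStep_apply, diffusionGen, Finset.expect_eq_sum_div_card, Pi.smul_apply,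
      map_smul, smul_apply, smul_eq_mul, ← mul_assoc, hsq, Finset.sum_sub_distrib,
      Finset.sum_add_distrib, ← Finset.sum_div, ← Finset.mul_sum, Finset.sum_const,
      Finset.card_univ, nsmul_eq_mul]
    field_simp
  rw [hmean]
  exact (Finset.abs_expect_le _ _).trans (Finset.expect_le Finset.univ_nonempty fun k _ =>
    abs_symmStep_sub_le hu hC0 hC hM hτ hτ1 hb (hp k))

theorem C11Bound.norm_le_mul_one_add_norm (hb : C11Bound L b) (x : E) :
    ‖b x‖ ≤ (‖b 0‖ + L) * (1 + ‖x‖) := by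
  have h := hb.norm_sub_le x 0
  rw [sub_zero] at h
  nlinarith [norm_sub_norm_le (b x) (b 0), hb.nonneg, norm_nonneg x, norm_nonneg (b 0)]

variable [FiniteDimensional ℝ E] [MeasurableSpace E] [BorelSpace E]

theorem mollify_add {f g : E → ℝ} (η : ContDiffBump (0 : E)) (hf : Continuous f)
    (hg : Continuous g) : mollify η (f + g) = mollify η f + mollify η g := by
  funext x
  simp only [mollify, Pi.add_apply, smul_add]
  exact integral_add (integrable_bump_smul η (by fun_prop)) (integrable_bump_smul η (by fun_prop))

theorem mollify_const_smul (η : ContDiffBump (0 : E)) (c : ℝ) (f : E → ℝ) :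
    mollify η (c • f) = c • mollify η f := by
  funext x
  simp only [mollify, Pi.smul_apply, smul_comm _ c]
  exact integral_smul c _

theorem C11Bound.abs_mollify_eulerStep_resolvent_le [Nonempty ι] (η : ContDiffBump (0 : E))
    (hu : C11Bound M' u) (hb : C11Bound L b) (hq : ∀ k, C11Bound L (q k))
    (hqB : ∀ k x, ‖q k x‖ ≤ B) (hφ : C11Bound M φ) (hτ : 0 < τ)
    (h : ∀ x, |(eulerStep τ b q u x - u x) / τ ^ 2 - lam * u x + φ x| ≤ ε) (x : E) :
    |(eulerStep τ b q (mollify η u) x - mollify η u x) / τ ^ 2 - lam * mollify η u x + φ x| ≤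
      ε + (M' * (L * (1 + B)) + M) * η.rOut := by
  have hcont := hu.contDiff.continuous
  have hφcont := hφ.contDiff.continuous
  have hbcont := hb.contDiff.continuous
  have hqcont := fun k => (hq k).contDiff.continuous
  have hstep : Continuous (eulerStep τ b q u) := by
    change Continuous fun x => eulerStep τ b q u x
    simp only [eulerStep_apply, Finset.expect_eq_sum_div_card, symmStep]
    fun_prop
  have hres := norm_mollify_le η (g := (τ ^ 2)⁻¹ • eulerStep τ b q u + (-((τ ^ 2)⁻¹ + lam)) • u + φ)
    (c := ε) (fun x => by
      refine (congrArg abs ?_).trans_le (h x)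
      simp only [Pi.add_apply, Pi.smul_apply, smul_eq_mul]
      ring) x
  rw [mollify_add η (by fun_prop) (by fun_prop), mollify_add η (by fun_prop) (by fun_prop),
    mollify_const_smul, mollify_const_smul] at hres
  simp only [Pi.add_apply, Pi.smul_apply, smul_eq_mul] at hres
  have hcomm : |(mollify η (eulerStep τ b q u) x - eulerStep τ b q (mollify η u) x) / τ ^ 2| ≤
      M' * (L * (1 + B)) * η.rOut := by
    rw [abs_div, abs_of_pos (sq_pos_of_pos hτ), div_le_iff₀ (sq_pos_of_pos hτ)]
    exact hu.abs_mollify_eulerStep_sub_le η hb hq hqB hτ.le x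
  have hφη := hφ.norm_mollify_sub_le η x
  rw [Real.norm_eq_abs, abs_le] at hres hφη
  rw [abs_le] at hcomm ⊢
  rw [sub_div] at hcomm ⊢
  rw [inv_mul_eq_div, neg_mul, add_mul, inv_mul_eq_div] at hres
  constructor <;> linarith

theorem C11Bound.exists_abs_mollify_eulerStep_sub_le [Nonempty ι] (η : ContDiffBump (0 : E))
    (hb : C11Bound L b) (hpB : ∀ k x, ‖p k x‖ ≤ B) (M' : ℝ) :
    ∃ K, 0 ≤ K ∧ ∀ w τ, C11Bound M' w → 0 < τ → τ ≤ 1 → ∀ x,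
      |(eulerStep τ b (fun k => √(2 * Fintype.card ι) • p k) (mollify η w) x - mollify η w x) /
        τ ^ 2 - diffusionGen b p (mollify η w) x| ≤ K * τ * lyapunov x := by
  have hL := hb.nonneg
  have hB : 0 ≤ B := (norm_nonneg _).trans (hpB (Classical.arbitrary ι) 0)
  set s := √(2 * Fintype.card ι)
  set A := ‖b 0‖ + L + s * B
  set I := ∫ t, ‖fderiv ℝ (η.normed (volume : Measure E)) t‖
  have hI : 0 ≤ I := integral_nonneg fun t => norm_nonneg _
  refine ⟨(8 * (I * |M'|) * A ^ 3 + |M'| * A ^ 2) * 4, by positivity,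
    fun w τ hw hτ hτ1 x => ?_⟩
  rw [abs_of_nonneg hw.nonneg]
  have hlip (x y : E) : ‖fderiv ℝ (fderiv ℝ (mollify η w)) x -
      fderiv ℝ (fderiv ℝ (mollify η w)) y‖ ≤ I * M' * ‖x - y‖ := by
    rw [hw.fderiv_mollify, mul_assoc]
    exact norm_fderiv_mollify_sub_le η (hw.contDiff.continuous_fderiv one_ne_zero)
      hw.norm_fderiv_sub_le x y
  have hbA : ‖b x‖ ≤ A * (1 + ‖x‖) := (hb.norm_le_mul_one_add_norm x).trans <| by
    gcongr
    exact le_add_of_nonneg_right (by positivity)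
  have hpA (k : ι) : ‖s • p k x‖ ≤ A * (1 + ‖x‖) := by
    rw [norm_smul, Real.norm_of_nonneg (Real.sqrt_nonneg _)]
    calc s * ‖p k x‖ ≤ s * B := by gcongr; exact hpB k x
      _ ≤ A := le_add_of_nonneg_left (by positivity)
      _ ≤ A * (1 + ‖x‖) := le_mul_of_one_le_right (by positivity) (by simp)
  have hM' := hw.nonneg
  calc _ ≤ (8 * (I * M') * A ^ 3 + M' * A ^ 2) * τ * (1 + ‖x‖) ^ 3 :=
        abs_eulerStep_sub_diffusionGen_le (contDiff_mollify η hw.contDiff.continuous 2)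
          (mul_nonneg hI hM') hlip (hw.mollify η).norm_fderiv_fderiv_le hτ hτ1 hbA hpA
    _ ≤ (8 * (I * M') * A ^ 3 + M' * A ^ 2) * τ * (4 * lyapunov x) := by
        gcongr
        exact one_add_norm_pow_three_le x
    _ = _ := by ring

/- The bump radius is fixed before the step size: the commutator of mollification with the Euler
step is small uniformly in the step size, whereas consistency is not uniform in the radius. -/
theorem exists_approx_resolvent [Nonempty ι] (hb : C11Bound L b) (hp : ∀ k, C11Bound L (p k))
    (hpB : ∀ k x, ‖p k x‖ ≤ B) (hφ : C11Bound M φ) (hφN : ∀ x, |φ x| ≤ N) (hlam : 0 < lam)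
    (hε : 0 < ε) :
    ∃ M' w, ContDiff ℝ 2 w ∧ C11Bound M' w ∧ (∀ x, |w x| ≤ N / lam) ∧
      ∀ x, |diffusionGen b p w x - lam * w x + φ x| ≤ ε * lyapunov x := by
  set s := √(2 * Fintype.card ι)
  have hL := hb.nonneg
  have hs : 0 ≤ s := Real.sqrt_nonneg _
  have hB : 0 ≤ B := (norm_nonneg _).trans (hpB (Classical.arbitrary ι) 0)
  have hb' : C11Bound ((1 + s) * L) b := hb.mono (le_mul_of_one_le_left hL (by linarith))
  have hq (k : ι) : C11Bound ((1 + s) * L) (s • p k) := ((hp k).const_smul s).mono (by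
    rw [abs_of_nonneg hs]
    gcongr
    linarith)
  have hqB (k : ι) (x : E) : ‖(s • p k) x‖ ≤ s * B := by
    rw [Pi.smul_apply, norm_smul, Real.norm_of_nonneg hs]
    gcongr
    exact hpB k x
  obtain ⟨M', hM'⟩ := exists_eulerStep_resolvent hb' hq hqB hφ hφN hlam (by positivity : 0 < ε / 4)
  have hM'0 : 0 ≤ M' := (hM' 1 one_pos le_rfl).elim fun w hw => hw.1.nonneg
  have hM0 := hφ.nonneg
  obtain ⟨η, hradius⟩ := exists_contDiffBump_mul_rOut_le (E := E)
    (by positivity : 0 ≤ M' * ((1 + s) * L * (1 + s * B)) + M) (by positivity : 0 < ε / 4)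
  obtain ⟨K, hK, hconsistent⟩ := C11Bound.exists_abs_mollify_eulerStep_sub_le η hb hpB M'
  obtain ⟨τ, hτ, hτ1, hstep⟩ := exists_pos_le_one_mul_le hK (half_pos hε)
  obtain ⟨w, hw, hwN, hres⟩ := hM' τ hτ hτ1
  refine ⟨M', mollify η w, contDiff_mollify η hw.contDiff.continuous 2, hw.mollify η,
    fun x => norm_mollify_le η (g := w) hwN x, fun x => ?_⟩
  have hmollify := hw.abs_mollify_eulerStep_resolvent_le η hb' hq hqB hφ hτ hres x
  have hone : ε / 2 * 1 ≤ ε / 2 * lyapunov x := by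
    gcongr
    exact one_le_lyapunov x
  have hgen := (hconsistent w τ hw hτ hτ1 x).trans
    (mul_le_mul_of_nonneg_right hstep (zero_le_one.trans (one_le_lyapunov x)))
  rw [abs_le] at hmollify hgen ⊢
  constructor <;> linarith

end ApproximateResolvent

section Coupling

open Filter Topology
open scoped InnerProductSpace

theorem deriv_deriv_nonpos_of_isLocalMax {g : ℝ → ℝ} {t : ℝ} (hmax : IsLocalMax g t)
    (hg : ContinuousAt g t) : deriv (deriv g) t ≤ 0 := by
  by_contra! hpos
  have hmin := isLocalMin_of_deriv_deriv_pos hpos hmax.deriv_eq_zero hg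
  have hconst : g =ᶠ[𝓝 t] fun _ => g t := by
    filter_upwards [hmin, hmax] with s h1 h2 using le_antisymm h2 h1
  have := hconst.deriv.deriv.eq_of_nhds
  simp only [deriv_const'] at this
  exact hpos.ne' this

section Lines

variable {E : Type*} [NormedAddCommGroup E] [NormedSpace ℝ E] {P Q : E → ℝ}

theorem hasDerivAt_comp_add_smul (hP : ContDiff ℝ 2 P) (x v : E) (t : ℝ) :
    HasDerivAt (fun t : ℝ => P (x + t • v)) (fderiv ℝ P (x + t • v) v) t := by
  have hline : HasDerivAt (fun t : ℝ => x + t • v) v t := by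
    simpa using ((hasDerivAt_id t).smul_const v).const_add x
  exact (hP.differentiable two_ne_zero _).hasFDerivAt.comp_hasDerivAt t hline

theorem hasDerivAt_fderiv_comp_add_smul (hP : ContDiff ℝ 2 P) (x v : E) :
    HasDerivAt (fun t : ℝ => fderiv ℝ P (x + t • v) v) (fderiv ℝ (fderiv ℝ P) x v v) 0 := by
  have hline : HasDerivAt (fun t : ℝ => x + t • v) v 0 := by
    simpa using ((hasDerivAt_id (0 : ℝ)).smul_const v).const_add x
  have hdiff := (hP.fderiv_right (m := 1) le_rfl).differentiable one_ne_zero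
  have := (hdiff (x + (0 : ℝ) • v)).hasFDerivAt.comp_hasDerivAt 0 hline
  simpa using this.clm_apply (hasDerivAt_const (0 : ℝ) v)

theorem fderiv_le_of_isLocalMax_sub_sub (hP : ContDiff ℝ 2 P) (hQ : ContDiff ℝ 2 Q) {x y v w : E}
    {χ χ' : ℝ → ℝ} {χ₂ : ℝ} (hχ : ∀ᶠ t in 𝓝 0, HasDerivAt χ (χ' t) t) (hχ' : HasDerivAt χ' χ₂ 0)
    (hmax : IsLocalMax (fun t : ℝ => P (x + t • v) - Q (y + t • w) - χ t) 0) :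
    fderiv ℝ P x v - fderiv ℝ Q y w = χ' 0 ∧
      fderiv ℝ (fderiv ℝ P) x v v - fderiv ℝ (fderiv ℝ Q) y w w ≤ χ₂ := by
  have hderiv : ∀ᶠ t in 𝓝 0, HasDerivAt (fun t : ℝ => P (x + t • v) - Q (y + t • w) - χ t)
      (fderiv ℝ P (x + t • v) v - fderiv ℝ Q (y + t • w) w - χ' t) t :=
    hχ.mono fun t ht => ((hasDerivAt_comp_add_smul hP x v t).sub
      (hasDerivAt_comp_add_smul hQ y w t)).sub ht
  have hderiv₂ := ((hasDerivAt_fderiv_comp_add_smul hP x v).sub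
    (hasDerivAt_fderiv_comp_add_smul hQ y w)).sub hχ'
  have hfirst := hmax.hasDerivAt_eq_zero hderiv.self_of_nhds
  have hsecond := deriv_deriv_nonpos_of_isLocalMax hmax hderiv.self_of_nhds.continuousAt
  rw [EventuallyEq.deriv_eq (hderiv.mono fun t ht => ht.deriv)] at hsecond
  replace hsecond := hderiv₂.deriv.symm.trans_le hsecond
  simp only [zero_smul, add_zero] at hfirst
  exact ⟨sub_eq_zero.1 hfirst, sub_nonpos.1 hsecond⟩

end Lines

section Cost

variable {K r : ℝ}

/-- The cost of the coupled points at distance `r`, bounded and so concave in `r` that the second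
order term of the reflected noise dominates all the others. -/
def couplingCost (K r : ℝ) : ℝ := 1 - Real.exp (-(K * (r ^ 2 + 2 * r)))

/-- The slope of `couplingCost K` with respect to half the squared distance. -/
def couplingSlope (K r : ℝ) : ℝ := 2 * K * ((r + 1) / r) * Real.exp (-(K * (r ^ 2 + 2 * r)))

/-- The second derivative of `couplingCost K`. -/
def couplingCurvature (K r : ℝ) : ℝ :=
  (2 * K - 4 * K ^ 2 * (r + 1) ^ 2) * Real.exp (-(K * (r ^ 2 + 2 * r)))

theorem hasDerivAt_couplingCost (K r : ℝ) :
    HasDerivAt (couplingCost K) (2 * K * (r + 1) * Real.exp (-(K * (r ^ 2 + 2 * r)))) r := by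
  refine (((((hasDerivAt_pow 2 r).add ((hasDerivAt_id r).const_mul 2)).const_mul
    K).neg.exp).const_sub 1).congr_deriv ?_
  simp
  ring

theorem hasDerivAt_deriv_couplingCost (K r : ℝ) :
    HasDerivAt (fun r => 2 * K * (r + 1) * Real.exp (-(K * (r ^ 2 + 2 * r))))
      (couplingCurvature K r) r := by
  refine ((((hasDerivAt_id r).add_const 1).const_mul (2 * K)).mul (((hasDerivAt_pow 2 r).add
    ((hasDerivAt_id r).const_mul 2)).const_mul K).neg.exp).congr_deriv ?_
  simp [couplingCurvature]
  ring

theorem couplingCost_nonneg (hK : 0 ≤ K) (hr : 0 ≤ r) : 0 ≤ couplingCost K r :=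
  sub_nonneg.2 (Real.exp_le_one_iff.2 (neg_nonpos.2 (by positivity)))

theorem couplingCost_le_one (K r : ℝ) : couplingCost K r ≤ 1 := sub_le_self _ (Real.exp_pos _).le

theorem couplingCost_le_tangent (hK : 0 ≤ K) (hr : 0 < r) (ρ : ℝ) :
    couplingCost K ρ ≤ couplingCost K r + couplingSlope K r / 2 * (ρ ^ 2 - r ^ 2) := by
  have hexp := Real.add_one_le_exp (K * (r ^ 2 + 2 * r) - K * (ρ ^ 2 + 2 * ρ))
  have hpoint : ρ ^ 2 + 2 * ρ - (r ^ 2 + 2 * r) ≤ (r + 1) / r * (ρ ^ 2 - r ^ 2) := by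
    rw [div_mul_eq_mul_div, le_div_iff₀ hr]
    nlinarith [sq_nonneg (ρ - r)]
  have hsplit : Real.exp (-(K * (ρ ^ 2 + 2 * ρ))) = Real.exp (-(K * (r ^ 2 + 2 * r))) *
      Real.exp (K * (r ^ 2 + 2 * r) - K * (ρ ^ 2 + 2 * ρ)) := by
    rw [← Real.exp_add]
    ring_nf
  have hpos := Real.exp_pos (-(K * (r ^ 2 + 2 * r)))
  rw [couplingCost, couplingCost, couplingSlope, hsplit]
  nlinarith [mul_le_mul_of_nonneg_left hexp hpos.le,
    mul_le_mul_of_nonneg_left hpoint (mul_nonneg hpos.le hK)]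

/- The drift and the synchronous noise contribute `κ r²` times the slope, the reflected noise
`4 s²` times the curvature. -/
theorem couplingSlope_add_couplingCurvature_le {κ s : ℝ} (hκ : 0 ≤ κ) (hs : 0 < s) (hr : 0 < r) :
    κ * r ^ 2 * couplingSlope (1 + κ / (8 * s ^ 2)) r +
      4 * s ^ 2 * couplingCurvature (1 + κ / (8 * s ^ 2)) r ≤
        -(8 * s ^ 2 * Real.exp (-((1 + κ / (8 * s ^ 2)) * (r ^ 2 + 2 * r)))) := by
  set K := 1 + κ / (8 * s ^ 2) with hKdef
  have hK1 : 1 ≤ K := le_add_of_nonneg_right (by positivity)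
  have hKs : 8 * s ^ 2 * K = 8 * s ^ 2 + κ := by rw [hKdef]; field_simp
  have hpoly : κ * (2 * K * (r * (r + 1))) + 4 * s ^ 2 * (2 * K - 4 * K ^ 2 * (r + 1) ^ 2) ≤
      -(8 * s ^ 2) := by
    have hs2 : 0 < s ^ 2 := by positivity
    have hmul : K * (r + 1) ^ 2 * (8 * s ^ 2 * K) = K * (r + 1) ^ 2 * (8 * s ^ 2 + κ) := by rw [hKs]
    have h1 : 0 ≤ κ * K * (r + 1) := by positivity
    have h2 : s ^ 2 ≤ s ^ 2 * (K * (2 * (r + 1) ^ 2 - 1)) := by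
      refine le_mul_of_one_le_right hs2.le (one_le_mul_of_one_le_of_one_le hK1 ?_)
      nlinarith
    nlinarith
  calc _ = (κ * (2 * K * (r * (r + 1))) + 4 * s ^ 2 * (2 * K - 4 * K ^ 2 * (r + 1) ^ 2)) *
          Real.exp (-(K * (r ^ 2 + 2 * r))) := by
        rw [couplingSlope, couplingCurvature]
        field_simp
    _ ≤ -(8 * s ^ 2) * Real.exp (-(K * (r ^ 2 + 2 * r))) := by gcongr
    _ = _ := neg_mul _ _

end Cost
end Coupling

section Oscillation

open Filter Topology Submodule
open scoped InnerProductSpace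

variable {E : Type*} [NormedAddCommGroup E] [InnerProductSpace ℝ E] {P Q : E → ℝ} {x y : E}
  {K M : ℝ}

theorem fderiv_le_of_isMax_coupling (hP : ContDiff ℝ 2 P) (hQ : ContDiff ℝ 2 Q) (hK : 0 ≤ K)
    (hM : 0 ≤ M) (hxy : x ≠ y)
    (hmax : ∀ x' y', P x' - Q y' - M * couplingCost K ‖x' - y'‖ ≤
      P x - Q y - M * couplingCost K ‖x - y‖) (v w : E) :
    fderiv ℝ P x v - fderiv ℝ Q y w = M * (couplingSlope K ‖x - y‖ * ⟪x - y, v - w⟫_ℝ) ∧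
      fderiv ℝ (fderiv ℝ P) x v v - fderiv ℝ (fderiv ℝ Q) y w w ≤
        M * (couplingSlope K ‖x - y‖ * ‖v - w‖ ^ 2) := by
  set z := x - y
  set ζ := v - w
  set γ := couplingSlope K ‖z‖
  have hz : 0 < ‖z‖ := norm_pos_iff.2 (sub_ne_zero.2 hxy)
  have hχ (t : ℝ) : HasDerivAt
      (fun t => M * (couplingCost K ‖z‖ + γ * (t * ⟪z, ζ⟫_ℝ + t ^ 2 * (‖ζ‖ ^ 2 / 2))))
      (M * (γ * (⟪z, ζ⟫_ℝ + t * ‖ζ‖ ^ 2))) t := by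
    refine (((((hasDerivAt_id t).mul_const _).add ((hasDerivAt_pow 2 t).mul_const _)).const_mul
      γ).const_add _).const_mul M |>.congr_deriv ?_
    simp only [Nat.cast_ofNat, Nat.add_one_sub_one, pow_one]
    ring
  have hχ' : HasDerivAt (fun t => M * (γ * (⟪z, ζ⟫_ℝ + t * ‖ζ‖ ^ 2))) (M * (γ * ‖ζ‖ ^ 2)) 0 := by
    simpa using ((((hasDerivAt_id (0 : ℝ)).mul_const (‖ζ‖ ^ 2)).const_add ⟪z, ζ⟫_ℝ).const_mul
      γ).const_mul M
  have h := fderiv_le_of_isLocalMax_sub_sub hP hQ (x := x) (y := y) (v := v) (w := w)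
    (.of_forall hχ) hχ' (.of_forall fun t => ?_)
  · simpa using h
  have hnorm : ‖x + t • v - (y + t • w)‖ ^ 2 =
      ‖z‖ ^ 2 + 2 * (t * ⟪z, ζ⟫_ℝ + t ^ 2 * (‖ζ‖ ^ 2 / 2)) := by
    rw [show x + t • v - (y + t • w) = z + t • ζ by module, norm_add_sq_real, inner_smul_right,
      norm_smul, mul_pow, Real.norm_eq_abs, sq_abs]
    ring
  have htangent := mul_le_mul_of_nonneg_left
    (couplingCost_le_tangent hK hz ‖x + t • v - (y + t • w)‖) hM
  rw [hnorm] at htangent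
  have := hmax (x + t • v) (y + t • w)
  simp only [zero_smul, add_zero, zero_mul, ne_eq, OfNat.ofNat_ne_zero, not_false_eq_true,
    zero_pow, mul_zero]
  linarith

theorem reflection_orthogonal_singleton_apply (z v : E) :
    (ℝ ∙ z)ᗮ.reflection v = v - (2 * ⟪z, v⟫_ℝ / ‖z‖ ^ 2) • z := by
  rw [reflection_orthogonal_apply, reflection_singleton_apply, RCLike.ofReal_real_eq_id, id]
  module

theorem fderiv_fderiv_le_of_isMax_coupling (hP : ContDiff ℝ 2 P) (hQ : ContDiff ℝ 2 Q)
    (hxy : x ≠ y)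
    (hmax : ∀ x' y', P x' - Q y' - M * couplingCost K ‖x' - y'‖ ≤
      P x - Q y - M * couplingCost K ‖x - y‖) (v : E) :
    fderiv ℝ (fderiv ℝ P) x v v -
      fderiv ℝ (fderiv ℝ Q) y ((ℝ ∙ (x - y))ᗮ.reflection v) ((ℝ ∙ (x - y))ᗮ.reflection v) ≤
        4 * M * couplingCurvature K ‖x - y‖ / ‖x - y‖ ^ 2 * ⟪x - y, v⟫_ℝ ^ 2 := by
  set z := x - y with hz
  set r := ‖z‖
  set w := (ℝ ∙ z)ᗮ.reflection v
  set c := 2 * ⟪z, v⟫_ℝ / r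
  have hr : 0 < r := norm_pos_iff.2 (sub_ne_zero.2 hxy)
  have hline (t : ℝ) : HasDerivAt (fun t : ℝ => r + t * c) c t := by
    simpa using ((hasDerivAt_id t).mul_const c).const_add r
  have hχ (t : ℝ) := ((hasDerivAt_couplingCost K (r + t * c)).comp t (hline t)).const_mul M
  have hχ' := (((hasDerivAt_deriv_couplingCost K (r + 0 * c)).comp 0 (hline 0)).mul_const
    c).const_mul M
  have hnorm : ∀ᶠ t in 𝓝 (0 : ℝ), ‖x + t • v - (y + t • w)‖ = r + t * c := by
    have hpos : ∀ᶠ t in 𝓝 (0 : ℝ), 0 < r + t * c :=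
      (hline 0).continuousAt.eventually_const_lt (by simpa using hr)
    filter_upwards [hpos] with t ht
    have hcollinear : x + t • v - (y + t • w) = ((r + t * c) / r) • z := by
      have hcr : (r + t * c) / r = 1 + t * (2 * ⟪z, v⟫_ℝ / r ^ 2) := by
        simp only [c]
        field_simp
      rw [hcr, show w = _ from reflection_orthogonal_singleton_apply z v, hz]
      module
    rw [hcollinear, norm_smul, Real.norm_of_nonneg (by positivity), div_mul_cancel₀ _ hr.ne']
  refine (fderiv_le_of_isLocalMax_sub_sub hP hQ (.of_forall hχ) hχ' ?_).2.trans_eq ?_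
  · filter_upwards [hnorm] with t ht
    have := hmax (x + t • v) (y + t • w)
    rw [ht] at this
    simpa using this
  · simp only [c, zero_mul, add_zero]
    ring

theorem sum_orthonormalBasis_apply_apply_eq {ι κ : Type*} [Fintype ι] [Fintype κ]
    [FiniteDimensional ℝ E] (e : OrthonormalBasis ι ℝ E) (e' : OrthonormalBasis κ ℝ E)
    (T : E →L[ℝ] E →L[ℝ] ℝ) : ∑ k, T (e k) (e k) = ∑ k, T (e' k) (e' k) := by
  have hinner (v : E) :
      ⟪v, InnerProductSpace.continuousLinearMapOfBilin (𝕜 := ℝ) T v⟫_ℝ = T v v := by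
    rw [real_inner_comm, InnerProductSpace.continuousLinearMapOfBilin_apply]
  simpa [hinner] using (LinearMap.trace_eq_sum_inner
    (InnerProductSpace.continuousLinearMapOfBilin (𝕜 := ℝ) T).toLinearMap e).symm.trans
    (LinearMap.trace_eq_sum_inner _ e')

theorem diffusionGen_sub_le_of_isMax {ι κ' : Type*} [Fintype ι] [Fintype κ']
    (e : OrthonormalBasis ι ℝ E) {σ : κ' → E → E} {b : E → E} {s κ : ℝ} (hκ : 0 ≤ κ) (hs : 0 < s)
    (hmono : ⟪x - y, b x - b y⟫_ℝ + ∑ k, ‖σ k x - σ k y‖ ^ 2 ≤ κ * ‖x - y‖ ^ 2)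
    (hP : ContDiff ℝ 2 P) (hQ : ContDiff ℝ 2 Q) (hM : 0 ≤ M) (hxy : x ≠ y)
    (hmax : ∀ x' y', P x' - Q y' - M * couplingCost (1 + κ / (8 * s ^ 2)) ‖x' - y'‖ ≤
      P x - Q y - M * couplingCost (1 + κ / (8 * s ^ 2)) ‖x - y‖) :
    diffusionGen b (Sum.elim (fun k _ => s • e k) σ) P x -
      diffusionGen b (Sum.elim (fun k _ => s • e k) σ) Q y ≤
        -(M * (8 * s ^ 2 *
          Real.exp (-((1 + κ / (8 * s ^ 2)) * (‖x - y‖ ^ 2 + 2 * ‖x - y‖))))) := by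
  have : FiniteDimensional ℝ E := e.toBasis.finiteDimensional_of_finite
  set K := 1 + κ / (8 * s ^ 2)
  set r := ‖x - y‖
  have hr : 0 < r := norm_pos_iff.2 (sub_ne_zero.2 hxy)
  have hK : 0 ≤ K := by positivity
  have hslope : 0 ≤ couplingSlope K r := by rw [couplingSlope]; positivity
  have hdrift : fderiv ℝ P x (b x) - fderiv ℝ Q y (b y) =
      M * (couplingSlope K r * ⟪x - y, b x - b y⟫_ℝ) :=
    (fderiv_le_of_isMax_coupling hP hQ hK hM hxy hmax _ _).1
  have hsync : ∑ k, fderiv ℝ (fderiv ℝ P) x (σ k x) (σ k x) -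
      ∑ k, fderiv ℝ (fderiv ℝ Q) y (σ k y) (σ k y) ≤
        M * (couplingSlope K r * ∑ k, ‖σ k x - σ k y‖ ^ 2) := by
    rw [← Finset.sum_sub_distrib, Finset.mul_sum, Finset.mul_sum]
    exact Finset.sum_le_sum fun k _ => (fderiv_le_of_isMax_coupling hP hQ hK hM hxy hmax _ _).2
  have hreflect : ∑ k, fderiv ℝ (fderiv ℝ P) x (e k) (e k) -
      ∑ k, fderiv ℝ (fderiv ℝ Q) y (e k) (e k) ≤ 4 * M * couplingCurvature K r := by
    rw [sum_orthonormalBasis_apply_apply_eq e (e.map (ℝ ∙ (x - y))ᗮ.reflection)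
      (fderiv ℝ (fderiv ℝ Q) y), ← Finset.sum_sub_distrib]
    refine (Finset.sum_le_sum fun k _ =>
      fderiv_fderiv_le_of_isMax_coupling hP hQ hxy hmax (e k)).trans_eq ?_
    rw [← Finset.mul_sum, e.sum_sq_inner_left]
    exact div_mul_cancel₀ _ (by positivity)
  have hcost := mul_le_mul_of_nonneg_left (couplingSlope_add_couplingCurvature_le hκ hs hr) hM
  have hmono' := mul_le_mul_of_nonneg_left hmono (mul_nonneg hM hslope)
  have hreflect' := mul_le_mul_of_nonneg_left hreflect (sq_nonneg s)
  simp only [diffusionGen, Fintype.sum_sum_type, Sum.elim_inl, Sum.elim_inr, map_smul,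
    smul_apply, smul_eq_mul, ← mul_assoc, ← Finset.mul_sum, ← sq]
  linarith

end Oscillation

section LyapunovGenerator

open scoped InnerProductSpace

variable {E ι : Type*} [NormedAddCommGroup E] [InnerProductSpace ℝ E] [Fintype ι]
  {u w : E → ℝ} {b : E → E} {p : ι → E → E}

theorem fderiv_fderiv_add (hu : ContDiff ℝ 2 u) (hw : ContDiff ℝ 2 w) (x : E) :
    fderiv ℝ (fderiv ℝ (u + w)) x = fderiv ℝ (fderiv ℝ u) x + fderiv ℝ (fderiv ℝ w) x := by
  have hfun : fderiv ℝ (u + w) = fderiv ℝ u + fderiv ℝ w := funext fun y =>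
    fderiv_add (hu.differentiable two_ne_zero y) (hw.differentiable two_ne_zero y)
  rw [hfun]
  exact fderiv_add ((hu.fderiv_right (m := 1) le_rfl).differentiable one_ne_zero x)
    ((hw.fderiv_right (m := 1) le_rfl).differentiable one_ne_zero x)

theorem diffusionGen_add (hu : ContDiff ℝ 2 u) (hw : ContDiff ℝ 2 w) (x : E) :
    diffusionGen b p (u + w) x = diffusionGen b p u x + diffusionGen b p w x := by
  simp only [diffusionGen, fderiv_fderiv_add hu hw, add_apply, Finset.sum_add_distrib,
    fderiv_add (hu.differentiable two_ne_zero x) (hw.differentiable two_ne_zero x)]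
  ring

theorem diffusionGen_neg (u : E → ℝ) (x : E) : diffusionGen b p (-u) x = -diffusionGen b p u x := by
  have hfun : fderiv ℝ (-u) = -fderiv ℝ u := funext fun y => fderiv_neg
  simp only [diffusionGen, hfun, fderiv_neg, neg_apply, Finset.sum_neg_distrib]
  ring

theorem diffusionGen_sub (hu : ContDiff ℝ 2 u) (hw : ContDiff ℝ 2 w) (x : E) :
    diffusionGen b p (u - w) x = diffusionGen b p u x - diffusionGen b p w x := by
  rw [sub_eq_add_neg, diffusionGen_add hu (w := -w) hw.neg, diffusionGen_neg, sub_eq_add_neg]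

theorem contDiff_lyapunov : ContDiff ℝ 2 (lyapunov : E → ℝ) :=
  (contDiff_const.add (contDiff_norm_sq ℝ)).pow 2

theorem fderiv_lyapunov :
    fderiv ℝ (lyapunov : E → ℝ) = fun x => (4 * (1 + ‖x‖ ^ 2)) • innerSL ℝ x := by
  ext x v
  have h : HasFDerivAt (lyapunov : E → ℝ) _ x :=
    ((hasStrictFDerivAt_norm_sq x).hasFDerivAt.const_add 1).pow 2
  rw [h.fderiv]
  simp
  ring

theorem fderiv_fderiv_lyapunov_apply_self (x v : E) :
    fderiv ℝ (fderiv ℝ (lyapunov : E → ℝ)) x v v =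
      8 * ⟪x, v⟫_ℝ ^ 2 + 4 * (1 + ‖x‖ ^ 2) * ‖v‖ ^ 2 := by
  have hline : HasDerivAt (fun t : ℝ => x + t • v) v 0 := by
    simpa using ((hasDerivAt_id (0 : ℝ)).smul_const v).const_add x
  have h := hasDerivAt_fderiv_comp_add_smul contDiff_lyapunov x v
  simp only [fderiv_lyapunov, smul_apply, innerSL_apply_apply, smul_eq_mul] at h
  rw [fderiv_lyapunov, h.unique (((hline.norm_sq.const_add 1).const_mul 4).mul
    (hline.inner ℝ (hasDerivAt_const (0 : ℝ) v)))]
  simp only [zero_smul, add_zero, inner_zero_right, zero_add, real_inner_self_eq_norm_sq]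
  ring

theorem diffusionGen_lyapunov_le {β C S : ℝ} {x : E} (hβ : 0 < β)
    (hb : ⟪x, b x⟫_ℝ ≤ -β * ‖x‖ ^ 2 + C) (hp : ∑ k, ‖p k x‖ ^ 2 ≤ S) :
    diffusionGen b p lyapunov x ≤
      (12 * S + 4 * (β + C)) ^ 2 / (8 * β) - 2 * β * lyapunov x := by
  set q := 1 + ‖x‖ ^ 2 with hq
  have : 1 ≤ q := le_add_of_nonneg_right (sq_nonneg _)
  have hnoise : ∑ k, (8 * ⟪x, p k x⟫_ℝ ^ 2 + 4 * q * ‖p k x‖ ^ 2) ≤ 12 * q * S := by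
    calc _ ≤ ∑ k, 12 * q * ‖p k x‖ ^ 2 := Finset.sum_le_sum fun k _ => by
          have := sq_le_sq.2 ((abs_real_inner_le_norm x (p k x)).trans (le_abs_self _))
          nlinarith [sq_nonneg ‖p k x‖]
      _ = 12 * q * ∑ k, ‖p k x‖ ^ 2 := (Finset.mul_sum ..).symm
      _ ≤ _ := by gcongr
  have hdrift : 4 * q * ⟪x, b x⟫_ℝ ≤ 4 * q * (-β * (q - 1) + C) := by
    gcongr
    simpa [hq] using hb
  have hyoung : (12 * S + 4 * (β + C)) * q ≤
      (12 * S + 4 * (β + C)) ^ 2 / (8 * β) + 2 * β * q ^ 2 := by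
    rw [← sub_nonneg]
    calc 0 ≤ (12 * S + 4 * (β + C) - 4 * β * q) ^ 2 / (8 * β) := by positivity
      _ = _ := by field_simp; ring
  simp only [diffusionGen, fderiv_lyapunov, smul_apply, innerSL_apply_apply, smul_eq_mul]
  rw [← fderiv_lyapunov]
  simp only [fderiv_fderiv_lyapunov_apply_self, lyapunov, ← hq]
  linarith

theorem exists_isMax_coupling [FiniteDimensional ℝ E] {K M B : ℝ} (hK : 0 ≤ K) (hM : 0 ≤ M)
    (hu : Continuous u) (huB : ∀ x, |u x| ≤ B) :
    ∃ x y : E, ∀ x' y', u x' - lyapunov x' - (u y' + lyapunov y') - M * couplingCost K ‖x' - y'‖ ≤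
      u x - lyapunov x - (u y + lyapunov y) - M * couplingCost K ‖x - y‖ := by
  have hcont : Continuous fun z : E × E => u z.1 - lyapunov z.1 - (u z.2 + lyapunov z.2) -
      M * couplingCost K ‖z.1 - z.2‖ := by
    have := (contDiff_lyapunov (E := E)).continuous
    simp only [couplingCost]
    fun_prop
  have hcoercive : Filter.Tendsto (fun z : E × E => u z.1 - lyapunov z.1 - (u z.2 + lyapunov z.2) -
      M * couplingCost K ‖z.1 - z.2‖) (Filter.cocompact _) Filter.atBot := by
    refine Filter.tendsto_atBot_mono (fun z => ?_) (Filter.tendsto_atBot_add_const_left _ (2 * B)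
      (Filter.tendsto_neg_atTop_atBot.comp (tendsto_norm_cocompact_atTop (E := E × E))))
    have hnorm : ‖z‖ ≤ ‖z.1‖ + ‖z.2‖ := max_le_add_of_nonneg (norm_nonneg _) (norm_nonneg _)
    have hcost : 0 ≤ M * couplingCost K ‖z.1 - z.2‖ :=
      mul_nonneg hM (couplingCost_nonneg hK (norm_nonneg _))
    have h1 := abs_le.1 (huB z.1)
    have h2 := abs_le.1 (huB z.2)
    have h3 := norm_le_lyapunov z.1
    have h4 := norm_le_lyapunov z.2
    simp only [Function.comp_apply]
    linarith
  obtain ⟨⟨x, y⟩, hmax⟩ := hcont.exists_forall_ge hcoercive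
  exact ⟨x, y, fun x' y' => hmax (x', y')⟩

theorem lyapunov_add_exp_le_of_isMax {κ' : Type*} [Fintype κ'] (e : OrthonormalBasis ι ℝ E)
    {σ : κ' → E → E} {s κ β C N M lam : ℝ} {φ : E → ℝ} {x y : E} (hκ : 0 ≤ κ) (hs : 0 < s)
    (hmono : ⟪x - y, b x - b y⟫_ℝ + ∑ k, ‖σ k x - σ k y‖ ^ 2 ≤ κ * ‖x - y‖ ^ 2)
    (hV : ∀ x, diffusionGen b (Sum.elim (fun k _ => s • e k) σ) lyapunov x ≤
      C - 2 * β * lyapunov x) (hφ : ∀ x, |φ x| ≤ N) (hlam : 0 ≤ lam) (hu : ContDiff ℝ 2 u)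
    (hres : ∀ x, |diffusionGen b (Sum.elim (fun k _ => s • e k) σ) u x - lam * u x + φ x| ≤
      β * lyapunov x) (hM : 0 ≤ M) (hxy : x ≠ y) (huxy : u y ≤ u x)
    (hmax : ∀ x' y', u x' - lyapunov x' - (u y' + lyapunov y') -
        M * couplingCost (1 + κ / (8 * s ^ 2)) ‖x' - y'‖ ≤
      u x - lyapunov x - (u y + lyapunov y) - M * couplingCost (1 + κ / (8 * s ^ 2)) ‖x - y‖) :
    β * (lyapunov x + lyapunov y) + M * (8 * s ^ 2 *
      Real.exp (-((1 + κ / (8 * s ^ 2)) * (‖x - y‖ ^ 2 + 2 * ‖x - y‖)))) ≤ 2 * (N + C) := by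
  have hgen := diffusionGen_sub_le_of_isMax e hκ hs hmono (hu.sub contDiff_lyapunov)
    (hu.add contDiff_lyapunov) hM hxy hmax
  change diffusionGen _ _ (u - lyapunov) x - diffusionGen _ _ (u + lyapunov) y ≤ _ at hgen
  have hgenx := diffusionGen_sub (b := b) (p := Sum.elim (fun k _ => s • e k) σ) hu
    contDiff_lyapunov x
  have hgeny := diffusionGen_add (b := b) (p := Sum.elim (fun k _ => s • e k) σ) hu
    contDiff_lyapunov y
  have hlamu := mul_le_mul_of_nonneg_left huxy hlam
  have := abs_le.1 (hres x)
  have := abs_le.1 (hres y)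
  have := abs_le.1 (hφ x)
  have := abs_le.1 (hφ y)
  have := hV x
  have := hV y
  linarith

/- At a maximum of `(u - V)(x) - (u + V)(y) - M cost(x, y)` the Lyapunov drift bounds `|x - y|`, and
then the reflected noise bounds `M`. -/
theorem exists_forall_sub_le_lyapunov_add {κ' : Type*} [Fintype κ'] (e : OrthonormalBasis ι ℝ E)
    {σ : κ' → E → E} {s κ β C N : ℝ} {φ : E → ℝ} (hκ : 0 ≤ κ) (hs : 0 < s) (hβ : 0 < β)
    (hmono : ∀ x y, ⟪x - y, b x - b y⟫_ℝ + ∑ k, ‖σ k x - σ k y‖ ^ 2 ≤ κ * ‖x - y‖ ^ 2)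
    (hV : ∀ x, diffusionGen b (Sum.elim (fun k _ => s • e k) σ) lyapunov x ≤
      C - 2 * β * lyapunov x) (hφ : ∀ x, |φ x| ≤ N) :
    ∃ M, ∀ (lam B : ℝ) (u : E → ℝ), 0 ≤ lam → ContDiff ℝ 2 u → (∀ x, |u x| ≤ B) →
      (∀ x, |diffusionGen b (Sum.elim (fun k _ => s • e k) σ) u x - lam * u x + φ x| ≤
        β * lyapunov x) → ∀ x y, u x - u y ≤ lyapunov x + lyapunov y + M := by
  have : FiniteDimensional ℝ E := e.toBasis.finiteDimensional_of_finite
  set K := 1 + κ / (8 * s ^ 2)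
  set T := max 0 (2 * (N + C))
  set δ := 8 * s ^ 2 * Real.exp (-(K * ((T / β) ^ 2 + 2 * (T / β))))
  have hK : 0 ≤ K := by positivity
  have : 0 ≤ T := le_max_left ..
  have hδ : 0 < δ := by positivity
  have hM : 0 ≤ (T + 1) / δ := by positivity
  refine ⟨(T + 1) / δ, fun lam B u hlam hu huB hres => ?_⟩
  obtain ⟨x, y, hmax⟩ := exists_isMax_coupling hK hM hu.continuous huB
  suffices hnonpos : u x - lyapunov x - (u y + lyapunov y) -
      (T + 1) / δ * couplingCost K ‖x - y‖ ≤ 0 by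
    intro x' y'
    have := (hmax x' y').trans hnonpos
    have := mul_le_mul_of_nonneg_left (couplingCost_le_one K ‖x' - y'‖) hM
    linarith
  by_contra! hpos
  have hVx := one_le_lyapunov x
  have hVy := one_le_lyapunov y
  have hMcost := mul_nonneg hM (couplingCost_nonneg hK (norm_nonneg (x - y)))
  have hxy : x ≠ y := by rintro rfl; linarith
  have hbound := (lyapunov_add_exp_le_of_isMax e hκ hs (hmono x y) hV hφ hlam hu hres hM hxy
    (by linarith) hmax).trans (le_max_right 0 _)
  have hexp : δ ≤ 8 * s ^ 2 * Real.exp (-(K * (‖x - y‖ ^ 2 + 2 * ‖x - y‖))) := by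
    have hr : ‖x - y‖ ≤ T / β := by
      rw [le_div_iff₀' hβ]
      calc β * ‖x - y‖ ≤ β * (lyapunov x + lyapunov y) := by
            gcongr
            exact (norm_sub_le x y).trans (add_le_add (norm_le_lyapunov x) (norm_le_lyapunov y))
        _ ≤ T := (le_add_of_nonneg_right (by positivity)).trans hbound
    simp only [δ]
    gcongr
  have := mul_le_mul_of_nonneg_left hexp hM
  rw [div_mul_cancel₀ _ hδ.ne'] at this
  nlinarith

end LyapunovGenerator

section Poisson

open scoped InnerProductSpace

variable {E ι κ' : Type*} [NormedAddCommGroup E] [InnerProductSpace ℝ E]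
  [Fintype ι] [Fintype κ'] {b : E → E} {σ : κ' → E → E} {s β B C L M N ε : ℝ} {φ : E → ℝ}

theorem C11Bound.inner_sub_add_sum_norm_sub_sq_le (hb : C11Bound L b)
    (hσ : ∀ k, C11Bound L (σ k)) (x y : E) :
    ⟪x - y, b x - b y⟫_ℝ + ∑ k, ‖σ k x - σ k y‖ ^ 2 ≤
      (L + Fintype.card κ' * L ^ 2) * ‖x - y‖ ^ 2 := by
  have hdrift : ⟪x - y, b x - b y⟫_ℝ ≤ L * ‖x - y‖ ^ 2 := by
    calc _ ≤ ‖x - y‖ * ‖b x - b y‖ := real_inner_le_norm _ _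
      _ ≤ ‖x - y‖ * (L * ‖x - y‖) := by gcongr; exact hb.norm_sub_le x y
      _ = _ := by ring
  have hnoise : ∑ k, ‖σ k x - σ k y‖ ^ 2 ≤ ∑ _k : κ', (L * ‖x - y‖) ^ 2 := by
    gcongr with k
    exact (hσ k).norm_sub_le x y
  rw [Finset.sum_const, Finset.card_univ, nsmul_eq_mul] at hnoise
  linarith

theorem sum_norm_sq_sumElim_le (e : OrthonormalBasis ι ℝ E) (hσB : ∀ k x, ‖σ k x‖ ≤ B) (x : E) :
    ∑ k, ‖(Sum.elim (fun k _ => s • e k) σ : ι ⊕ κ' → E → E) k x‖ ^ 2 ≤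
      Fintype.card ι * s ^ 2 + Fintype.card κ' * B ^ 2 := by
  have hnoise : ∑ k, ‖σ k x‖ ^ 2 ≤ ∑ _k : κ', B ^ 2 := by
    gcongr with k
    exact hσB k x
  rw [Finset.sum_const, Finset.card_univ, nsmul_eq_mul] at hnoise
  simpa [norm_smul] using hnoise

variable [MeasurableSpace E] [BorelSpace E]

/- The oscillation of the resolvent equation's solutions stays bounded as the discount vanishes, so
the discounted term tends to a constant. -/
theorem exists_approx_poisson [Nonempty ι] (e : OrthonormalBasis ι ℝ E) (hs : 0 < s)
    (hb : C11Bound L b) (hσ : ∀ k, C11Bound L (σ k)) (hσB : ∀ k x, ‖σ k x‖ ≤ B) (hβ : 0 < β)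
    (hdiss : ∀ x, ⟪x, b x⟫_ℝ ≤ -β * ‖x‖ ^ 2 + C) (hφ : C11Bound M φ) (hφN : ∀ x, |φ x| ≤ N)
    (hε : 0 < ε) :
    ∃ M' B' c, ∃ w : E → ℝ, ContDiff ℝ 2 w ∧ C11Bound M' w ∧ (∀ x, |w x| ≤ B') ∧
      ∀ x, |diffusionGen b (Sum.elim (fun k _ => s • e k) σ) w x + φ x - c| ≤
        ε * lyapunov x := by
  have : FiniteDimensional ℝ E := e.toBasis.finiteDimensional_of_finite
  have hL := hb.nonneg
  obtain ⟨R, hR⟩ := exists_forall_sub_le_lyapunov_add e (by positivity) hs hβ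
    (hb.inner_sub_add_sum_norm_sub_sq_le hσ)
    (fun x => diffusionGen_lyapunov_le hβ (hdiss x) (sum_norm_sq_sumElim_le e hσB x)) hφN
  have hV0 := one_le_lyapunov (0 : E)
  set lam := ε / (2 * (|R| + lyapunov (0 : E) + 1)) with hlamdef
  have hlam : 0 < lam := by positivity
  have hlamε : lam * (|R| + lyapunov (0 : E) + 1) = ε / 2 := by rw [hlamdef]; field_simp
  have hpC (k : ι ⊕ κ') : C11Bound L ((Sum.elim (fun k _ => s • e k) σ : ι ⊕ κ' → E → E) k) := by
    rcases k with k | k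
    · exact (C11Bound.const (s • e k)).mono hL
    · exact hσ k
  have hpB (k : ι ⊕ κ') (x : E) :
      ‖(Sum.elim (fun k _ => s • e k) σ : ι ⊕ κ' → E → E) k x‖ ≤ max s B := by
    rcases k with k | k
    · simp [norm_smul, abs_of_pos hs]
    · exact (hσB k x).trans (le_max_right ..)
  obtain ⟨M', w, hw, hwM, hwN, hres⟩ := exists_approx_resolvent hb hpC hpB hφ hφN hlam
    (by positivity : 0 < min β (ε / 2))
  refine ⟨M', N / lam, lam * w 0, w, hw, hwM, hwN, fun x => ?_⟩
  have hV := one_le_lyapunov x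
  have hosc := hR lam (N / lam) w hlam.le hw hwN fun x => (hres x).trans (by
    gcongr
    exacts [zero_le_one.trans (one_le_lyapunov x), min_le_left ..])
  have hweight : lam * (lyapunov x + lyapunov (0 : E) + R) ≤ ε / 2 * lyapunov x := by
    rw [← hlamε, mul_assoc]
    gcongr
    nlinarith [le_abs_self R, abs_nonneg R, mul_le_mul_of_nonneg_left hV (by positivity :
      0 ≤ |R| + lyapunov (0 : E))]
  have hup := mul_le_mul_of_nonneg_left (hosc x 0) hlam.le
  have hdown := mul_le_mul_of_nonneg_left (hosc 0 x) hlam.le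
  have hresx := abs_le.1 ((hres x).trans (mul_le_mul_of_nonneg_right (min_le_right ..)
    (zero_le_one.trans hV)))
  rw [abs_le]
  constructor <;> linarith

end Poisson

section BinomialSeries

variable {𝔸 : Type*} [NormedRing 𝔸] [NormedAlgebra ℝ 𝔸] {B : 𝔸}

theorem one_le_radius_binomialSeries (a : ℝ) : 1 ≤ (binomialSeries 𝔸 a).radius := by
  refine ENNReal.le_of_forall_nnreal_lt fun r hr =>
    FormalMultilinearSeries.le_radius_of_summable_norm _ ?_
  have hscalar := (binomialSeries ℝ a).summable_norm_mul_pow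
    (hr.trans_le binomialSeries_radius_ge_one)
  refine hscalar.of_norm_bounded_eventually_nat ?_
  filter_upwards [Filter.eventually_gt_atTop 0] with n hn
  rw [norm_mul, norm_norm, norm_pow, NNReal.norm_eq]
  gcongr
  have hnorm : ‖binomialSeries ℝ a n‖ = ‖Ring.choose a n‖ :=
    FormalMultilinearSeries.ofScalars_norm ..
  rw [hnorm]
  exact FormalMultilinearSeries.ofScalars_norm_le 𝔸 _ n hn

/-- The square root of `1 + B` in a Banach algebra, given for `‖B‖ < 1` by the binomial series. -/
def sqrtOneAdd (B : 𝔸) : 𝔸 := (binomialSeries 𝔸 (1 / 2 : ℝ)).sum B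

theorem sqrtOneAdd_eq_tsum (B : 𝔸) : sqrtOneAdd B = ∑' n, Ring.choose (1 / 2 : ℝ) n • B ^ n :=
  FormalMultilinearSeries.ofScalars_sum_eq _ B

theorem isSelfAdjoint_sqrtOneAdd [StarRing 𝔸] [ContinuousStar 𝔸] [StarModule ℝ 𝔸]
    (hB : IsSelfAdjoint B) : IsSelfAdjoint (sqrtOneAdd B) := by
  rw [IsSelfAdjoint, sqrtOneAdd_eq_tsum, tsum_star]
  exact tsum_congr fun n => ((IsSelfAdjoint.all _).smul (hB.pow n)).star_eq

variable [CompleteSpace 𝔸]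

theorem contDiffOn_sqrtOneAdd {n : WithTop ℕ∞} :
    ContDiffOn ℝ n (sqrtOneAdd : 𝔸 → 𝔸) (Metric.ball 0 1) := by
  have hradius := one_le_radius_binomialSeries (𝔸 := 𝔸) (1 / 2)
  rw [← Metric.eball_ofReal, ENNReal.ofReal_one]
  exact ((FormalMultilinearSeries.hasFPowerSeriesOnBall _
    (zero_lt_one.trans_le hradius)).analyticOnNhd.mono
      (Metric.eball_subset_eball hradius)).contDiffOn Metric.isOpen_eball.uniqueDiffOn

theorem sqrtOneAdd_mul_self (hB : ‖B‖ < 1) : sqrtOneAdd B * sqrtOneAdd B = 1 + B := by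
  have hsummable : Summable fun n => ‖Ring.choose (1 / 2 : ℝ) n • B ^ n‖ := by
    have := (binomialSeries 𝔸 (1 / 2 : ℝ)).summable_norm_apply (x := B) (by
      refine Metric.eball_subset_eball (one_le_radius_binomialSeries _) ?_
      simpa [← ENNReal.ofReal_one, Metric.eball_ofReal] using hB)
    simpa using this
  have hcoeff (n : ℕ) : ∑ ij ∈ Finset.HasAntidiagonal.antidiagonal n,
      (Ring.choose (1 / 2 : ℝ) ij.1 • B ^ ij.1) * (Ring.choose (1 / 2 : ℝ) ij.2 • B ^ ij.2) =
        (Nat.choose 1 n : ℝ) • B ^ n := by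
    have hvandermonde := Ring.add_choose_eq n (Commute.all (1 / 2 : ℝ) (1 / 2))
    rw [add_halves] at hvandermonde
    rw [← Ring.choose_natCast, Nat.cast_one, hvandermonde, Finset.sum_smul]
    refine Finset.sum_congr rfl fun ij hij => ?_
    rw [smul_mul_smul_comm, ← pow_add, Finset.HasAntidiagonal.mem_antidiagonal.1 hij]
  rw [sqrtOneAdd_eq_tsum, tsum_mul_tsum_eq_tsum_sum_antidiagonal_of_summable_norm hsummable
    hsummable, tsum_congr hcoeff, tsum_eq_sum (s := Finset.range 2) fun n hn => by
      rw [Nat.choose_eq_zero_of_lt (by simpa using hn)]; simp]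
  simp [Finset.sum_range_succ]

end BinomialSeries

section SquareRoot

variable {E F G : Type*} [NormedAddCommGroup E] [NormedSpace ℝ E] [NormedAddCommGroup F]
  [NormedSpace ℝ F] [NormedAddCommGroup G] [NormedSpace ℝ G] {M : ℝ}

theorem C11Bound.clm_comp {g : E → F} (hg : C11Bound M g) (ℓ : F →L[ℝ] G) :
    C11Bound (‖ℓ‖ * M) fun x => ℓ (g x) := by
  have hfderiv (x : E) : fderiv ℝ (fun x => ℓ (g x)) x = ℓ.comp (fderiv ℝ g x) :=
    (ℓ.hasFDerivAt.comp x (hg.differentiable x).hasFDerivAt).fderiv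
  refine ⟨ℓ.differentiable.comp hg.differentiable, fun x => ?_, fun x y => ?_⟩
  · rw [hfderiv]
    exact (ℓ.opNorm_comp_le _).trans (by gcongr; exact hg.norm_fderiv_le x)
  · rw [hfderiv, hfderiv, ← ContinuousLinearMap.comp_sub, mul_assoc]
    exact (ℓ.opNorm_comp_le _).trans (by gcongr; exact hg.norm_fderiv_sub_le x y)

theorem norm_comp_sub_comp_le (S S' : F →L[ℝ] G) (T T' : E →L[ℝ] F) :
    ‖S.comp T - S'.comp T'‖ ≤ ‖S‖ * ‖T - T'‖ + ‖S - S'‖ * ‖T'‖ := by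
  have hsplit : S.comp T - S'.comp T' = S.comp (T - T') + (S - S').comp T' := by
    rw [ContinuousLinearMap.comp_sub, ContinuousLinearMap.sub_comp, sub_add_sub_cancel]
  rw [hsplit]
  exact norm_add_le_of_le (S.opNorm_comp_le _) ((S - S').opNorm_comp_le _)

theorem C11Bound.exists_comp_contDiffOn {g : E → F} {f : F → G} {s t : Set F} (hg : C11Bound M g)
    (hs : IsOpen s) (hf : ContDiffOn ℝ 2 f s) (ht : IsCompact t) (htc : Convex ℝ t) (hts : t ⊆ s)
    (hgt : ∀ x, g x ∈ t) : ∃ N, C11Bound N (f ∘ g) := by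
  have hf' := hf.fderiv_of_isOpen hs (m := 1) le_rfl
  obtain ⟨C, hC⟩ := ht.exists_bound_of_continuousOn (hf'.continuousOn.mono hts)
  obtain ⟨C', hC'⟩ := ht.exists_bound_of_continuousOn
    ((hf'.continuousOn_fderiv_of_isOpen hs le_rfl).mono hts)
  have hfd (z : F) (hz : z ∈ t) : DifferentiableAt ℝ f z :=
    (hf.differentiableOn two_ne_zero).differentiableAt (hs.mem_nhds (hts hz))
  have hfderiv (x : E) : fderiv ℝ (f ∘ g) x = (fderiv ℝ f (g x)).comp (fderiv ℝ g x) :=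
    fderiv_comp x (hfd _ (hgt x)) (hg.differentiable x)
  have hlip (x y : E) : ‖fderiv ℝ f (g x) - fderiv ℝ f (g y)‖ ≤ C' * (M * ‖x - y‖) := by
    have hC'0 : 0 ≤ C' := (norm_nonneg _).trans (hC' _ (hgt x))
    refine (htc.norm_image_sub_le_of_norm_fderiv_le (fun z hz =>
      (hf'.differentiableOn one_ne_zero).differentiableAt (hs.mem_nhds (hts hz))) hC' (hgt y)
      (hgt x)).trans ?_
    gcongr
    exact hg.norm_sub_le x y
  have hC (x : E) : ‖fderiv ℝ f (g x)‖ ≤ C := hC _ (hgt x)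
  have := hg.nonneg
  refine ⟨max (C * M) (C * M + C' * M * M), fun x => ?_, fun x => ?_, fun x y => ?_⟩
  · exact (hfd _ (hgt x)).comp x (hg.differentiable x)
  · rw [hfderiv]
    refine (ContinuousLinearMap.opNorm_comp_le _ _).trans (le_max_of_le_left ?_)
    gcongr
    exacts [(norm_nonneg _).trans (hC x), hC x, hg.norm_fderiv_le x]
  · calc ‖fderiv ℝ (f ∘ g) x - fderiv ℝ (f ∘ g) y‖
        ≤ ‖fderiv ℝ f (g x)‖ * ‖fderiv ℝ g x - fderiv ℝ g y‖ +
            ‖fderiv ℝ f (g x) - fderiv ℝ f (g y)‖ * ‖fderiv ℝ g y‖ := by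
          rw [hfderiv, hfderiv]
          exact norm_comp_sub_comp_le _ _ _ _
      _ ≤ C * (M * ‖x - y‖) + C' * (M * ‖x - y‖) * M := by
          have := (norm_nonneg _).trans (hC x)
          have := (norm_nonneg _).trans (hlip x y)
          gcongr
          exacts [hC x, hg.norm_fderiv_sub_le x y, hlip x y, hg.norm_fderiv_le y]
      _ = (C * M + C' * M * M) * ‖x - y‖ := by ring
      _ ≤ _ := by gcongr; exact le_max_right _ _

end SquareRoot

section SymmetricOperators

variable {X E : Type*} [NormedAddCommGroup X] [NormedSpace ℝ X] [NormedAddCommGroup E]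
  [InnerProductSpace ℝ E] {A : E →L[ℝ] E} {l r Λ : ℝ}

theorem norm_le_of_abs_inner_le (hA : A.IsSymmetric) (hr : 0 ≤ r)
    (h : ∀ v, |inner ℝ (A v) v| ≤ r * ‖v‖ ^ 2) : ‖A‖ ≤ r := by
  rw [ContinuousLinearMap.norm_eq_iSup_rayleighQuotient _ hA]
  refine ciSup_le fun v => ?_
  rw [ContinuousLinearMap.rayleighQuotient, abs_div, abs_sq]
  exact div_le_of_le_mul₀ (sq_nonneg _) hr (h v)

theorem norm_inv_smul_sub_smul_one_sub_one_le [CompleteSpace E] (hA : IsSelfAdjoint A) (hl : 0 < l)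
    (hlower : ∀ v, l * ‖v‖ ^ 2 ≤ inner ℝ (A v) v) (hupper : ∀ v, inner ℝ (A v) v ≤ Λ * ‖v‖ ^ 2)
    (hlΛ : l ≤ Λ) : ‖Λ⁻¹ • (A - (l / 2) • 1) - 1‖ ≤ 1 - l / (2 * Λ) := by
  have hΛ : 0 < Λ := hl.trans_le hlΛ
  have hself : IsSelfAdjoint (Λ⁻¹ • (A - (l / 2) • 1) - 1) :=
    ((IsSelfAdjoint.all Λ⁻¹).smul (hA.sub ((IsSelfAdjoint.all _).smul (.one _)))).sub (.one _)
  refine norm_le_of_abs_inner_le hself.isSymmetric ?_ fun v => ?_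
  · rw [sub_nonneg, div_le_one (by positivity)]
    linarith
  · have hinner : inner ℝ ((Λ⁻¹ • (A - (l / 2) • 1) - 1 : E →L[ℝ] E) v) v =
        (inner ℝ (A v) v - l / 2 * ‖v‖ ^ 2 - Λ * ‖v‖ ^ 2) / Λ := by
      simp [inner_sub_left, inner_smul_left]
      field_simp
    have hratio : (1 - l / (2 * Λ)) * ‖v‖ ^ 2 = (Λ * ‖v‖ ^ 2 - l / 2 * ‖v‖ ^ 2) / Λ := by
      field_simp
    rw [hinner, hratio, abs_div, abs_of_pos hΛ]
    gcongr
    rw [abs_le]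
    constructor <;> linarith [hlower v, hupper v, mul_nonneg hl.le (sq_nonneg ‖v‖)]

theorem C11Bound.exists_sqrtOneAdd [FiniteDimensional ℝ E] {B : X → E →L[ℝ] E} {M : ℝ}
    (hB : C11Bound M B) (hr : r < 1) (hBr : ∀ x, ‖B x‖ ≤ r) :
    ∃ N, C11Bound N (fun x => sqrtOneAdd (B x)) ∧ ∀ x, ‖sqrtOneAdd (B x)‖ ≤ N := by
  have hBmem (x : X) : B x ∈ Metric.closedBall 0 r := mem_closedBall_zero_iff.2 (hBr x)
  have hsub : Metric.closedBall (0 : E →L[ℝ] E) r ⊆ Metric.ball 0 1 :=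
    Metric.closedBall_subset_ball hr
  obtain ⟨N, hN⟩ := hB.exists_comp_contDiffOn Metric.isOpen_ball contDiffOn_sqrtOneAdd
    (isCompact_closedBall 0 r) (convex_closedBall 0 r) hsub hBmem
  obtain ⟨C, hC⟩ := (isCompact_closedBall (0 : E →L[ℝ] E) r).exists_bound_of_continuousOn
    ((contDiffOn_sqrtOneAdd (n := 0)).continuousOn.mono hsub)
  exact ⟨max N C, hN.mono (le_max_left ..), fun x => (hC _ (hBmem x)).trans (le_max_right ..)⟩

theorem C11Bound.exists_sqrt_factorization [FiniteDimensional ℝ E] {A : X → E →L[ℝ] E}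
    {M : ℝ} (hA : C11Bound M A) (hsymm : ∀ x, IsSelfAdjoint (A x)) (hl : 0 < l)
    (hlower : ∀ x v, l * ‖v‖ ^ 2 ≤ inner ℝ (A x v) v)
    (hupper : ∀ x v, inner ℝ (A x v) v ≤ Λ * ‖v‖ ^ 2) (hlΛ : l ≤ Λ) :
    ∃ N T, C11Bound N T ∧ (∀ x, ‖T x‖ ≤ N) ∧ (∀ x, IsSelfAdjoint (T x)) ∧
      ∀ x, A x = (l / 2) • (1 : E →L[ℝ] E) + T x * T x := by
  have hΛ : 0 < Λ := hl.trans_le hlΛ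
  set B : X → E →L[ℝ] E := Λ⁻¹ • (A + fun _ => -(l / 2) • 1) + fun _ => -1
  have hBeq (x : X) : B x = Λ⁻¹ • (A x - (l / 2) • 1) - 1 := by
    simp [B, sub_eq_add_neg]
  have hBself (x : X) : IsSelfAdjoint (B x) := by
    rw [hBeq]
    exact ((IsSelfAdjoint.all Λ⁻¹).smul ((hsymm x).sub
      ((IsSelfAdjoint.all _).smul (.one _)))).sub (.one _)
  have hr : 1 - l / (2 * Λ) < 1 := sub_lt_self _ (by positivity)
  have hBr (x : X) : ‖B x‖ ≤ 1 - l / (2 * Λ) := by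
    rw [hBeq]
    exact norm_inv_smul_sub_smul_one_sub_one_le (hsymm x) hl (hlower x) (hupper x) hlΛ
  have hB : C11Bound (|Λ⁻¹| * (M + 0) + 0) B :=
    ((hA.add (C11Bound.const _)).const_smul _).add (C11Bound.const _)
  obtain ⟨N, hN, hNbound⟩ := hB.exists_sqrtOneAdd hr hBr
  refine ⟨|√Λ| * N, √Λ • fun x => sqrtOneAdd (B x), hN.const_smul _, fun x => ?_, fun x => ?_,
    fun x => ?_⟩
  · rw [Pi.smul_apply, norm_smul, Real.norm_eq_abs]
    gcongr
    exact hNbound x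
  · have hroot : IsSelfAdjoint (sqrtOneAdd (B x)) := isSelfAdjoint_sqrtOneAdd (hBself x)
    exact IsSelfAdjoint.smul (r := √Λ) (IsSelfAdjoint.all (√Λ)) hroot
  · rw [Pi.smul_apply, smul_mul_smul_comm, Real.mul_self_sqrt hΛ.le,
      sqrtOneAdd_mul_self ((hBr x).trans_lt hr), hBeq, add_sub_cancel, smul_inv_smul₀ hΛ.ne',
      add_sub_cancel]

theorem sum_apply_apply_eq_sum_inner_mul {ι : Type*} [Fintype ι] (e : OrthonormalBasis ι ℝ E)
    (S : E →L[ℝ] E →L[ℝ] ℝ) {T : E →L[ℝ] E} (hT : T.IsSymmetric) :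
    ∑ k, S (T (e k)) (T (e k)) = ∑ i, ∑ j, inner ℝ (e i) (T (T (e j))) * S (e i) (e j) := by
  have hexpand (k : ι) : S (T (e k)) (T (e k)) =
      ∑ i, ∑ j, inner ℝ (T (e i)) (e k) * inner ℝ (e k) (T (e j)) * S (e i) (e j) := by
    calc S (T (e k)) (T (e k))
        = S (∑ i, inner ℝ (e i) (T (e k)) • e i) (∑ j, inner ℝ (e j) (T (e k)) • e j) := by
          rw [e.sum_repr']
      _ = _ := by
          simp only [map_sum, map_smul, sum_apply, smul_apply, smul_eq_mul, Finset.mul_sum]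
          rw [Finset.sum_comm]
          refine Finset.sum_congr rfl fun i _ => Finset.sum_congr rfl fun j _ => ?_
          have hik : inner ℝ (T (e i)) (e k) = inner ℝ (e i) (T (e k)) := hT _ _
          have hjk : inner ℝ (e k) (T (e j)) = inner ℝ (e j) (T (e k)) := by
            rw [real_inner_comm]; exact hT _ _
          rw [hik, hjk]
          ring
  simp only [hexpand]
  rw [Finset.sum_comm]
  refine Finset.sum_congr rfl fun i _ => ?_
  rw [Finset.sum_comm]
  refine Finset.sum_congr rfl fun j _ => ?_
  rw [← Finset.sum_mul, e.sum_inner_mul_inner]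
  congr 1
  exact hT _ _

end SymmetricOperators

section Coordinates

namespace C11Bound

variable {E F G : Type*} [NormedAddCommGroup E] [NormedSpace ℝ E] [NormedAddCommGroup F]
  [NormedSpace ℝ F] [NormedAddCommGroup G] [NormedSpace ℝ G] {M : ℝ} {g : E → F}

theorem of_iteratedFDeriv (hg : ContDiff ℝ 2 g) (h1 : ∀ x, ‖iteratedFDeriv ℝ 1 g x‖ ≤ M)
    (h2 : ∀ x, ‖iteratedFDeriv ℝ 2 g x‖ ≤ M) : C11Bound M g where
  differentiable := hg.differentiable two_ne_zero
  norm_fderiv_le x := by simpa [norm_iteratedFDeriv_one] using h1 x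
  norm_fderiv_sub_le x y := by
    refine convex_univ.norm_image_sub_le_of_norm_fderiv_le
      (fun z _ => (hg.fderiv_right (m := 1) le_rfl).differentiable one_ne_zero z) (fun z _ => ?_)
      (Set.mem_univ y) (Set.mem_univ x)
    rw [← norm_iteratedFDeriv_one, norm_iteratedFDeriv_fderiv]
    exact h2 z

theorem clm_apply {T : E → F →L[ℝ] G} {v : F} (hT : C11Bound M T) (hv : ‖v‖ ≤ 1) :
    C11Bound M fun x => T x v := by
  refine (hT.clm_comp (ContinuousLinearMap.apply ℝ G v)).mono
    (mul_le_of_le_one_left hT.nonneg ?_)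
  refine ContinuousLinearMap.opNorm_le_bound _ zero_le_one fun S => ?_
  rw [ContinuousLinearMap.apply_apply, one_mul]
  exact S.le_of_opNorm_le_of_le le_rfl hv |>.trans_eq (mul_one _)

theorem comp_clm (hg : C11Bound M g) (ℓ : G →L[ℝ] E) :
    C11Bound (M * ‖ℓ‖ * max 1 ‖ℓ‖) fun x => g (ℓ x) := by
  have hM := hg.nonneg
  have hfderiv (x : G) : fderiv ℝ (fun x => g (ℓ x)) x = (fderiv ℝ g (ℓ x)).comp ℓ :=
    ((hg.differentiable (ℓ x)).hasFDerivAt.comp x ℓ.hasFDerivAt).fderiv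
  refine ⟨hg.differentiable.comp ℓ.differentiable, fun x => ?_, fun x y => ?_⟩
  · rw [hfderiv]
    refine (ContinuousLinearMap.opNorm_comp_le _ _).trans ?_
    calc ‖fderiv ℝ g (ℓ x)‖ * ‖ℓ‖ ≤ M * ‖ℓ‖ := by gcongr; exact hg.norm_fderiv_le _
      _ ≤ M * ‖ℓ‖ * max 1 ‖ℓ‖ := le_mul_of_one_le_right (by positivity) (le_max_left ..)
  · rw [hfderiv, hfderiv, ← ContinuousLinearMap.sub_comp]
    refine (ContinuousLinearMap.opNorm_comp_le _ _).trans ?_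
    calc ‖fderiv ℝ g (ℓ x) - fderiv ℝ g (ℓ y)‖ * ‖ℓ‖
        ≤ M * (‖ℓ‖ * ‖x - y‖) * ‖ℓ‖ := by
          gcongr
          refine (hg.norm_fderiv_sub_le _ _).trans ?_
          gcongr
          rw [← map_sub]
          exact ℓ.le_opNorm _
      _ = M * ‖ℓ‖ * ‖ℓ‖ * ‖x - y‖ := by ring
      _ ≤ M * ‖ℓ‖ * max 1 ‖ℓ‖ * ‖x - y‖ := by gcongr; exact le_max_right ..

theorem sum_smul {ι : Type*} [Fintype ι] {M : ι → ℝ} {g : ι → E → ℝ}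
    (hg : ∀ i, C11Bound (M i) (g i)) (w : ι → F) :
    ∃ N, C11Bound N fun x => ∑ i, g i x • w i := by
  have h := C11Bound.sum Finset.univ fun i _ =>
    (hg i).clm_comp (ContinuousLinearMap.toSpanSingleton ℝ (w i))
  exact ⟨_, by simpa only [Finset.sum_fn, ContinuousLinearMap.toSpanSingleton_apply] using h⟩

variable {d : ℕ} {φ : (Fin d → ℝ) → ℝ} {N : ℝ}

theorem cbTwo (hφ : C11Bound M φ) (hφ2 : ContDiff ℝ 2 φ) (hφN : ∀ x, |φ x| ≤ N) : CbTwo φ := by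
  refine ⟨hφ2, max M N, fun x => ⟨(hφN x).trans (le_max_right ..), ?_, ?_⟩⟩
  · rw [norm_iteratedFDeriv_one]
    exact (hφ.norm_fderiv_le x).trans (le_max_left ..)
  · rw [← norm_iteratedFDeriv_fderiv (n := 1), norm_iteratedFDeriv_one]
    exact (hφ.norm_fderiv_fderiv_le x).trans (le_max_left ..)

end C11Bound

theorem exists_norm_iteratedFDeriv_le_of_hasCompactSupport {E F : Type*} [NormedAddCommGroup E]
    [NormedSpace ℝ E] [NormedAddCommGroup F] [NormedSpace ℝ F] {φ : E → F}
    (hsupp : HasCompactSupport φ) {n : ℕ} (hφ : ContDiff ℝ n φ) :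
    ∃ B, 0 ≤ B ∧ ∀ k ≤ n, ∀ y, ‖iteratedFDeriv ℝ k φ y‖ ≤ B := by
  have hbdd (k : Finset.range (n + 1)) : ∃ B, ∀ y, ‖iteratedFDeriv ℝ k φ y‖ ≤ B :=
    (hφ.continuous_iteratedFDeriv (Nat.cast_le.2 (Finset.mem_range_succ_iff.1 k.2))
      ).bounded_above_of_compact_support (hsupp.iteratedFDeriv k)
  choose B hB using hbdd
  refine ⟨∑ k, |B k|, by positivity, fun k hk y => ?_⟩
  exact ((hB ⟨k, Finset.mem_range_succ_iff.2 hk⟩ y).trans (le_abs_self _)).trans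
    (Finset.single_le_sum (f := fun k => |B k|) (fun _ _ => abs_nonneg _) (Finset.mem_univ _))

theorem exists_c11Bound_of_hasCompactSupport {E F : Type*} [NormedAddCommGroup E] [NormedSpace ℝ E]
    [NormedAddCommGroup F] [NormedSpace ℝ F] {φ : E → F} (hφ : ContDiff ℝ 2 φ)
    (hsupp : HasCompactSupport φ) : ∃ M, C11Bound M φ := by
  obtain ⟨B, -, hB⟩ := exists_norm_iteratedFDeriv_le_of_hasCompactSupport hsupp hφ
  exact ⟨B, C11Bound.of_iteratedFDeriv hφ (hB 1 one_le_two) (hB 2 le_rfl)⟩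

variable {d : ℕ}

theorem pd2_eq {φ : (Fin d → ℝ) → ℝ} (hφ : ContDiff ℝ 2 φ) (y : Fin d → ℝ) (i j : Fin d) :
    pd2 φ y i j = fderiv ℝ (fderiv ℝ φ) y (Pi.single i 1) (Pi.single j 1) := by
  rw [pd2, fderiv_clm_apply ((hφ.fderiv_right (m := 1) le_rfl).differentiable one_ne_zero y)
    (differentiableAt_const _)]
  simp

theorem fderiv_fderiv_comp_clm {E F : Type*} [NormedAddCommGroup E] [NormedSpace ℝ E]
    [NormedAddCommGroup F] [NormedSpace ℝ F] {w : F → ℝ} (hw : ContDiff ℝ 2 w) (ℓ : E →L[ℝ] F)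
    (y v v' : E) : fderiv ℝ (fderiv ℝ fun z => w (ℓ z)) y v v' =
      fderiv ℝ (fderiv ℝ w) (ℓ y) (ℓ v) (ℓ v') := by
  have hfderiv : (fderiv ℝ fun z => w (ℓ z)) = fun z => (fderiv ℝ w (ℓ z)).comp ℓ :=
    funext fun z =>
      ((hw.differentiable two_ne_zero (ℓ z)).hasFDerivAt.comp z ℓ.hasFDerivAt).fderiv
  have hw' : DifferentiableAt ℝ (fderiv ℝ w) (ℓ y) :=
    (hw.fderiv_right (m := 1) le_rfl).differentiable one_ne_zero _
  have hcomp : HasFDerivAt (fun z => fderiv ℝ w (ℓ z)) ((fderiv ℝ (fderiv ℝ w) (ℓ y)).comp ℓ) y :=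
    hw'.hasFDerivAt.comp y ℓ.hasFDerivAt
  rw [hfderiv, (hcomp.clm_comp (hasFDerivAt_const ℓ y)).fderiv]
  simp

theorem genL_comp_toLp (f : (Fin d → ℝ) → Fin d → ℝ)
    (a : (Fin d → ℝ) → Fin d → Fin d → ℝ) {w : EuclideanSpace ℝ (Fin d) → ℝ}
    (hw : ContDiff ℝ 2 w) (y : Fin d → ℝ) :
    genL f a (fun z => w (WithLp.toLp 2 z)) y =
      fderiv ℝ w (WithLp.toLp 2 y) (WithLp.toLp 2 (f y)) +
        ∑ i, ∑ j, a y i j * fderiv ℝ (fderiv ℝ w) (WithLp.toLp 2 y)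
          (EuclideanSpace.basisFun _ ℝ i) (EuclideanSpace.basisFun _ ℝ j) := by
  set ℓ : (Fin d → ℝ) →L[ℝ] EuclideanSpace ℝ (Fin d) :=
    (PiLp.continuousLinearEquiv 2 ℝ fun _ : Fin d => ℝ).symm.toContinuousLinearMap
  have hℓ (i : Fin d) : ℓ (Pi.single i 1) = EuclideanSpace.basisFun _ ℝ i := by
    simp [ℓ]
  have hwℓ : ContDiff ℝ 2 fun z => w (ℓ z) := hw.comp ℓ.contDiff
  have hpd1 (i : Fin d) : pd1 (fun z => w (ℓ z)) y i =
      fderiv ℝ w (ℓ y) (EuclideanSpace.basisFun _ ℝ i) := by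
    have hderiv : HasFDerivAt (fun z => w (ℓ z)) ((fderiv ℝ w (ℓ y)).comp ℓ) y :=
      (hw.differentiable two_ne_zero (ℓ y)).hasFDerivAt.comp y ℓ.hasFDerivAt
    rw [pd1, hderiv.fderiv, ContinuousLinearMap.comp_apply, hℓ]
  have hpd2 (i j : Fin d) : pd2 (fun z => w (ℓ z)) y i j = fderiv ℝ (fderiv ℝ w) (ℓ y)
      (EuclideanSpace.basisFun _ ℝ i) (EuclideanSpace.basisFun _ ℝ j) := by
    rw [pd2_eq hwℓ, fderiv_fderiv_comp_clm hw, hℓ, hℓ]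
  have hdrift : WithLp.toLp 2 (f y) = ∑ i, f y i • EuclideanSpace.basisFun (Fin d) ℝ i :=
    ((EuclideanSpace.basisFun (Fin d) ℝ).sum_repr _).symm
  change genL f a (fun z => w (ℓ z)) y = _
  simp only [genL, hpd1, hpd2, hdrift, map_sum, map_smul, smul_eq_mul]
  rfl

/-- The matrix field `a` as a field of operators on Euclidean space. -/
def matrixOp (a : (Fin d → ℝ) → Fin d → Fin d → ℝ) (x : EuclideanSpace ℝ (Fin d)) :
    EuclideanSpace ℝ (Fin d) →L[ℝ] EuclideanSpace ℝ (Fin d) :=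
  Matrix.toEuclideanCLM (𝕜 := ℝ) (Matrix.of (a x.ofLp))

section MatrixOp

variable {a : (Fin d → ℝ) → Fin d → Fin d → ℝ}

theorem inner_matrixOp_self (x v : EuclideanSpace ℝ (Fin d)) :
    inner ℝ (matrixOp a x v) v = ∑ i, ∑ j, v i * a x.ofLp i j * v j := by
  rw [real_inner_comm, matrixOp, Matrix.inner_toEuclideanCLM]
  simp [dotProduct, Matrix.mulVec, Finset.mul_sum, mul_assoc]

theorem inner_basisFun_matrixOp (x : EuclideanSpace ℝ (Fin d)) (i j : Fin d) :
    inner ℝ (EuclideanSpace.basisFun _ ℝ i) (matrixOp a x (EuclideanSpace.basisFun _ ℝ j)) =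
      a x.ofLp i j := by
  rw [matrixOp, Matrix.inner_toEuclideanCLM]
  simp

theorem isSelfAdjoint_matrixOp (ha : ∀ y i j, a y i j = a y j i) (x : EuclideanSpace ℝ (Fin d)) :
    IsSelfAdjoint (matrixOp a x) := by
  have hsymm : IsSelfAdjoint (Matrix.of (a x.ofLp)) := by
    ext i j
    simp [Matrix.star_apply, ha _ j i]
  exact hsymm.map _

theorem matrixOp_eq_sum (x : EuclideanSpace ℝ (Fin d)) :
    matrixOp a x = ∑ p : Fin d × Fin d, a x.ofLp p.1 p.2 •
      Matrix.toEuclideanCLM (𝕜 := ℝ) (Matrix.single p.1 p.2 1) := by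
  rw [matrixOp, Matrix.matrix_eq_sum_single (Matrix.of (a x.ofLp)), Fintype.sum_prod_type]
  simp only [map_sum, ← map_smul, Matrix.smul_single, Matrix.of_apply, smul_eq_mul, mul_one]

theorem exists_norm_matrixOp_le {K : ℝ} (ha : ∀ y i j, |a y i j| ≤ K) :
    ∃ Λ, ∀ x, ‖matrixOp a x‖ ≤ Λ := by
  refine ⟨∑ p : Fin d × Fin d, K *
    ‖Matrix.toEuclideanCLM (𝕜 := ℝ) (Matrix.single p.1 p.2 (1 : ℝ))‖, fun x => ?_⟩
  rw [matrixOp_eq_sum]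
  refine norm_sum_le_of_le _ fun p _ => ?_
  rw [norm_smul]
  gcongr
  exact ha _ _ _

theorem exists_c11Bound_matrixOp {M : ℝ} (ha : ∀ i j, C11Bound M fun y => a y i j) :
    ∃ N, C11Bound N (matrixOp a) := by
  obtain ⟨N, hN⟩ := C11Bound.sum_smul (fun p : Fin d × Fin d => (ha p.1 p.2).comp_clm
    (PiLp.continuousLinearEquiv 2 ℝ fun _ : Fin d => ℝ).toContinuousLinearMap)
    fun p => Matrix.toEuclideanCLM (𝕜 := ℝ) (Matrix.single p.1 p.2 (1 : ℝ))
  refine ⟨N, ?_⟩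
  rw [funext matrixOp_eq_sum]
  exact hN

end MatrixOp

theorem diffusionGen_eq_genL {f : (Fin d → ℝ) → Fin d → ℝ}
    {a : (Fin d → ℝ) → Fin d → Fin d → ℝ} {w : EuclideanSpace ℝ (Fin d) → ℝ}
    {T : EuclideanSpace ℝ (Fin d) → EuclideanSpace ℝ (Fin d) →L[ℝ] EuclideanSpace ℝ (Fin d)}
    {l : ℝ} (hl : 0 ≤ l) (hw : ContDiff ℝ 2 w) (hT : ∀ x, IsSelfAdjoint (T x))
    (hA : ∀ x, matrixOp a x = l • 1 + T x * T x) (y : Fin d → ℝ) :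
    diffusionGen (fun x => WithLp.toLp 2 (f x.ofLp))
      (Sum.elim (fun k _ => √l • EuclideanSpace.basisFun _ ℝ k)
        (fun k x => T x (EuclideanSpace.basisFun (Fin d) ℝ k))) w (WithLp.toLp 2 y) =
      genL f a (fun z => w (WithLp.toLp 2 z)) y := by
  have hentry (i j : Fin d) : a y i j = l * (if i = j then 1 else 0) +
      inner ℝ (EuclideanSpace.basisFun _ ℝ i)
        (T (WithLp.toLp 2 y) (T (WithLp.toLp 2 y) (EuclideanSpace.basisFun _ ℝ j))) := by
    rw [← (EuclideanSpace.basisFun (Fin d) ℝ).inner_eq_ite i j, ← inner_smul_right,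
      ← inner_add_right, ← inner_basisFun_matrixOp (a := a) (WithLp.toLp 2 y), hA]
    rfl
  rw [genL_comp_toLp f a hw, diffusionGen, Fintype.sum_sum_type]
  simp only [Sum.elim_inl, Sum.elim_inr]
  rw [sum_apply_apply_eq_sum_inner_mul _ _ (hT _).isSymmetric]
  simp only [hentry, add_mul, Finset.sum_add_distrib, map_smul, smul_apply, smul_eq_mul,
    ← mul_assoc, Real.mul_self_sqrt hl, mul_ite, mul_one, mul_zero, ite_mul, zero_mul,
    Finset.sum_ite_eq, Finset.mem_univ, if_true]

theorem lyapunov_clm_le {F G : Type*} [NormedAddCommGroup F] [NormedSpace ℝ F]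
    [NormedAddCommGroup G] [NormedSpace ℝ G] (ℓ : F →L[ℝ] G) (y : F) :
    lyapunov (ℓ y) ≤ (1 + ‖ℓ‖) ^ 4 * (1 + ‖y‖) ^ 4 := by
  have hsq : 1 + ‖ℓ y‖ ^ 2 ≤ ((1 + ‖ℓ‖) * (1 + ‖y‖)) ^ 2 :=
    calc 1 + ‖ℓ y‖ ^ 2 ≤ 1 + (‖ℓ‖ * ‖y‖) ^ 2 := by gcongr; exact ℓ.le_opNorm y
      _ ≤ (1 + ‖ℓ‖ * ‖y‖) ^ 2 := by nlinarith [mul_nonneg (norm_nonneg ℓ) (norm_nonneg y)]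
      _ ≤ ((1 + ‖ℓ‖) * (1 + ‖y‖)) ^ 2 := by
        gcongr
        nlinarith [norm_nonneg ℓ, norm_nonneg y]
  calc lyapunov (ℓ y) ≤ (((1 + ‖ℓ‖) * (1 + ‖y‖)) ^ 2) ^ 2 := by rw [lyapunov]; gcongr
    _ = (1 + ‖ℓ‖) ^ 4 * (1 + ‖y‖) ^ 4 := by ring

/-- Frozen coefficients: a uniformly elliptic, bounded, symmetric diffusion matrix and a dissipative
drift, both with bounded Lipschitz first derivatives. -/
structure EllipticDissipative (f : (Fin d → ℝ) → Fin d → ℝ)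
    (a : (Fin d → ℝ) → Fin d → Fin d → ℝ) : Prop where
  symm : ∀ y i j, a y i j = a y j i
  elliptic : ∃ l > 0, ∀ y (ξ : Fin d → ℝ), l * ∑ i, ξ i ^ 2 ≤ ∑ i, ∑ j, ξ i * a y i j * ξ j
  bounded : ∃ K, ∀ y i j, |a y i j| ≤ K
  c11_diffusion : ∃ M, ∀ i j, C11Bound M fun y => a y i j
  c11_drift : ∃ M, ∀ i, C11Bound M fun y => f y i
  dissipative : ∃ β > 0, ∃ C, ∀ y, ∑ i, f y i * y i ≤ -β * ∑ i, y i ^ 2 + C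

namespace EllipticDissipative

variable {f : (Fin d → ℝ) → Fin d → ℝ} {a : (Fin d → ℝ) → Fin d → Fin d → ℝ}

theorem exists_matrixOp_factorization (h : EllipticDissipative f a) :
    ∃ l : ℝ, 0 < l ∧ ∃ N T, C11Bound N T ∧ (∀ x, ‖T x‖ ≤ N) ∧ (∀ x, IsSelfAdjoint (T x)) ∧
      ∀ x, matrixOp a x = l • 1 + T x * T x := by
  obtain ⟨l, hl, hell⟩ := h.elliptic
  obtain ⟨K, hK⟩ := h.bounded
  obtain ⟨M, hM⟩ := h.c11_diffusion
  obtain ⟨Λ, hΛ⟩ := exists_norm_matrixOp_le hK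
  obtain ⟨M', hM'⟩ := exists_c11Bound_matrixOp hM
  obtain ⟨N, T, hT⟩ := hM'.exists_sqrt_factorization (isSelfAdjoint_matrixOp h.symm) hl
    (Λ := max l Λ)
    (fun x v => by
      rw [inner_matrixOp_self, EuclideanSpace.real_norm_sq_eq]
      exact hell _ _)
    (fun x v => by
      refine (real_inner_le_norm _ _).trans ?_
      rw [sq, ← mul_assoc]
      gcongr
      exact (matrixOp a x).le_of_opNorm_le ((hΛ x).trans (le_max_right ..)) v)
    (le_max_left ..)
  exact ⟨l / 2, half_pos hl, N, T, hT⟩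

theorem exists_c11Bound_toLp (h : EllipticDissipative f a) :
    ∃ N, C11Bound N fun x : EuclideanSpace ℝ (Fin d) => WithLp.toLp 2 (f x.ofLp) := by
  obtain ⟨M, hM⟩ := h.c11_drift
  obtain ⟨N, hN⟩ := C11Bound.sum_smul (fun i => (hM i).comp_clm
    (PiLp.continuousLinearEquiv 2 ℝ fun _ : Fin d => ℝ).toContinuousLinearMap)
    (EuclideanSpace.basisFun (Fin d) ℝ)
  refine ⟨N, ?_⟩
  convert hN using 2 with x
  exact ((EuclideanSpace.basisFun (Fin d) ℝ).sum_repr (WithLp.toLp 2 (f x.ofLp))).symm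

theorem exists_approx_poisson [Nonempty (Fin d)] (h : EllipticDissipative f a)
    {φ : (Fin d → ℝ) → ℝ} (hφ : ContDiff ℝ 2 φ) (hsupp : HasCompactSupport φ) {ε : ℝ}
    (hε : 0 < ε) :
    ∃ u c, CbTwo u ∧ ∀ y, |genL f a u y + φ y - c| ≤ ε * (1 + ‖y‖) ^ 4 := by
  obtain ⟨β, hβ, C, hdiss⟩ := h.dissipative
  obtain ⟨Nb, hb⟩ := h.exists_c11Bound_toLp
  obtain ⟨l, hl, N, T, hT, hTN, hTself, hTA⟩ := h.exists_matrixOp_factorization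
  obtain ⟨Mφ, hMφ⟩ := exists_c11Bound_of_hasCompactSupport hφ hsupp
  obtain ⟨Nφ, hNφ⟩ := hφ.continuous.bounded_above_of_compact_support hsupp
  set ofLpL := (PiLp.continuousLinearEquiv 2 ℝ fun _ : Fin d => ℝ).toContinuousLinearMap
  set toLpL := (PiLp.continuousLinearEquiv 2 ℝ fun _ : Fin d => ℝ).symm.toContinuousLinearMap
  have he (k : Fin d) : ‖EuclideanSpace.basisFun (Fin d) ℝ k‖ = 1 := by simp
  obtain ⟨M', B', c, w, hw, hwM, hwB, hwε⟩ := _root_.exists_approx_poisson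
    (EuclideanSpace.basisFun (Fin d) ℝ) (Real.sqrt_pos.2 hl) (hb.mono (le_max_left Nb N))
    (σ := fun k x => T x (EuclideanSpace.basisFun (Fin d) ℝ k)) (B := N)
    (fun k => (hT.clm_apply (he k).le).mono (le_max_right ..))
    (fun k x => by
      simpa [he] using (T x).le_of_opNorm_le (hTN x) (EuclideanSpace.basisFun (Fin d) ℝ k)) hβ
    (fun x => by
      rw [EuclideanSpace.real_norm_sq_eq]
      exact hdiss _) (hMφ.comp_clm ofLpL) (fun x => hNφ (ofLpL x))
    (by positivity : 0 < ε / (1 + ‖toLpL‖) ^ 4)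
  refine ⟨fun y => w (toLpL y), c, (hwM.comp_clm toLpL).cbTwo (hw.comp toLpL.contDiff)
    (fun y => hwB _), fun y => ?_⟩
  calc |genL f a (fun y => w (toLpL y)) y + φ y - c|
      ≤ ε / (1 + ‖toLpL‖) ^ 4 * lyapunov (toLpL y) := by
        change |genL f a (fun z => w (WithLp.toLp 2 z)) y + φ y - c| ≤ _
        rw [← diffusionGen_eq_genL hl.le hw hTself hTA y]
        exact hwε (toLpL y)
    _ ≤ ε / (1 + ‖toLpL‖) ^ 4 * ((1 + ‖toLpL‖) ^ 4 * (1 + ‖y‖) ^ 4) := by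
        gcongr
        exact lyapunov_clm_le toLpL y
    _ = ε * (1 + ‖y‖) ^ 4 := by field_simp

end EllipticDissipative

end Coordinates

section PolynomialGrowth

/-- A family of functions `g i` growing at most polynomially, uniformly in `i`; a single function
is regarded as a family indexed by `Unit`. -/
def PolyGrowth {ι Y F : Type*} [Norm Y] [Norm F] (g : ι → Y → F) : Prop :=
  ∃ K : ℝ, 0 ≤ K ∧ ∃ m : ℕ, ∀ i y, ‖g i y‖ ≤ K * (1 + ‖y‖) ^ m

namespace PolyGrowth

variable {ι κ Y F G : Type*} [SeminormedAddCommGroup Y] [NormedAddCommGroup F]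
  [NormedAddCommGroup G]

theorem of_norm_le {g : ι → Y → F} {K : ℝ} {m : ℕ} (hg : ∀ i y, ‖g i y‖ ≤ K * (1 + ‖y‖ ^ m)) :
    PolyGrowth g := by
  refine ⟨|K| * 2, by positivity, m, fun i y => (hg i y).trans ?_⟩
  have hone : 1 ≤ (1 + ‖y‖) ^ m := one_le_pow₀ (le_add_of_nonneg_right (norm_nonneg y))
  have hpow : ‖y‖ ^ m ≤ (1 + ‖y‖) ^ m := by gcongr; exact le_add_of_nonneg_left zero_le_one
  calc K * (1 + ‖y‖ ^ m) ≤ |K| * (2 * (1 + ‖y‖) ^ m) := by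
        gcongr
        · exact le_abs_self K
        · linarith
    _ = |K| * 2 * (1 + ‖y‖) ^ m := (mul_assoc ..).symm

theorem mono {g : ι → Y → F} {h : κ → Y → G} (hg : PolyGrowth g)
    (hle : ∀ k, ∃ i, ∀ y, ‖h k y‖ ≤ ‖g i y‖) : PolyGrowth h := by
  obtain ⟨K, hK, m, hgm⟩ := hg
  refine ⟨K, hK, m, fun k y => ?_⟩
  obtain ⟨i, hi⟩ := hle k
  exact (hi y).trans (hgm i y)

theorem comp_index {g : ι → Y → F} (hg : PolyGrowth g) (s : κ → ι) :
    PolyGrowth fun k => g (s k) :=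
  hg.mono fun k => ⟨s k, fun _ => le_rfl⟩

theorem const (c : F) : PolyGrowth fun (_ : ι) (_ : Y) => c :=
  ⟨‖c‖, norm_nonneg c, 0, fun _ _ => by simp⟩

theorem add {g h : ι → Y → F} (hg : PolyGrowth g) (hh : PolyGrowth h) :
    PolyGrowth fun i y => g i y + h i y := by
  obtain ⟨K, hK, m, hgm⟩ := hg
  obtain ⟨L, hL, n, hhn⟩ := hh
  refine ⟨K + L, add_nonneg hK hL, max m n, fun i y => ?_⟩
  have hy : 1 ≤ 1 + ‖y‖ := le_add_of_nonneg_right (norm_nonneg y)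
  calc ‖g i y + h i y‖ ≤ K * (1 + ‖y‖) ^ m + L * (1 + ‖y‖) ^ n :=
        norm_add_le_of_le (hgm i y) (hhn i y)
    _ ≤ K * (1 + ‖y‖) ^ max m n + L * (1 + ‖y‖) ^ max m n := by
        gcongr
        exacts [le_max_left .., le_max_right ..]
    _ = (K + L) * (1 + ‖y‖) ^ max m n := (add_mul ..).symm

theorem sub {g h : ι → Y → F} (hg : PolyGrowth g) (hh : PolyGrowth h) :
    PolyGrowth fun i y => g i y - h i y := by
  simpa only [sub_eq_add_neg] using
    hg.add (hh.mono (h := fun i y => -h i y) fun i => ⟨i, fun _ => (norm_neg _).le⟩)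

theorem smul [NormedSpace ℝ F] {g : ι → Y → ℝ} {h : ι → Y → F} (hg : PolyGrowth g)
    (hh : PolyGrowth h) : PolyGrowth fun i y => g i y • h i y := by
  obtain ⟨K, hK, m, hgm⟩ := hg
  obtain ⟨L, hL, n, hhn⟩ := hh
  refine ⟨K * L, mul_nonneg hK hL, m + n, fun i y => ?_⟩
  calc ‖g i y • h i y‖ ≤ K * (1 + ‖y‖) ^ m * (L * (1 + ‖y‖) ^ n) := by
        rw [norm_smul]
        gcongr
        exacts [hgm i y, hhn i y]
    _ = K * L * (1 + ‖y‖) ^ (m + n) := by ring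

theorem sum (s : Finset κ) {g : κ → ι → Y → F} (hg : ∀ k, PolyGrowth (g k)) :
    PolyGrowth fun i y => ∑ k ∈ s, g k i y := by
  classical
  induction s using Finset.induction_on with
  | empty => simpa using const (0 : F)
  | insert k s hk ih => simpa only [Finset.sum_insert hk] using (hg k).add ih

theorem of_lipschitzWith {K : NNReal} {g : Y → F} (hg : LipschitzWith K g) :
    PolyGrowth fun _ : ι => g := by
  refine ⟨K + ‖g 0‖, by positivity, 1, fun _ y => ?_⟩
  have hsub : ‖g y‖ ≤ K * ‖y‖ + ‖g 0‖ := by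
    simpa using norm_le_norm_add_norm_sub' (g y) (g 0) |>.trans
      ((add_comm _ _).trans_le (add_le_add_left (hg.norm_sub_le y 0) _))
  nlinarith [mul_nonneg (norm_nonneg (g 0)) (norm_nonneg y), K.coe_nonneg]

-- Outside a large ball one more power of `1 + ‖y‖` beats the growth bound; on the ball, which is
-- compact, continuity in the index is uniform.
theorem eventually_norm_sub_le [TopologicalSpace ι] [ProperSpace Y] {g : ι → Y → F}
    (hg : PolyGrowth g) (hcont : Continuous fun p : ι × Y => g p.1 p.2) (i₀ : ι) :
    ∃ m : ℕ, ∀ ε > 0, ∀ᶠ i in nhds i₀, ∀ y, ‖g i y - g i₀ y‖ ≤ ε * (1 + ‖y‖) ^ m := by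
  obtain ⟨K, _, m, hgm⟩ := hg
  refine ⟨m + 1, fun ε hε => ?_⟩
  have hball : ∀ᶠ i in nhds i₀, ∀ y ∈ Metric.closedBall (0 : Y) (2 * K / ε),
      ‖g i y - g i₀ y‖ < ε := by
    refine (isCompact_closedBall 0 _).eventually_forall_of_forall_eventually fun y _ => ?_
    have hdiff : Continuous fun p : ι × Y => ‖g p.1 p.2 - g i₀ p.2‖ := by fun_prop
    exact hdiff.continuousAt.eventually_lt continuousAt_const (by simpa using hε)
  filter_upwards [hball] with i hi y
  have hy : 1 ≤ 1 + ‖y‖ := le_add_of_nonneg_right (norm_nonneg y)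
  by_cases hyR : y ∈ Metric.closedBall (0 : Y) (2 * K / ε)
  · exact (hi y hyR).le.trans (le_mul_of_one_le_right hε.le (one_le_pow₀ hy))
  · have hKy : 2 * K ≤ ε * (1 + ‖y‖) := by
      rw [mem_closedBall_zero_iff, not_le, div_lt_iff₀ hε] at hyR
      linarith
    calc ‖g i y - g i₀ y‖ ≤ K * (1 + ‖y‖) ^ m + K * (1 + ‖y‖) ^ m :=
          norm_sub_le_of_le (hgm i y) (hgm i₀ y)
      _ = 2 * K * (1 + ‖y‖) ^ m := by ring
      _ ≤ ε * (1 + ‖y‖) * (1 + ‖y‖) ^ m := by gcongr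
      _ = ε * (1 + ‖y‖) ^ (m + 1) := by ring

end PolyGrowth

/-- A family of measures whose absolute moments of every order are finite, uniformly in the
index. -/
def HasBoundedMoments {ι Y : Type*} [Norm Y] [MeasurableSpace Y] (P : ι → Measure Y) : Prop :=
  ∀ q : ℕ, ∃ K : ℝ, ∀ i, Integrable (fun y => ‖y‖ ^ q) (P i) ∧ ∫ y, ‖y‖ ^ q ∂P i ≤ K

namespace HasBoundedMoments

variable {ι Y F : Type*} [NormedAddCommGroup Y] [MeasurableSpace Y] [BorelSpace Y]
  [NormedAddCommGroup F] {P : ι → Measure Y} [∀ i, IsProbabilityMeasure (P i)]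

theorem exists_integral_one_add_norm_pow_le (hP : HasBoundedMoments P) (q : ℕ) :
    ∃ K : ℝ, 0 ≤ K ∧ ∀ i, Integrable (fun y => (1 + ‖y‖) ^ q) (P i) ∧
      ∫ y, (1 + ‖y‖) ^ q ∂P i ≤ K := by
  obtain ⟨K, hK⟩ := hP q
  refine ⟨2 ^ (q - 1) * (1 + |K|), by positivity, fun i => ?_⟩
  have hle (y : Y) : (1 + ‖y‖) ^ q ≤ 2 ^ (q - 1) * (1 + ‖y‖ ^ q) := by
    simpa using add_pow_le zero_le_one (norm_nonneg y) q
  have hbound : Integrable (fun y => 2 ^ (q - 1) * (1 + ‖y‖ ^ q)) (P i) :=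
    ((integrable_const _).add (hK i).1).const_mul _
  have hint : Integrable (fun y => (1 + ‖y‖) ^ q) (P i) :=
    hbound.mono' ((measurable_norm.const_add 1).pow_const q).aestronglyMeasurable
      (.of_forall fun y => by
        rw [Real.norm_of_nonneg (by positivity)]
        exact hle y)
  refine ⟨hint, (integral_mono hint hbound hle).trans ?_⟩
  rw [integral_const_mul, integral_add (integrable_const _) (hK i).1, integral_const,
    probReal_univ, one_smul]
  gcongr
  exact (hK i).2.trans (le_abs_self K)

theorem integrable_of_polyGrowth [SecondCountableTopologyEither Y F] (hP : HasBoundedMoments P)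
    (i : ι) {g : Y → F} (hg : Continuous g) (hgrowth : PolyGrowth fun _ : Unit => g) :
    Integrable g (P i) := by
  obtain ⟨K, -, m, hgm⟩ := hgrowth
  obtain ⟨L, -, hL⟩ := hP.exists_integral_one_add_norm_pow_le m
  exact ((hL i).1.const_mul K).mono' hg.aestronglyMeasurable (.of_forall (hgm ()))

theorem exists_norm_integral_le [NormedSpace ℝ F] (hP : HasBoundedMoments P) (m : ℕ) :
    ∃ L : ℝ, 0 < L ∧ ∀ i (g : Y → F) (ε : ℝ), 0 ≤ ε → (∀ y, ‖g y‖ ≤ ε * (1 + ‖y‖) ^ m) →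
      ‖∫ y, g y ∂P i‖ ≤ ε * L := by
  obtain ⟨L, hL, hLm⟩ := hP.exists_integral_one_add_norm_pow_le m
  refine ⟨L + 1, by positivity, fun i g ε hε hg => ?_⟩
  calc ‖∫ y, g y ∂P i‖ ≤ ∫ y, ε * (1 + ‖y‖) ^ m ∂P i :=
        norm_integral_le_of_norm_le ((hLm i).1.const_mul ε) (.of_forall hg)
    _ = ε * ∫ y, (1 + ‖y‖) ^ m ∂P i := integral_const_mul ..
    _ ≤ ε * (L + 1) := by
        gcongr
        exact (hLm i).2.trans (le_add_of_nonneg_right zero_le_one)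

end HasBoundedMoments

end PolynomialGrowth

section Cutoff

theorem exists_smooth_cutoff (E : Type*) [NormedAddCommGroup E] [NormedSpace ℝ E]
    [FiniteDimensional ℝ E] (k : ℕ) :
    ∃ (χ : ℕ → E → ℝ) (B : ℝ), 0 ≤ B ∧ ∀ n, ContDiff ℝ k (χ n) ∧ HasCompactSupport (χ n) ∧
      (∀ y, χ n y ∈ Set.Icc 0 1) ∧ (∀ y, ‖y‖ ≤ n → χ n y = 1) ∧
      ∀ l ≤ k, ∀ y, ‖iteratedFDeriv ℝ l (χ n) y‖ ≤ B := by
  let b : ContDiffBump (0 : E) := ⟨1, 2, one_pos, one_lt_two⟩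
  obtain ⟨B, hB, hbB⟩ := exists_norm_iteratedFDeriv_le_of_hasCompactSupport b.hasCompactSupport
    (b.contDiff (n := k))
  have hscale (n : ℕ) : ‖((n : ℝ) + 1)⁻¹‖ ≤ 1 := by
    rw [Real.norm_of_nonneg (by positivity)]
    exact inv_le_one_of_one_le₀ (le_add_of_nonneg_left n.cast_nonneg)
  refine ⟨fun n y => b (((n : ℝ) + 1)⁻¹ • y), B, hB, fun n =>
    ⟨b.contDiff.comp (contDiff_const_smul _), b.hasCompactSupport.comp_homeomorph
      (Homeomorph.smulOfNeZero ((n : ℝ) + 1)⁻¹ (by positivity)), fun y => ⟨b.nonneg, b.le_one⟩,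
      fun y hy => b.one_of_mem_closedBall ?_, fun l hl y => ?_⟩⟩
  · rw [mem_closedBall_zero_iff, norm_smul, Real.norm_of_nonneg (by positivity),
      inv_mul_le_iff₀ (by positivity)]
    change ‖y‖ ≤ ((n : ℝ) + 1) * 1
    linarith
  · rw [iteratedFDeriv_comp_const_smul _ (b.contDiff (n := l)), norm_smul, norm_pow]
    exact (mul_le_of_le_one_left (norm_nonneg _) (pow_le_one₀ (norm_nonneg _) (hscale n))).trans
      (hbB l hl _)

theorem exists_contDiff_hasCompactSupport_approx {E : Type*} [NormedAddCommGroup E]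
    [NormedSpace ℝ E] [FiniteDimensional ℝ E] {ψ : E → ℝ} (hψ : Continuous ψ)
    (hgrowth : PolyGrowth fun _ : Unit => ψ) :
    ∃ m : ℕ, ∀ ε > 0, ∃ φ : E → ℝ, ContDiff ℝ 2 φ ∧ HasCompactSupport φ ∧
      ∀ y, |φ y - ψ y| ≤ ε * (1 + ‖y‖) ^ m := by
  obtain ⟨K, _, m, hψm⟩ := hgrowth
  obtain ⟨χ, _, -, hχ⟩ := exists_smooth_cutoff E 0
  refine ⟨m + 1, fun ε hε => ?_⟩
  obtain ⟨n, hn⟩ := exists_nat_gt (2 * K / ε)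
  obtain ⟨hχc, hχsupp, hχ01, hχ1, -⟩ := hχ n
  have htail (y : E) : |χ n y * ψ y - ψ y| ≤ ε / 2 * (1 + ‖y‖) ^ (m + 1) := by
    rcases le_or_gt ‖y‖ n with hy | hy
    · rw [hχ1 y hy, one_mul, sub_self, abs_zero]
      positivity
    · rw [div_lt_iff₀ hε] at hn
      have hKy : K ≤ ε / 2 * (1 + ‖y‖) := by nlinarith
      calc |χ n y * ψ y - ψ y| = (1 - χ n y) * |ψ y| := by
            rw [← abs_of_nonneg (sub_nonneg.2 (hχ01 y).2), ← abs_mul, ← abs_neg]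
            congr 1
            ring
        _ ≤ 1 * (K * (1 + ‖y‖) ^ m) := by
            gcongr
            · linarith [(hχ01 y).1]
            · exact hψm () y
        _ ≤ ε / 2 * (1 + ‖y‖) * (1 + ‖y‖) ^ m := by
            rw [one_mul]
            gcongr
        _ = ε / 2 * (1 + ‖y‖) ^ (m + 1) := by ring
  obtain ⟨φ, hφ, hφε, hφsupp⟩ := (hχc.continuous.mul hψ).exists_contDiff_approx 2
    (ε := fun _ => ε / 2) continuous_const fun _ => half_pos hε
  refine ⟨φ, hφ, hχsupp.mul_right.mono hφsupp, fun y => ?_⟩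
  have hone : 1 ≤ (1 + ‖y‖) ^ (m + 1) := one_le_pow₀ (le_add_of_nonneg_right (norm_nonneg y))
  calc |φ y - ψ y| ≤ |φ y - χ n y * ψ y| + |χ n y * ψ y - ψ y| := abs_sub_le _ _ _
    _ ≤ ε / 2 * (1 + ‖y‖) ^ (m + 1) + ε / 2 * (1 + ‖y‖) ^ (m + 1) :=
        add_le_add ((hφε y).le.trans (le_mul_of_one_le_right (by positivity) hone)) (htail y)
    _ = ε * (1 + ‖y‖) ^ (m + 1) := by ring

end Cutoff

section InvarianceExtension

/-- The `C²` functions that grow at most polynomially together with their first two derivatives: the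
class of test functions to which invariance extends. -/
structure PolyC2 {E F : Type*} [NormedAddCommGroup E] [NormedSpace ℝ E] [NormedAddCommGroup F]
    [NormedSpace ℝ F] (u : E → F) : Prop where
  contDiff : ContDiff ℝ 2 u
  polyGrowth : ∀ k ≤ 2, PolyGrowth fun _ : Unit => iteratedFDeriv ℝ k u

theorem PolyC2.of_norm_le {E F : Type*} [NormedAddCommGroup E] [NormedSpace ℝ E]
    [NormedAddCommGroup F] [NormedSpace ℝ F] {u : E → F} (hu : ContDiff ℝ 2 u) {K : ℝ} {m : ℕ}
    (hle : ∀ y, ‖u y‖ ≤ K * (1 + ‖y‖ ^ m) ∧ ‖iteratedFDeriv ℝ 1 u y‖ ≤ K * (1 + ‖y‖ ^ m) ∧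
      ‖iteratedFDeriv ℝ 2 u y‖ ≤ K * (1 + ‖y‖ ^ m)) : PolyC2 u := by
  refine ⟨hu, fun k hk => .of_norm_le (K := K) (m := m) fun _ y => ?_⟩
  interval_cases k
  · simpa using (hle y).1
  · exact (hle y).2.1
  · exact (hle y).2.2

variable {d : ℕ} {φ u : (Fin d → ℝ) → ℝ} {f : (Fin d → ℝ) → Fin d → ℝ}
  {a : (Fin d → ℝ) → Fin d → Fin d → ℝ}

theorem abs_pd1_le (φ : (Fin d → ℝ) → ℝ) (y : Fin d → ℝ) (i : Fin d) :
    |pd1 φ y i| ≤ ‖iteratedFDeriv ℝ 1 φ y‖ := by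
  rw [norm_iteratedFDeriv_one]
  simpa [pd1, Pi.norm_single] using (fderiv ℝ φ y).le_opNorm (Pi.single i 1)

theorem abs_pd2_le (hφ : ContDiff ℝ 2 φ) (y : Fin d → ℝ) (i j : Fin d) :
    |pd2 φ y i j| ≤ ‖iteratedFDeriv ℝ 2 φ y‖ := by
  rw [pd2_eq hφ, ← norm_iteratedFDeriv_fderiv, norm_iteratedFDeriv_one]
  simpa [Pi.norm_single] using
    (fderiv ℝ (fderiv ℝ φ) y).le_opNorm₂ (Pi.single i 1) (Pi.single j 1)

theorem continuous_pd1 (hφ : ContDiff ℝ 2 φ) (i : Fin d) : Continuous fun y => pd1 φ y i :=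
  (hφ.continuous_fderiv two_ne_zero).clm_apply continuous_const

theorem continuous_pd2 (hφ : ContDiff ℝ 2 φ) (i j : Fin d) : Continuous fun y => pd2 φ y i j := by
  simp only [pd2_eq hφ]
  exact (((hφ.fderiv_right (m := 1) le_rfl).continuous_fderiv one_ne_zero).clm_apply
    continuous_const).clm_apply continuous_const

theorem genL_congr {y : Fin d → ℝ} (h : φ =ᶠ[nhds y] u) : genL f a φ y = genL f a u y := by
  have hpd1 (i : Fin d) : pd1 φ y i = pd1 u y i := by rw [pd1, pd1, h.fderiv_eq]
  have hpd2 (i j : Fin d) : pd2 φ y i j = pd2 u y i j := by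
    have hpartial : (fun z => fderiv ℝ φ z (Pi.single j 1)) =ᶠ[nhds y]
        fun z => fderiv ℝ u z (Pi.single j 1) :=
      (h.fderiv (𝕜 := ℝ)).mono fun z hz => congrArg (· (Pi.single j 1)) hz
    rw [pd2, pd2, hpartial.fderiv_eq]
  simp only [genL, hpd1, hpd2]

namespace PolyC2

theorem polyGrowth_pd1 (hu : PolyC2 u) (i : Fin d) :
    PolyGrowth fun (_ : Unit) y => pd1 u y i :=
  (hu.polyGrowth 1 one_le_two).mono fun _ => ⟨(), fun y => abs_pd1_le u y i⟩

theorem polyGrowth_pd2 (hu : PolyC2 u) (i j : Fin d) :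
    PolyGrowth fun (_ : Unit) y => pd2 u y i j :=
  (hu.polyGrowth 2 le_rfl).mono fun _ => ⟨(), fun y => abs_pd2_le hu.contDiff y i j⟩

theorem exists_truncation (hu : PolyC2 u) :
    ∃ w : ℕ → (Fin d → ℝ) → ℝ, (∀ n, CbTwo (w n)) ∧
      (∀ k ≤ 2, PolyGrowth fun n => iteratedFDeriv ℝ k (w n)) ∧
      ∀ y, ∀ᶠ n in Filter.atTop, w n =ᶠ[nhds y] u := by
  obtain ⟨χ, B, _, hχ⟩ := exists_smooth_cutoff (Fin d → ℝ) 2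
  have hw (n : ℕ) : ContDiff ℝ 2 fun y => χ n y * u y := (hχ n).1.mul hu.contDiff
  refine ⟨fun n y => χ n y * u y, fun n => ⟨hw n, ?_⟩, fun k hk => ?_, fun y => ?_⟩
  · obtain ⟨C, -, hC⟩ := exists_norm_iteratedFDeriv_le_of_hasCompactSupport
      ((hχ n).2.1.mul_right (f' := u)) (hw n)
    exact ⟨C, fun y => ⟨by simpa using hC 0 zero_le_two y, hC 1 one_le_two y, hC 2 le_rfl y⟩⟩
  · have hleibniz : PolyGrowth fun (_ : ℕ) y => ∑ l ∈ Finset.range (k + 1),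
        ((k.choose l : ℝ) * B) • ‖iteratedFDeriv ℝ (k - l) u y‖ :=
      PolyGrowth.sum _ fun l => (PolyGrowth.const ((k.choose l : ℝ) * B)).smul <|
        (hu.polyGrowth (k - l) (by omega)).mono fun _ => ⟨(), fun y => (norm_norm _).le⟩
    refine hleibniz.mono fun n => ⟨n, fun y => ?_⟩
    refine (norm_iteratedFDeriv_mul_le (hχ n).1 hu.contDiff y (by exact_mod_cast hk)).trans
      (le_trans ?_ (le_abs_self _))
    refine Finset.sum_le_sum fun l hl => ?_
    rw [smul_eq_mul]
    gcongr
    exact (hχ n).2.2.2.2 l ((Finset.mem_range_succ_iff.1 hl).trans hk) y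
  · obtain ⟨N, hN⟩ := exists_nat_gt ‖y‖
    filter_upwards [Filter.eventually_ge_atTop N] with n hn
    filter_upwards [continuous_norm.continuousAt.eventually_lt continuousAt_const hN] with z hz
    rw [(hχ n).2.2.2.1 z (hz.le.trans (Nat.cast_le.2 hn)), one_mul]

end PolyC2

theorem CbTwo.polyC2 (hu : CbTwo u) : PolyC2 u := by
  obtain ⟨hu2, K, hK⟩ := hu
  have hle (y : Fin d → ℝ) : K ≤ K * (1 + ‖y‖ ^ 0) := by
    linarith [(abs_nonneg _).trans (hK y).1, pow_zero ‖y‖]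
  exact .of_norm_le hu2 fun y =>
    ⟨(hK y).1.trans (hle y), (hK y).2.1.trans (hle y), (hK y).2.2.trans (hle y)⟩

namespace EllipticDissipative

theorem continuous_genL (h : EllipticDissipative f a) (hφ : ContDiff ℝ 2 φ) :
    Continuous (genL f a φ) := by
  obtain ⟨M, hM⟩ := h.c11_drift
  obtain ⟨N, hN⟩ := h.c11_diffusion
  exact (continuous_finsetSum _ fun i _ =>
    (hM i).differentiable.continuous.mul (continuous_pd1 hφ i)).add <|
      continuous_finsetSum _ fun i _ => continuous_finsetSum _ fun j _ =>
        (hN i j).differentiable.continuous.mul (continuous_pd2 hφ i j)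

theorem polyGrowth_genL (h : EllipticDissipative f a) {ι : Type*} {w : ι → (Fin d → ℝ) → ℝ}
    (hw : ∀ n, ContDiff ℝ 2 (w n))
    (hgrowth : ∀ k ≤ 2, PolyGrowth fun n => iteratedFDeriv ℝ k (w n)) :
    PolyGrowth fun n => genL f a (w n) := by
  obtain ⟨M, hM⟩ := h.c11_drift
  obtain ⟨K, hK⟩ := h.bounded
  have hf (i : Fin d) : PolyGrowth fun (_ : ι) y => f y i :=
    .of_lipschitzWith (.of_dist_le' fun x y => by
      simpa only [dist_eq_norm] using (hM i).norm_sub_le x y)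
  have ha (i j : Fin d) : PolyGrowth fun (_ : ι) y => a y i j :=
    (PolyGrowth.const K).mono fun n => ⟨n, fun y => (hK y i j).trans (le_abs_self K)⟩
  refine .add (.sum _ fun i => (hf i).smul ?_) (.sum _ fun i => .sum _ fun j => (ha i j).smul ?_)
  · exact (hgrowth 1 one_le_two).mono fun n => ⟨n, fun y => abs_pd1_le _ y i⟩
  · exact (hgrowth 2 le_rfl).mono fun n => ⟨n, fun y => abs_pd2_le (hw n) y i j⟩

theorem integrable_genL (h : EllipticDissipative f a) {π : Measure (Fin d → ℝ)}
    [IsProbabilityMeasure π] (hπ : HasBoundedMoments fun _ : Unit => π) (hu : PolyC2 u) :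
    Integrable (genL f a u) π :=
  hπ.integrable_of_polyGrowth () (h.continuous_genL hu.contDiff)
    (h.polyGrowth_genL (fun _ => hu.contDiff) hu.polyGrowth)

theorem integral_genL_eq_zero (h : EllipticDissipative f a) {π : Measure (Fin d → ℝ)}
    (hinv : IsInvariantMeasure f a π) (hπ : HasBoundedMoments fun _ : Unit => π)
    (hu : PolyC2 u) : ∫ y, genL f a u y ∂π = 0 := by
  have := hinv.1
  obtain ⟨w, hw, hgrowth, hwu⟩ := hu.exists_truncation
  obtain ⟨K, -, m, hK⟩ := h.polyGrowth_genL (fun n => (hw n).1) hgrowth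
  obtain ⟨_, -, hL⟩ := hπ.exists_integral_one_add_norm_pow_le m
  have hlim : Filter.Tendsto (fun n => ∫ y, genL f a (w n) y ∂π) Filter.atTop
      (nhds (∫ y, genL f a u y ∂π)) :=
    tendsto_integral_of_dominated_convergence (fun y => K * (1 + ‖y‖) ^ m)
      (fun n => (h.continuous_genL (hw n).1).aestronglyMeasurable) ((hL ()).1.const_mul K)
      (fun n => .of_forall (hK n))
      (.of_forall fun y =>
        tendsto_const_nhds.congr' ((hwu y).mono fun n hn => (genL_congr hn).symm))
  simp only [hinv.2 _ (hw _)] at hlim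
  exact tendsto_nhds_unique hlim tendsto_const_nhds

theorem exists_approx_poisson_of_polyGrowth [Nonempty (Fin d)] (h : EllipticDissipative f a)
    {ψ : (Fin d → ℝ) → ℝ} (hψ : Continuous ψ) (hgrowth : PolyGrowth fun _ : Unit => ψ) :
    ∃ m : ℕ, ∀ ε > 0, ∃ u c, CbTwo u ∧ ∀ y, |genL f a u y + ψ y - c| ≤ ε * (1 + ‖y‖) ^ m := by
  obtain ⟨m, hm⟩ := exists_contDiff_hasCompactSupport_approx hψ hgrowth
  refine ⟨max m 4, fun ε hε => ?_⟩
  obtain ⟨φ, hφ, hφsupp, hφψ⟩ := hm (ε / 2) (half_pos hε)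
  obtain ⟨u, c, hu, huφ⟩ := h.exists_approx_poisson hφ hφsupp (half_pos hε)
  refine ⟨u, c, hu, fun y => ?_⟩
  have hy : 1 ≤ 1 + ‖y‖ := le_add_of_nonneg_right (norm_nonneg y)
  calc |genL f a u y + ψ y - c| = |(genL f a u y + φ y - c) - (φ y - ψ y)| := by
        congr 1
        ring
    _ ≤ ε / 2 * (1 + ‖y‖) ^ 4 + ε / 2 * (1 + ‖y‖) ^ m :=
        (abs_sub _ _).trans (add_le_add (huφ y) (hφψ y))
    _ ≤ ε / 2 * (1 + ‖y‖) ^ max m 4 + ε / 2 * (1 + ‖y‖) ^ max m 4 := by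
        gcongr
        exacts [le_max_right .., le_max_left ..]
    _ = ε * (1 + ‖y‖) ^ max m 4 := by ring

end EllipticDissipative

end InvarianceExtension

section ParameterDependence

/-- Functions `g x y` that are differentiable in the parameter `x`, with a derivative that is
jointly continuous and grows at most polynomially in `y`, uniformly in `x`. -/
structure ParamC1 {E Y F : Type*} [NormedAddCommGroup E] [NormedSpace ℝ E] [NormedAddCommGroup Y]
    [NormedAddCommGroup F] [NormedSpace ℝ F] (g : E → Y → F) : Prop where
  differentiable : ∀ y, Differentiable ℝ fun x => g x y
  continuous_fderiv : Continuous fun p : E × Y => fderiv ℝ (fun x => g x p.2) p.1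
  polyGrowth_fderiv : PolyGrowth fun x y => fderiv ℝ (fun x' => g x' y) x

namespace ParamC1

variable {E Y F κ : Type*} [NormedAddCommGroup E] [NormedSpace ℝ E] [NormedAddCommGroup Y]
  [NormedAddCommGroup F] [NormedSpace ℝ F] {g h : E → Y → F}

theorem add (hg : ParamC1 g) (hh : ParamC1 h) : ParamC1 fun x y => g x y + h x y := by
  have hfderiv (x : E) (y : Y) : fderiv ℝ (fun x' => g x' y + h x' y) x =
      fderiv ℝ (fun x' => g x' y) x + fderiv ℝ (fun x' => h x' y) x :=
    fderiv_fun_add (hg.differentiable y x) (hh.differentiable y x)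
  refine ⟨fun y => (hg.differentiable y).add (hh.differentiable y), ?_, ?_⟩ <;>
    simp only [hfderiv]
  exacts [hg.continuous_fderiv.add hh.continuous_fderiv,
    hg.polyGrowth_fderiv.add hh.polyGrowth_fderiv]

theorem sub (hg : ParamC1 g) (hh : ParamC1 h) : ParamC1 fun x y => g x y - h x y := by
  have hfderiv (x : E) (y : Y) : fderiv ℝ (fun x' => g x' y - h x' y) x =
      fderiv ℝ (fun x' => g x' y) x - fderiv ℝ (fun x' => h x' y) x :=
    fderiv_fun_sub (hg.differentiable y x) (hh.differentiable y x)
  refine ⟨fun y => (hg.differentiable y).sub (hh.differentiable y), ?_, ?_⟩ <;>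
    simp only [hfderiv]
  exacts [hg.continuous_fderiv.sub hh.continuous_fderiv,
    hg.polyGrowth_fderiv.sub hh.polyGrowth_fderiv]

theorem sum (s : Finset κ) {g : κ → E → Y → F} (hg : ∀ k, ParamC1 (g k)) :
    ParamC1 fun x y => ∑ k ∈ s, g k x y := by
  classical
  induction s using Finset.induction_on with
  | empty =>
    simp only [Finset.sum_empty]
    exact ⟨fun _ => differentiable_const _, by simpa using continuous_const,
      by simpa using PolyGrowth.const _⟩
  | insert k s hk ih => simpa only [Finset.sum_insert hk] using (hg k).add ih

theorem mul_right {g : E → Y → ℝ} (hg : ParamC1 g) {w : Y → ℝ} (hw : Continuous w)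
    (hgrowth : PolyGrowth fun _ : Unit => w) : ParamC1 fun x y => g x y * w y := by
  have hfderiv (x : E) (y : Y) :
      fderiv ℝ (fun x' => g x' y * w y) x = w y • fderiv ℝ (fun x' => g x' y) x :=
    fderiv_mul_const (hg.differentiable y x) (w y)
  refine ⟨fun y => (hg.differentiable y).mul_const (w y), ?_, ?_⟩ <;> simp only [hfderiv]
  exacts [(hw.comp continuous_snd).smul hg.continuous_fderiv,
    (hgrowth.comp_index fun _ => ()).smul hg.polyGrowth_fderiv]

theorem exists_norm_sub_le (hg : ParamC1 g) : ∃ K : ℝ, 0 ≤ K ∧ ∃ m : ℕ, ∀ x x' y,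
    ‖g x y - g x' y‖ ≤ K * ‖x - x'‖ * (1 + ‖y‖) ^ m := by
  obtain ⟨K, hK, m, hm⟩ := hg.polyGrowth_fderiv
  refine ⟨K, hK, m, fun x x' y => ?_⟩
  rw [mul_right_comm]
  exact convex_univ.norm_image_sub_le_of_norm_fderiv_le
    (fun z _ => hg.differentiable y z) (fun z _ => hm z y) (Set.mem_univ x') (Set.mem_univ x)

theorem polyGrowth_sub (hg : ParamC1 g) (x x' : E) :
    PolyGrowth fun (_ : Unit) y => g x y - g x' y := by
  obtain ⟨K, hK, m, hm⟩ := hg.exists_norm_sub_le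
  exact ⟨K * ‖x - x'‖, by positivity, m, fun _ => hm x x'⟩

theorem continuous_fderiv_right (hg : ParamC1 g) (x : E) :
    Continuous fun y => fderiv ℝ (fun x' => g x' y) x :=
  hg.continuous_fderiv.comp (Continuous.prodMk_right x)

theorem polyGrowth_fderiv_right (hg : ParamC1 g) (x : E) :
    PolyGrowth fun (_ : Unit) y => fderiv ℝ (fun x' => g x' y) x :=
  hg.polyGrowth_fderiv.comp_index fun _ => x

theorem exists_eventually_norm_sub_fderiv_le [ProperSpace Y] (hg : ParamC1 g) (x₀ : E) :
    ∃ m : ℕ, ∀ ε > 0, ∀ᶠ x in nhds x₀, ∀ y,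
      ‖g x y - g x₀ y - fderiv ℝ (fun x' => g x' y) x₀ (x - x₀)‖ ≤
        ε * ‖x - x₀‖ * (1 + ‖y‖) ^ m := by
  obtain ⟨m, hm⟩ := hg.polyGrowth_fderiv.eventually_norm_sub_le hg.continuous_fderiv x₀
  refine ⟨m, fun ε hε => ?_⟩
  obtain ⟨r, hr, hball⟩ := Metric.eventually_nhds_iff_ball.1 (hm ε hε)
  filter_upwards [Metric.ball_mem_nhds x₀ hr] with x hx y
  rw [mul_right_comm]
  exact (convex_ball x₀ r).norm_image_sub_le_of_norm_fderiv_le'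
    (fun z _ => hg.differentiable y z) (fun z hz => hball z hz y) (Metric.mem_ball_self hr) hx

end ParamC1

namespace HasBoundedMoments

variable {E Y F : Type*} [NormedAddCommGroup E] [NormedSpace ℝ E] [NormedAddCommGroup Y]
  [ProperSpace Y] [MeasurableSpace Y] [BorelSpace Y] [NormedAddCommGroup F] [NormedSpace ℝ F]
  {P : E → Measure Y} [∀ x, IsProbabilityMeasure (P x)]

theorem hasFDerivAt_integral_sub (hP : HasBoundedMoments P) {g : E → Y → F} (hg : ParamC1 g)
    (hgc : ∀ x, Continuous (g x)) {x₀ : E}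
    (hcont : ContinuousAt (fun x => ∫ y, fderiv ℝ (fun x' => g x' y) x₀ ∂P x) x₀) :
    HasFDerivAt (fun x => ∫ y, (g x y - g x₀ y) ∂P x)
      (∫ y, fderiv ℝ (fun x' => g x' y) x₀ ∂P x₀) x₀ := by
  set D : Y → E →L[ℝ] F := fun y => fderiv ℝ (fun x' => g x' y) x₀
  obtain ⟨m, hm⟩ := hg.exists_eventually_norm_sub_fderiv_le x₀
  obtain ⟨L, hL, hPL⟩ := hP.exists_norm_integral_le (F := F) m
  rw [hasFDerivAt_iff_isLittleO, Asymptotics.isLittleO_iff]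
  intro c hc
  filter_upwards [hm (c / 2 / L) (by positivity),
    Metric.continuousAt_iff'.1 hcont (c / 2) (half_pos hc)]
    with x htaylor hDx
  have hD : Integrable D (P x) :=
    hP.integrable_of_polyGrowth x (hg.continuous_fderiv_right x₀) (hg.polyGrowth_fderiv_right x₀)
  have hsub : Integrable (fun y => g x y - g x₀ y) (P x) :=
    hP.integrable_of_polyGrowth x ((hgc x).sub (hgc x₀)) (hg.polyGrowth_sub x x₀)
  have hremainder : ‖∫ y, (g x y - g x₀ y) ∂P x - (∫ y, D y ∂P x) (x - x₀)‖ ≤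
      c / 2 * ‖x - x₀‖ := by
    rw [ContinuousLinearMap.integral_apply hD, ← integral_sub hsub (hD.apply_continuousLinearMap _)]
    calc _ ≤ c / 2 / L * ‖x - x₀‖ * L := hPL x _ _ (by positivity) htaylor
      _ = c / 2 * ‖x - x₀‖ := by field_simp
  have hweak : ‖(∫ y, D y ∂P x - ∫ y, D y ∂P x₀) (x - x₀)‖ ≤ c / 2 * ‖x - x₀‖ :=
    ContinuousLinearMap.le_of_opNorm_le _ (by simpa only [dist_eq_norm] using hDx.le) _
  calc _ = ‖(∫ y, (g x y - g x₀ y) ∂P x - (∫ y, D y ∂P x) (x - x₀)) +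
        (∫ y, D y ∂P x - ∫ y, D y ∂P x₀) (x - x₀)‖ := by simp
    _ ≤ c / 2 * ‖x - x₀‖ + c / 2 * ‖x - x₀‖ := norm_add_le_of_le hremainder hweak
    _ = c * ‖x - x₀‖ := by ring

end HasBoundedMoments

end ParameterDependence

section FrozenFamilies

/-- A family of frozen generators whose coefficients are `ParamC1` in the parameter `x`, together
with invariant measures `π x` whose moments are bounded uniformly in `x`. -/
structure FrozenFamily {d : ℕ} {E : Type*} [NormedAddCommGroup E] [NormedSpace ℝ E]
    (f : E → (Fin d → ℝ) → Fin d → ℝ) (a : E → (Fin d → ℝ) → Fin d → Fin d → ℝ)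
    (π : E → Measure (Fin d → ℝ)) : Prop where
  ellipticDissipative : ∀ x, EllipticDissipative (f x) (a x)
  invariant : ∀ x, IsInvariantMeasure (f x) (a x) (π x)
  moments : HasBoundedMoments π
  drift : ∀ i, ParamC1 fun x y => f x y i
  diffusion : ∀ i j, ParamC1 fun x y => a x y i j

namespace FrozenFamily

variable {d : ℕ} {E : Type*} [NormedAddCommGroup E] [NormedSpace ℝ E]
  {f : E → (Fin d → ℝ) → Fin d → ℝ} {a : E → (Fin d → ℝ) → Fin d → Fin d → ℝ}
  {π : E → Measure (Fin d → ℝ)} {u : (Fin d → ℝ) → ℝ}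

theorem isProbabilityMeasure (hF : FrozenFamily f a π) (x : E) : IsProbabilityMeasure (π x) :=
  (hF.invariant x).1

theorem moments_single (hF : FrozenFamily f a π) (x : E) :
    HasBoundedMoments fun _ : Unit => π x := fun q =>
  (hF.moments q).imp fun _ hK _ => hK x

theorem paramC1_genL (hF : FrozenFamily f a π) (hu : PolyC2 u) :
    ParamC1 fun x y => genL (f x) (a x) u y :=
  (ParamC1.sum _ fun i =>
    (hF.drift i).mul_right (continuous_pd1 hu.contDiff i) (hu.polyGrowth_pd1 i)).add <|
      .sum _ fun i => .sum _ fun j =>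
        (hF.diffusion i j).mul_right (continuous_pd2 hu.contDiff i j) (hu.polyGrowth_pd2 i j)

theorem fderiv_genL (hF : FrozenFamily f a π) (u : (Fin d → ℝ) → ℝ) (x : E) (y : Fin d → ℝ) :
    fderiv ℝ (fun x' => genL (f x') (a x') u y) x =
      ∑ i, pd1 u y i • fderiv ℝ (fun x' => f x' y i) x +
        ∑ i, ∑ j, pd2 u y i j • fderiv ℝ (fun x' => a x' y i j) x :=
  ((HasFDerivAt.fun_sum fun i _ =>
    ((hF.drift i).differentiable y x).hasFDerivAt.mul_const (pd1 u y i)).add <|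
      .fun_sum fun i _ => .fun_sum fun j _ =>
        ((hF.diffusion i j).differentiable y x).hasFDerivAt.mul_const (pd2 u y i j)).fderiv

theorem integrable_genL (hF : FrozenFamily f a π) (hu : PolyC2 u) (x x' : E) :
    Integrable (genL (f x) (a x) u) (π x') :=
  have := hF.isProbabilityMeasure x'
  (hF.ellipticDissipative x).integrable_genL (hF.moments_single x') hu

theorem integral_genL_eq_zero (hF : FrozenFamily f a π) (hu : PolyC2 u) (x : E) :
    ∫ y, genL (f x) (a x) u y ∂π x = 0 :=
  (hF.ellipticDissipative x).integral_genL_eq_zero (hF.invariant x) (hF.moments_single x) hu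

theorem exists_abs_integral_genL_le (hF : FrozenFamily f a π) (hu : PolyC2 u) (x₀ : E) :
    ∃ K, ∀ x, |∫ y, genL (f x₀) (a x₀) u y ∂π x| ≤ K * ‖x - x₀‖ := by
  have := hF.isProbabilityMeasure
  obtain ⟨K, hK, m, hm⟩ := (hF.paramC1_genL hu).exists_norm_sub_le
  obtain ⟨L, -, hL⟩ := hF.moments.exists_norm_integral_le (F := ℝ) m
  refine ⟨K * L, fun x => ?_⟩
  calc |∫ y, genL (f x₀) (a x₀) u y ∂π x|
      = ‖∫ y, (genL (f x₀) (a x₀) u y - genL (f x) (a x) u y) ∂π x‖ := by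
        rw [integral_sub (hF.integrable_genL hu x₀ x) (hF.integrable_genL hu x x),
          hF.integral_genL_eq_zero hu x, sub_zero, Real.norm_eq_abs]
    _ ≤ K * ‖x - x₀‖ * L := hL x _ _ (by positivity) fun y => by
        rw [norm_sub_rev x x₀]
        exact hm x₀ x y
    _ = K * L * ‖x - x₀‖ := mul_right_comm ..

variable [Nonempty (Fin d)]

-- An approximate solution of `L_{x₀} u = c - ψ` pins every average of `ψ` near the constant `c`.
theorem exists_abs_integral_sub_le (hF : FrozenFamily f a π) {ψ : (Fin d → ℝ) → ℝ}
    (hψ : Continuous ψ) (hgrowth : PolyGrowth fun _ : Unit => ψ) (x₀ : E) {ε : ℝ} (hε : 0 < ε) :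
    ∃ c K, ∀ x, |∫ y, ψ y ∂π x - c| ≤ ε + K * ‖x - x₀‖ := by
  have := hF.isProbabilityMeasure
  obtain ⟨m, hm⟩ := (hF.ellipticDissipative x₀).exists_approx_poisson_of_polyGrowth hψ hgrowth
  obtain ⟨L, hL, hPL⟩ := hF.moments.exists_norm_integral_le (F := ℝ) m
  obtain ⟨u, c, hu, huψ⟩ := hm (ε / L) (by positivity)
  obtain ⟨K, hK⟩ := hF.exists_abs_integral_genL_le hu.polyC2 x₀
  refine ⟨c, K, fun x => ?_⟩
  have hψint : Integrable ψ (π x) := hF.moments.integrable_of_polyGrowth x hψ hgrowth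
  have hLint := hF.integrable_genL hu.polyC2 x₀ x
  have hdefect : |∫ y, (genL (f x₀) (a x₀) u y + ψ y - c) ∂π x| ≤ ε := by
    simpa [hL.ne'] using hPL x _ _ (by positivity) huψ
  rw [integral_sub (f := fun y => genL (f x₀) (a x₀) u y + ψ y) (hLint.add hψint)
    (integrable_const c), integral_add hLint hψint, integral_const, probReal_univ, one_smul]
    at hdefect
  calc |∫ y, ψ y ∂π x - c| = |(∫ y, genL (f x₀) (a x₀) u y ∂π x + ∫ y, ψ y ∂π x - c) -
        ∫ y, genL (f x₀) (a x₀) u y ∂π x| := by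
        congr 1
        ring
    _ ≤ ε + K * ‖x - x₀‖ := (abs_sub _ _).trans (add_le_add hdefect (hK x))

theorem continuous_integral (hF : FrozenFamily f a π) {ψ : (Fin d → ℝ) → ℝ} (hψ : Continuous ψ)
    (hgrowth : PolyGrowth fun _ : Unit => ψ) : Continuous fun x => ∫ y, ψ y ∂π x := by
  refine continuous_iff_continuousAt.2 fun x₀ => Metric.continuousAt_iff'.2 fun ε hε => ?_
  obtain ⟨c, K, hK⟩ := hF.exists_abs_integral_sub_le hψ hgrowth x₀ (ε := ε / 3) (by positivity)
  have hsmall : ∀ᶠ x in nhds x₀, K * ‖x - x₀‖ < ε / 3 :=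
    (by fun_prop : Continuous fun x => K * ‖x - x₀‖).continuousAt.eventually_lt
      continuousAt_const (by simpa using hε)
  filter_upwards [hsmall] with x hx
  have hx₀ : |c - ∫ y, ψ y ∂π x₀| ≤ ε / 3 := by simpa [abs_sub_comm] using hK x₀
  calc dist (∫ y, ψ y ∂π x) (∫ y, ψ y ∂π x₀)
      ≤ |∫ y, ψ y ∂π x - c| + |c - ∫ y, ψ y ∂π x₀| := abs_sub_le ..
    _ < ε := by linarith [hK x]

theorem continuous_integral_clm [FiniteDimensional ℝ E] (hF : FrozenFamily f a π)
    {T : (Fin d → ℝ) → E →L[ℝ] ℝ} (hT : Continuous T) (hgrowth : PolyGrowth fun _ : Unit => T) :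
    Continuous fun x => ∫ y, T y ∂π x := by
  have := hF.isProbabilityMeasure
  refine continuous_clm_apply.2 fun z => ?_
  simp only [ContinuousLinearMap.integral_apply (hF.moments.integrable_of_polyGrowth _ hT hgrowth)]
  refine hF.continuous_integral (hT.clm_apply continuous_const) ?_
  exact ((PolyGrowth.const ‖z‖).smul hgrowth).mono fun _ => ⟨(), fun y => by
    rw [norm_smul, norm_norm, mul_comm]
    exact (T y).le_opNorm z⟩

end FrozenFamily

variable {d : ℕ} [Nonempty (Fin d)] {E : Type*} [NormedAddCommGroup E] [NormedSpace ℝ E]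
  [FiniteDimensional ℝ E] {f : E → (Fin d → ℝ) → Fin d → ℝ}
  {a : E → (Fin d → ℝ) → Fin d → Fin d → ℝ} {π : E → Measure (Fin d → ℝ)}

theorem derivative_transfer_formula_general (hF : FrozenFamily f a π) {h : E → (Fin d → ℝ) → ℝ}
    (hh : ParamC1 h) (hhc : ∀ x, Continuous (h x)) {x₀ : E} {v : (Fin d → ℝ) → ℝ} (hv : PolyC2 v)
    (hpoisson : ∀ y, genL (f x₀) (a x₀) v y = h x₀ y - ∫ z, h x₀ z ∂π x₀) :
    let D (y : Fin d → ℝ) : E →L[ℝ] ℝ :=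
      fderiv ℝ (fun x => h x y) x₀ - ∑ i, pd1 v y i • fderiv ℝ (fun x => f x y i) x₀ -
        ∑ i, ∑ j, pd2 v y i j • fderiv ℝ (fun x => a x y i j) x₀
    Integrable D (π x₀) ∧ HasFDerivAt (fun x => ∫ y, h x y ∂π x) (∫ y, D y ∂π x₀) x₀ := by
  intro D
  have := hF.isProbabilityMeasure
  have hL := hF.paramC1_genL hv
  let g (x : E) (y : Fin d → ℝ) : ℝ := h x y - genL (f x) (a x) v y
  have hg : ParamC1 g := hh.sub hL
  have hgc (x : E) : Continuous (g x) :=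
    (hhc x).sub ((hF.ellipticDissipative x).continuous_genL hv.contDiff)
  have hg_const (y : Fin d → ℝ) : g x₀ y = ∫ z, h x₀ z ∂π x₀ := by simp [g, hpoisson y]
  have hg_average (x : E) :
      ∫ y, h x y ∂π x = ∫ z, h x₀ z ∂π x₀ + ∫ y, (g x y - g x₀ y) ∂π x := by
    have hgint : Integrable (fun y => g x y - g x₀ y) (π x) :=
      hF.moments.integrable_of_polyGrowth x ((hgc x).sub (hgc x₀)) (hg.polyGrowth_sub x x₀)
    have hhg (y : Fin d → ℝ) :
        h x y = ∫ z, h x₀ z ∂π x₀ + (g x y - g x₀ y) + genL (f x) (a x) v y := by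
      rw [hg_const y]
      ring
    have hsum : Integrable (fun y => ∫ z, h x₀ z ∂π x₀ + (g x y - g x₀ y)) (π x) :=
      (integrable_const _).add hgint
    rw [integral_congr_ae (.of_forall hhg), integral_add hsum (hF.integrable_genL hv x x),
      integral_add (integrable_const _) hgint, hF.integral_genL_eq_zero hv x, integral_const,
      probReal_univ, one_smul, add_zero]
  have hg_fderiv : D = fun y => fderiv ℝ (fun x => g x y) x₀ := by
    funext y
    rw [fderiv_fun_sub (hh.differentiable y x₀) (hL.differentiable y x₀), hF.fderiv_genL v,
      ← sub_sub]
  have hDc := hg.continuous_fderiv_right x₀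
  have hDgrowth := hg.polyGrowth_fderiv_right x₀
  rw [hg_fderiv, funext hg_average]
  exact ⟨hF.moments.integrable_of_polyGrowth x₀ hDc hDgrowth,
    (hF.moments.hasFDerivAt_integral_sub hg hgc
      (hF.continuous_integral_clm hDc hDgrowth).continuousAt).const_add _⟩

end FrozenFamilies

section CoordinateHypotheses

theorem PolyY.polyGrowth {d : ℕ} {M : Type*} {g : (Fin d → ℝ) → (Fin d → ℝ) → M → ℝ}
    (hg : PolyY g) (μ : M) : PolyGrowth fun x y => g x y μ := by
  obtain ⟨K, m, hm⟩ := hg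
  exact .of_norm_le fun x y => hm x y μ

theorem ParamC1.of_partials {ι Y : Type*} [Fintype ι] [DecidableEq ι] [NormedAddCommGroup Y]
    {g : (ι → ℝ) → Y → ℝ} (hdiff : ∀ y, Differentiable ℝ fun x => g x y)
    (hcont : ∀ j, Continuous fun p : (ι → ℝ) × Y =>
      fderiv ℝ (fun x => g x p.2) p.1 (Pi.single j 1))
    (hgrowth : ∀ j, PolyGrowth fun x y => fderiv ℝ (fun x' => g x' y) x (Pi.single j 1)) :
    ParamC1 g := by
  have hcoord (T : (ι → ℝ) →L[ℝ] ℝ) :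
      T = ∑ j, T (Pi.single j 1) • (ContinuousLinearMap.proj j : (ι → ℝ) →L[ℝ] ℝ) := by
    ext z
    conv_lhs => rw [← Finset.univ_sum_single z, map_sum]
    refine (Finset.sum_congr rfl fun j _ => ?_).trans (sum_apply ..).symm
    rw [smul_apply, ContinuousLinearMap.proj_apply, smul_eq_mul, mul_comm, ← smul_eq_mul (z j),
      ← map_smul, ← Pi.single_smul, smul_eq_mul, mul_one]
  refine ⟨hdiff, ?_, ?_⟩
  · rw [funext fun p : (ι → ℝ) × Y => hcoord (fderiv ℝ (fun x => g x p.2) p.1)]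
    exact continuous_finsetSum _ fun j _ => (hcont j).smul continuous_const
  · rw [funext₂ fun x y => hcoord (fderiv ℝ (fun x' => g x' y) x)]
    exact .sum _ fun j => (hgrowth j).smul
      (.const (ContinuousLinearMap.proj j : (ι → ℝ) →L[ℝ] ℝ))

theorem EllipticDissipative.of_assumptions {d : ℕ} {I : Type*} {f : I → (Fin d → ℝ) → Fin d → ℝ}
    {a : I → (Fin d → ℝ) → Fin d → Fin d → ℝ} (hA1 : AssumptionA1 a) (hA2 : AssumptionA2 f)
    (p : I) : EllipticDissipative (f p) (a p) := by
  obtain ⟨hsymm, ⟨l, _, hl, -, hell⟩, ⟨K, hK⟩, ha, ⟨M, hM⟩, -⟩ := hA1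
  obtain ⟨⟨β, C, hβ, -, hdiss⟩, -, hf, ⟨N, hN⟩, -⟩ := hA2
  refine ⟨hsymm p, ⟨l / 2, half_pos hl, fun y ξ => ?_⟩, ⟨K, hK p⟩, ⟨M, fun i j => ?_⟩,
    ⟨N, fun i => ?_⟩, ⟨β, hβ, C, hdiss p⟩⟩
  · linarith [(hell p y ξ).1]
  · exact .of_iteratedFDeriv (ha p i j) (fun y => (hM p y i j).1) fun y => (hM p y i j).2
  · exact .of_iteratedFDeriv (hf p i) (fun y => (hN p y i).1) fun y => (hN p y i).2

end CoordinateHypotheses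

/-- (first-order derivative transfer formula: differentiability in the
frozen parameter `x` of the average `h̄(x,μ) = ∫ h(x,y,μ) π(dy;x,μ)` and the formula
for its partial derivatives in terms of the Poisson solution `v`). -/
theorem derivative_transfer_formula
    (d : ℕ) (hd : 0 < d)
    (f : (Fin d → ℝ) → (Fin d → ℝ) → ProbMeas2 d → Fin d → ℝ)
    (a : (Fin d → ℝ) → (Fin d → ℝ) → ProbMeas2 d → Fin d → Fin d → ℝ)
    (π : (Fin d → ℝ) → ProbMeas2 d → Measure (Fin d → ℝ))
    (hA1 : AssumptionA1 (fun p : (Fin d → ℝ) × ProbMeas2 d => fun y => a p.1 y p.2))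
    (hA2 : AssumptionA2 (fun p : (Fin d → ℝ) × ProbMeas2 d => fun y => f p.1 y p.2))
    (hπ : ∀ x μ, IsInvariantMeasure (fun y => f x y μ) (fun y => a x y μ) (π x μ))
    (hπmom : ∀ q : ℕ, ∃ K : ℝ, ∀ x μ, Integrable (fun y => ‖y‖ ^ q) (π x μ) ∧
        (∫ y, ‖y‖ ^ q ∂(π x μ)) ≤ K)
    (h : (Fin d → ℝ) → (Fin d → ℝ) → ProbMeas2 d → ℝ)
    (hhx : ∀ y μ, ContDiff ℝ 1 fun x => h x y μ)
    (hfx : ∀ y μ (i : Fin d), ContDiff ℝ 1 fun x => f x y μ i)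
    (hax : ∀ y μ (i j : Fin d), ContDiff ℝ 1 fun x => a x y μ i j)
    (hc1 : ∀ μ, Continuous fun p : (Fin d → ℝ) × (Fin d → ℝ) => h p.1 p.2 μ)
    (hc2 : ∀ μ (j : Fin d), Continuous fun p : (Fin d → ℝ) × (Fin d → ℝ) =>
        fderiv ℝ (fun x => h x p.2 μ) p.1 (Pi.single j 1))
    (hc3 : ∀ μ (i j : Fin d), Continuous fun p : (Fin d → ℝ) × (Fin d → ℝ) =>
        fderiv ℝ (fun x => f x p.2 μ i) p.1 (Pi.single j 1))
    (hc4 : ∀ μ (i i' j : Fin d), Continuous fun p : (Fin d → ℝ) × (Fin d → ℝ) =>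
        fderiv ℝ (fun x => a x p.2 μ i i') p.1 (Pi.single j 1))
    (hp1 : PolyY h)
    (hp2 : ∀ j : Fin d, PolyY fun x y μ => fderiv ℝ (fun x' => h x' y μ) x (Pi.single j 1))
    (hp3 : ∀ i j : Fin d, PolyY fun x y μ => fderiv ℝ (fun x' => f x' y μ i) x (Pi.single j 1))
    (hp4 : ∀ i i' j : Fin d,
        PolyY fun x y μ => fderiv ℝ (fun x' => a x' y μ i i') x (Pi.single j 1))
    (hl1 : MixedHolder h)
    (hl2 : ∀ j : Fin d,
        MixedHolder fun x y μ => fderiv ℝ (fun x' => h x' y μ) x (Pi.single j 1))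
    (hl3 : ∀ i j : Fin d,
        MixedHolder fun x y μ => fderiv ℝ (fun x' => f x' y μ i) x (Pi.single j 1))
    (hl4 : ∀ i i' j : Fin d,
        MixedHolder fun x y μ => fderiv ℝ (fun x' => a x' y μ i i') x (Pi.single j 1))
    (v : (Fin d → ℝ) → (Fin d → ℝ) → ProbMeas2 d → ℝ)
    (hvC2 : ∀ x μ, ContDiff ℝ 2 fun y => v x y μ)
    (hvpoly : ∃ K : ℝ, ∃ q : ℕ, ∀ x y μ,
        |v x y μ| ≤ K * (1 + ‖y‖ ^ q) ∧
        ‖iteratedFDeriv ℝ 1 (fun z => v x z μ) y‖ ≤ K * (1 + ‖y‖ ^ q) ∧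
        ‖iteratedFDeriv ℝ 2 (fun z => v x z μ) y‖ ≤ K * (1 + ‖y‖ ^ q))
    (hvpde : ∀ x y μ, genL (fun z => f x z μ) (fun z => a x z μ) (fun z => v x z μ) y =
        h x y μ - ∫ z, h x z μ ∂(π x μ)) :
    ∀ μ : ProbMeas2 d,
      (Differentiable ℝ fun x => ∫ y, h x y μ ∂(π x μ)) ∧
      ∀ (x : Fin d → ℝ) (j : Fin d),
        fderiv ℝ (fun x' => ∫ y, h x' y μ ∂(π x' μ)) x (Pi.single j 1) =
          ∫ y, (fderiv ℝ (fun x' => h x' y μ) x (Pi.single j 1) -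
            (∑ i, fderiv ℝ (fun x' => f x' y μ i) x (Pi.single j 1) *
              pd1 (fun z => v x z μ) y i) -
            ∑ i, ∑ i', fderiv ℝ (fun x' => a x' y μ i i') x (Pi.single j 1) *
              pd2 (fun z => v x z μ) y i i') ∂(π x μ) := by
  intro μ
  have : Nonempty (Fin d) := ⟨⟨0, hd⟩⟩
  have hF : FrozenFamily (fun x y => f x y μ) (fun x y => a x y μ) fun x => π x μ :=
    { ellipticDissipative := fun x => .of_assumptions hA1 hA2 (x, μ)
      invariant := fun x => hπ x μ
      moments := fun q => (hπmom q).imp fun K hK x => hK x μ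
      drift := fun i => .of_partials (fun y => (hfx y μ i).differentiable one_ne_zero) (hc3 μ i)
        fun j => (hp3 i j).polyGrowth μ
      diffusion := fun i i' =>
        .of_partials (fun y => (hax y μ i i').differentiable one_ne_zero) (hc4 μ i i')
          fun j => (hp4 i i' j).polyGrowth μ }
  have hh : ParamC1 fun x y => h x y μ :=
    .of_partials (fun y => (hhx y μ).differentiable one_ne_zero) (hc2 μ)
      fun j => (hp2 j).polyGrowth μ
  have hv (x : Fin d → ℝ) : PolyC2 fun y => v x y μ :=
    hvpoly.elim fun K ⟨q, hK⟩ => .of_norm_le (hvC2 x μ) fun y => hK x y μ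
  have hderiv (x : Fin d → ℝ) := derivative_transfer_formula_general hF hh
    (fun x => (hc1 μ).comp (Continuous.prodMk_right x)) (hv x) fun y => hvpde x y μ
  refine ⟨fun x => (hderiv x).2.differentiableAt, fun x j => ?_⟩
  rw [(hderiv x).2.fderiv, ContinuousLinearMap.integral_apply (hderiv x).1]
  simp [mul_comm]

end
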